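/- For the cardinality two-dimensional geometric knapsack problem with guillotine cuts (2GGK-C) on an N×N knapsack, let OPT be an optimal solution and let OPT_{L&C} be a maximum-cardinality subset of the input items that admits a guillotine-separable L&C packing. Then there is a universal constant C such that for every ε ∈ (0,1), |OPT_{L&C}| ≥ (3/4 − C·ε)·|OPT|. -/

import Mathlib

/-- An axis-aligned rectangle, given by the coordinates of its corners. -/
structure Rect where
  x1 : ℝ
  x2 : ℝ
  y1 : ℝ
  y2 : ℝ

namespace Rect

def width (r : Rect) : ℝ := r.x2 - r.x1

def height (r : Rect) : ℝ := r.y2 - r.y1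

def area (r : Rect) : ℝ := r.width * r.height

/-- The open interior of an axis-aligned rectangle. -/
def toSet (r : Rect) : Set (ℝ × ℝ) :=
  {p : ℝ × ℝ | r.x1 < p.1 ∧ p.1 < r.x2 ∧ r.y1 < p.2 ∧ p.2 < r.y2}

/-- `r.SubRect s` : the rectangle `r` is contained in the rectangle `s`. -/
def SubRect (r s : Rect) : Prop :=
  s.x1 ≤ r.x1 ∧ r.x2 ≤ s.x2 ∧ s.y1 ≤ r.y1 ∧ r.y2 ≤ s.y2

noncomputable instance (r s : Rect) : Decidable (r.SubRect s) :=
  inferInstanceAs (Decidable (s.x1 ≤ r.x1 ∧ r.x2 ≤ s.x2 ∧ s.y1 ≤ r.y1 ∧ r.y2 ≤ s.y2))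

end Rect

/-- The square knapsack `[0,N] × [0,N]`. -/
def knapsack (N : ℝ) : Rect := ⟨0, N, 0, N⟩

/-- A placement of the items of `S` (with prescribed widths and heights) as
pairwise non-overlapping axis-aligned rectangles inside the piece `P`. -/
structure IsPacking {ι : Type*} (wd ht : ι → ℝ) (S : Finset ι)
    (place : ι → Rect) (P : Rect) : Prop where
  hw : ∀ i ∈ S, (place i).width = wd i
  hh : ∀ i ∈ S, (place i).height = ht i
  hin : ∀ i ∈ S, (place i).SubRect P
  hdisj : ∀ i ∈ S, ∀ j ∈ S, i ≠ j → Disjoint (place i).toSet (place j).toSet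

/-- Guillotine separability of the placed items of `S` inside the piece `P`:
either the piece contains at most one item, or some axis-parallel end-to-end cut
splits the piece into two rectangular subpieces, crossing the interior of no item,
and the items of each subpiece are recursively guillotine separable. -/
inductive GuillotineSep {ι : Type*} (place : ι → Rect) : Rect → Finset ι → Prop
  | base (P : Rect) (S : Finset ι) (hS : S.card ≤ 1) : GuillotineSep place P S
  | vcut (P : Rect) (S : Finset ι) (c : ℝ) (h1 : P.x1 < c) (h2 : c < P.x2)
      (hcross : ∀ i ∈ S, (place i).x2 ≤ c ∨ c ≤ (place i).x1)
      (hL : GuillotineSep place ⟨P.x1, c, P.y1, P.y2⟩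
              (S.filter fun i => (place i).x2 ≤ c))
      (hR : GuillotineSep place ⟨c, P.x2, P.y1, P.y2⟩
              (S.filter fun i => ¬ (place i).x2 ≤ c)) :
      GuillotineSep place P S
  | hcut (P : Rect) (S : Finset ι) (c : ℝ) (h1 : P.y1 < c) (h2 : c < P.y2)
      (hcross : ∀ i ∈ S, (place i).y2 ≤ c ∨ c ≤ (place i).y1)
      (hB : GuillotineSep place ⟨P.x1, P.x2, P.y1, c⟩
              (S.filter fun i => (place i).y2 ≤ c))
      (hT : GuillotineSep place ⟨P.x1, P.x2, c, P.y2⟩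
              (S.filter fun i => ¬ (place i).y2 ≤ c)) :
      GuillotineSep place P S

/-- A guillotine-separable packing of the items of `S` into the piece `P`. -/
def GuillotinePacking {ι : Type*} (wd ht : ι → ℝ) (S : Finset ι)
    (place : ι → Rect) (P : Rect) : Prop :=
  IsPacking wd ht S place P ∧ GuillotineSep place P S

/-- Labels of containers. -/
inductive CLabel
  | large
  | horizontal
  | vertical
  | area

/-- The constraints of a container packing: a large container contains a single item,
in a horizontal container the items are stacked one above another, in a vertical
container the items are placed side by side, and every item placed in an area
container has width (resp. height) at most an `ε`-fraction of the container's
width (resp. height). -/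
def ContainerLabelOK {ι : Type*} (T : Finset ι) (place : ι → Rect)
    (k : ℕ) (cont : ℕ → Rect) (lab : ℕ → CLabel) (asg : ι → ℕ) (ε : ℝ) : Prop :=
  (∀ j < k, lab j = CLabel.large →
      ∀ i ∈ T, ∀ i' ∈ T, asg i = j → asg i' = j → i = i') ∧
  (∀ j < k, lab j = CLabel.horizontal →
      ∀ i ∈ T, ∀ i' ∈ T, asg i = j → asg i' = j → i ≠ i' →
        (place i).y2 ≤ (place i').y1 ∨ (place i').y2 ≤ (place i).y1) ∧
  (∀ j < k, lab j = CLabel.vertical →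
      ∀ i ∈ T, ∀ i' ∈ T, asg i = j → asg i' = j → i ≠ i' →
        (place i).x2 ≤ (place i').x1 ∨ (place i').x2 ≤ (place i).x1) ∧
  (∀ j < k, lab j = CLabel.area → ∀ i ∈ T, asg i = j →
      (place i).width ≤ ε * (cont j).width ∧ (place i).height ≤ ε * (cont j).height)

/-- An `L&C` packing of the items of `S` into the `N × N` knapsack: a guillotine
separable packing in which the items of a subset `SL` are long and are placed inside
a boundary-`L` (wide items in the horizontal arm `[0,N] × [0,N1]`, tall items in the
vertical arm `[0,N2] × [0,N]`), while all remaining items are placed inside at most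
`k` pairwise non-overlapping containers contained in the region not occupied by the
boundary-`L`. -/
def IsLCPacking {ι : Type*} [DecidableEq ι] (wd ht : ι → ℝ) (N ε : ℝ)
    (S : Finset ι) (place : ι → Rect) (k : ℕ) : Prop :=
  ∃ (N1 N2 : ℝ) (SL : Finset ι) (cont : ℕ → Rect) (lab : ℕ → CLabel) (asg : ι → ℕ),
    0 ≤ N1 ∧ N1 ≤ N ∧ 0 ≤ N2 ∧ N2 ≤ N ∧ SL ⊆ S ∧
    IsPacking wd ht S place (knapsack N) ∧
    GuillotineSep place (knapsack N) S ∧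
    (∀ i ∈ SL, N / 2 < wd i ∨ N / 2 < ht i) ∧
    (∀ i ∈ SL, N / 2 < wd i → (place i).SubRect ⟨0, N, 0, N1⟩) ∧
    (∀ i ∈ SL, ¬ N / 2 < wd i → (place i).SubRect ⟨0, N2, 0, N⟩) ∧
    (∀ j < k, (cont j).SubRect (knapsack N)) ∧
    (∀ j < k, Disjoint (cont j).toSet
        (Rect.toSet ⟨0, N, 0, N1⟩ ∪ Rect.toSet ⟨0, N2, 0, N⟩)) ∧
    (∀ j < k, ∀ j' < k, j ≠ j' → Disjoint (cont j).toSet (cont j').toSet) ∧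
    (∀ i ∈ S \ SL, asg i < k ∧ (place i).SubRect (cont (asg i))) ∧
    ContainerLabelOK (S \ SL) place k cont lab asg ε

namespace GK
section
variable {ι : Type} [DecidableEq ι]

set_option linter.unusedSectionVars false
set_option linter.unusedVariables false

lemma card_le_one_cases {S : Finset ι} (c : S.card ≤ 1) : S = ∅ ∨ ∃ x, S = {x} := by
  rcases Nat.le_one_iff_eq_zero_or_eq_one.1 c with h | h
  · exact Or.inl (Finset.card_eq_zero.1 h)
  · exact Or.inr (Finset.card_eq_one.1 h)

/-- Position-free guillotine trees with prescribed leaves and at most `k` leaves. -/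
inductive Tr (L : ℝ → ℝ → Finset ι → Prop) : ℝ → ℝ → ℕ → Finset ι → Prop
  | leaf {w h : ℝ} {k : ℕ} {S : Finset ι} (hk : 1 ≤ k) (hL : L w h S) : Tr L w h k S
  | vc {w h : ℝ} {k : ℕ} {S : Finset ι} (w1 w2 : ℝ) (k1 k2 : ℕ) (S1 S2 : Finset ι)
      (hd : Disjoint S1 S2) (hS : S = S1 ∪ S2) (hw : w1 + w2 ≤ w) (hk : k1 + k2 ≤ k)
      (t1 : Tr L w1 h k1 S1) (t2 : Tr L w2 h k2 S2) : Tr L w h k S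
  | hc {w h : ℝ} {k : ℕ} {S : Finset ι} (h1 h2 : ℝ) (k1 k2 : ℕ) (S1 S2 : Finset ι)
      (hd : Disjoint S1 S2) (hS : S = S1 ∪ S2) (hh : h1 + h2 ≤ h) (hk : k1 + k2 ≤ k)
      (t1 : Tr L w h1 k1 S1) (t2 : Tr L w h2 k2 S2) : Tr L w h k S

/-- Single-item leaf. -/
def IL (wd ht : ι → ℝ) (w h : ℝ) (S : Finset ι) : Prop :=
  0 ≤ w ∧ 0 ≤ h ∧ S.card ≤ 1 ∧ ∀ i ∈ S, wd i ≤ w ∧ ht i ≤ h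

/-- Stack leaf. -/
def KL (wd ht : ι → ℝ) (w h : ℝ) (S : Finset ι) : Prop :=
  0 ≤ w ∧ 0 ≤ h ∧ (((∀ i ∈ S, wd i ≤ w) ∧ ∑ i ∈ S, ht i ≤ h) ∨
    ((∀ i ∈ S, ht i ≤ h) ∧ ∑ i ∈ S, wd i ≤ w))

/-- Container leaf: stack or area container. -/
def CL (wd ht : ι → ℝ) (ε : ℝ) (w h : ℝ) (S : Finset ι) : Prop :=
  KL wd ht w h S ∨ (0 ≤ w ∧ 0 ≤ h ∧ (∃ m, Tr (IL wd ht) w h m S) ∧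
    ∀ i ∈ S, wd i ≤ ε * w ∧ ht i ≤ ε * h)

variable {L L' : ℝ → ℝ → Finset ι → Prop} {w h : ℝ} {k : ℕ} {S : Finset ι}
  {wd ht : ι → ℝ}

lemma Tr.one_le (t : Tr L w h k S) : 1 ≤ k := by
  induction t with
  | leaf hk hL => exact hk
  | vc w1 w2 k1 k2 S1 S2 hd hS hw hk t1 t2 i1 i2 => omega
  | hc w1 w2 k1 k2 S1 S2 hd hS hw hk t1 t2 i1 i2 => omega

lemma Tr.monok (t : Tr L w h k S) {k' : ℕ} (hk' : k ≤ k') : Tr L w h k' S := by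
  cases t with
  | leaf hk hL => exact .leaf (hk.trans hk') hL
  | vc w1 w2 k1 k2 S1 S2 hd hS hw hk t1 t2 =>
    exact .vc w1 w2 k1 k2 S1 S2 hd hS hw (hk.trans hk') t1 t2
  | hc w1 w2 k1 k2 S1 S2 hd hS hw hk t1 t2 =>
    exact .hc w1 w2 k1 k2 S1 S2 hd hS hw (hk.trans hk') t1 t2

lemma Tr.map (a b : ℝ) (ha : 0 ≤ a) (hb : 0 ≤ b)
    (hL : ∀ w h S, L w h S → L' (a * w) (b * h) S) (t : Tr L w h k S) :
    Tr L' (a * w) (b * h) k S := by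
  induction t with
  | leaf hk h => exact .leaf hk (hL _ _ _ h)
  | vc w1 w2 k1 k2 S1 S2 hd hS hw hk t1 t2 i1 i2 =>
    exact .vc _ _ k1 k2 S1 S2 hd hS (by rw [← mul_add]; exact mul_le_mul_of_nonneg_left hw ha) hk i1 i2
  | hc w1 w2 k1 k2 S1 S2 hd hS hw hk t1 t2 i1 i2 =>
    exact .hc _ _ k1 k2 S1 S2 hd hS (by rw [← mul_add]; exact mul_le_mul_of_nonneg_left hw hb) hk i1 i2

lemma Tr.weaken (hL : ∀ w h S, L w h S → L' w h S) (t : Tr L w h k S) : Tr L' w h k S := by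
  have := t.map (L' := L') 1 1 zero_le_one zero_le_one (by simpa using hL)
  simpa using this

/-- Leaf replacement restricted to subsets of `S`. -/
lemma Tr.map_sub (a b : ℝ) (ha : 0 ≤ a) (hb : 0 ≤ b) (t : Tr L w h k S)
    (hL : ∀ w h S', S' ⊆ S → L w h S' → L' (a * w) (b * h) S') :
    Tr L' (a * w) (b * h) k S := by
  induction t with
  | leaf hk h => exact .leaf hk (hL _ _ _ (Finset.Subset.refl _) h)
  | vc w1 w2 k1 k2 S1 S2 hd hS hw hk t1 t2 i1 i2 =>
    exact .vc _ _ k1 k2 S1 S2 hd hS (by rw [← mul_add]; exact mul_le_mul_of_nonneg_left hw ha) hk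
      (i1 fun w h S' h1 => hL w h S' (h1.trans (hS ▸ Finset.subset_union_left)))
      (i2 fun w h S' h1 => hL w h S' (h1.trans (hS ▸ Finset.subset_union_right)))
  | hc w1 w2 k1 k2 S1 S2 hd hS hw hk t1 t2 i1 i2 =>
    exact .hc _ _ k1 k2 S1 S2 hd hS (by rw [← mul_add]; exact mul_le_mul_of_nonneg_left hw hb) hk
      (i1 fun w h S' h1 => hL w h S' (h1.trans (hS ▸ Finset.subset_union_left)))
      (i2 fun w h S' h1 => hL w h S' (h1.trans (hS ▸ Finset.subset_union_right)))

lemma Tr.swap (hL : ∀ w h S, L w h S → L' h w S) (t : Tr L w h k S) : Tr L' h w k S := by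
  induction t with
  | leaf hk h => exact .leaf hk (hL _ _ _ h)
  | vc w1 w2 k1 k2 S1 S2 hd hS hw hk t1 t2 i1 i2 => exact .hc _ _ k1 k2 S1 S2 hd hS hw hk i1 i2
  | hc w1 w2 k1 k2 S1 S2 hd hS hw hk t1 t2 i1 i2 => exact .vc _ _ k1 k2 S1 S2 hd hS hw hk i1 i2

lemma Tr.nonneg (hL : ∀ w h S, L w h S → 0 ≤ w ∧ 0 ≤ h) (t : Tr L w h k S) : 0 ≤ w ∧ 0 ≤ h := by
  induction t with
  | leaf hk h => exact hL _ _ _ h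
  | vc w1 w2 k1 k2 S1 S2 hd hS hw hk t1 t2 i1 i2 => exact ⟨by linarith [i1.1, i2.1], i1.2⟩
  | hc w1 w2 k1 k2 S1 S2 hd hS hw hk t1 t2 i1 i2 => exact ⟨i1.1, by linarith [i1.2, i2.2]⟩

lemma Tr.mono (hL : ∀ w h w' h' S, L w h S → w ≤ w' → h ≤ h' → L w' h' S) (t : Tr L w h k S) :
    ∀ {w' h' : ℝ}, w ≤ w' → h ≤ h' → Tr L w' h' k S := by
  induction t with
  | leaf hk h => exact fun h1 h2 => .leaf hk (hL _ _ _ _ _ h h1 h2)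
  | vc w1 w2 k1 k2 S1 S2 hd hS hw hk t1 t2 i1 i2 =>
    exact fun h1 h2 => .vc w1 w2 k1 k2 S1 S2 hd hS (hw.trans h1) hk (i1 le_rfl h2) (i2 le_rfl h2)
  | hc w1 w2 k1 k2 S1 S2 hd hS hw hk t1 t2 i1 i2 =>
    exact fun h1 h2 => .hc w1 w2 k1 k2 S1 S2 hd hS (hw.trans h2) hk (i1 h1 le_rfl) (i2 h1 le_rfl)

/-- Replace every leaf by a tree (in a box stretched horizontally), discarding few items. -/
lemma Tr.bind (a : ℝ) (ha : 0 ≤ a) (K d : ℕ) (t : Tr L w h k S)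
    (hn : ∀ w h S, L w h S → 0 ≤ w ∧ 0 ≤ h) :
    ∀ (W H : ℝ), w ≤ W → h ≤ H →
    (∀ w h S, L w h S → w ≤ W → h ≤ H → ∃ S' ⊆ S, (S \ S').card ≤ d ∧ Tr L' (a * w) h K S') →
    ∃ S' ⊆ S, (S \ S').card ≤ k * d ∧ Tr L' (a * w) h (k * K) S' := by
  induction t with
  | leaf hk h =>
    intro W H hW hH hb
    obtain ⟨S', h1, h2, h3⟩ := hb _ _ _ h hW hH
    exact ⟨S', h1, h2.trans (Nat.le_mul_of_pos_left _ hk), h3.monok (Nat.le_mul_of_pos_left _ hk)⟩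
  | @vc w h k S w1 w2 k1 k2 S1 S2 hd hS hw hk t1 t2 i1 i2 =>
    intro W H hW hH hb
    have n1 := t1.nonneg hn
    have n2 := t2.nonneg hn
    obtain ⟨A, a1, a2, a3⟩ := i1 W H (by linarith) hH hb
    obtain ⟨B, b1, b2, b3⟩ := i2 W H (by linarith) hH hb
    refine ⟨A ∪ B, by rw [hS]; exact Finset.union_subset_union a1 b1, ?_, ?_⟩
    · have : S \ (A ∪ B) ⊆ (S1 \ A) ∪ (S2 \ B) := by
        intro x; simp only [hS, Finset.mem_sdiff, Finset.mem_union]; tauto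
      have h1 := (Finset.card_le_card this).trans (Finset.card_union_le _ _)
      have h2 : (k1 + k2) * d ≤ k * d := Nat.mul_le_mul_right _ hk
      rw [add_mul] at h2; omega
    · refine .vc _ _ _ _ A B (hd.mono a1 b1) rfl ?_ ?_ a3 b3
      · rw [← mul_add]; exact mul_le_mul_of_nonneg_left hw ha
      · rw [← add_mul]; exact Nat.mul_le_mul_right _ hk
  | @hc w h k S h1 h2 k1 k2 S1 S2 hd hS hw hk t1 t2 i1 i2 =>
    intro W H hW hH hb
    have n1 := t1.nonneg hn
    have n2 := t2.nonneg hn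
    obtain ⟨A, a1, a2, a3⟩ := i1 W H hW (by linarith) hb
    obtain ⟨B, b1, b2, b3⟩ := i2 W H hW (by linarith) hb
    refine ⟨A ∪ B, by rw [hS]; exact Finset.union_subset_union a1 b1, ?_, ?_⟩
    · have : S \ (A ∪ B) ⊆ (S1 \ A) ∪ (S2 \ B) := by
        intro x; simp only [hS, Finset.mem_sdiff, Finset.mem_union]; tauto
      have h1 := (Finset.card_le_card this).trans (Finset.card_union_le _ _)
      have h2 : (k1 + k2) * d ≤ k * d := Nat.mul_le_mul_right _ hk
      rw [add_mul] at h2; omega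
    · refine .hc _ _ _ _ A B (hd.mono a1 b1) rfl hw ?_ a3 b3
      rw [← add_mul]; exact Nat.mul_le_mul_right _ hk

lemma IL.mono' : ∀ w h w' h' S, IL wd ht w h S → w ≤ w' → h ≤ h' → IL wd ht w' h' S := by
  rintro w h w' h' S ⟨a, b, c, d⟩ h1 h2
  exact ⟨a.trans h1, b.trans h2, c, fun i hi => ⟨(d i hi).1.trans h1, (d i hi).2.trans h2⟩⟩

lemma IL.nonneg' : ∀ w h S, IL wd ht w h S → 0 ≤ w ∧ 0 ≤ h := fun _ _ _ h => ⟨h.1, h.2.1⟩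

lemma IL.swap' : ∀ w h S, IL wd ht w h S → IL ht wd h w S :=
  fun _ _ _ h => ⟨h.2.1, h.1, h.2.2.1, fun i hi => (h.2.2.2 i hi).symm⟩

lemma KL.mono' : ∀ w h w' h' S, KL wd ht w h S → w ≤ w' → h ≤ h' → KL wd ht w' h' S := by
  rintro w h w' h' S ⟨a, b, c⟩ h1 h2
  refine ⟨a.trans h1, b.trans h2, c.imp ?_ ?_⟩
  · exact fun d => ⟨fun i hi => (d.1 i hi).trans h1, d.2.trans h2⟩
  · exact fun d => ⟨fun i hi => (d.1 i hi).trans h2, d.2.trans h1⟩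

lemma KL.nonneg' : ∀ w h S, KL wd ht w h S → 0 ≤ w ∧ 0 ≤ h := fun _ _ _ h => ⟨h.1, h.2.1⟩

lemma KL.swap' : ∀ w h S, KL wd ht w h S → KL ht wd h w S :=
  fun _ _ _ h => ⟨h.2.1, h.1, h.2.2.symm⟩

lemma CL.nonneg' {ε : ℝ} : ∀ w h S, CL wd ht ε w h S → 0 ≤ w ∧ 0 ≤ h := by
  rintro w h S (h | h)
  exacts [⟨h.1, h.2.1⟩, ⟨h.1, h.2.1⟩]

lemma CL.swap' {ε : ℝ} : ∀ w h S, CL wd ht ε w h S → CL ht wd ε h w S := by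
  rintro w h S (h | ⟨a, b, ⟨m, c⟩, d⟩)
  · exact Or.inl (h.swap')
  · exact Or.inr ⟨b, a, ⟨m, c.swap IL.swap'⟩, fun i hi => (d i hi).symm⟩

lemma CL.mono' {ε : ℝ} (hε : 0 ≤ ε) : ∀ w h w' h' S, CL wd ht ε w h S → w ≤ w' → h ≤ h' →
    CL wd ht ε w' h' S := by
  rintro w h w' h' S (h0 | ⟨a, b, ⟨m, c⟩, d⟩) h1 h2
  · exact Or.inl (KL.mono' _ _ _ _ _ h0 h1 h2)
  · exact Or.inr ⟨a.trans h1, b.trans h2, ⟨m, c.mono IL.mono' h1 h2⟩, fun i hi =>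
      ⟨(d i hi).1.trans (mul_le_mul_of_nonneg_left h1 hε),
        (d i hi).2.trans (mul_le_mul_of_nonneg_left h2 hε)⟩⟩

lemma Tr.area (hwd : ∀ i, 0 < wd i) (hht : ∀ i, 0 < ht i) (t : Tr (IL wd ht) w h k S) :
    ∑ i ∈ S, wd i * ht i ≤ w * h := by
  induction t with
  | @leaf w h k S hk h =>
    obtain ⟨a, b, c, d⟩ := h
    · rcases card_le_one_cases c with rfl | ⟨x, rfl⟩
      · simpa using mul_nonneg a b
      · simpa using mul_le_mul (d x (by simp)).1 (d x (by simp)).2 (hht x).le a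
  | vc w1 w2 k1 k2 S1 S2 hd hS hw hk t1 t2 i1 i2 =>
    rw [hS, Finset.sum_union hd]
    have := mul_le_mul_of_nonneg_right hw (t1.nonneg IL.nonneg').2
    linarith
  | hc w1 w2 k1 k2 S1 S2 hd hS hw hk t1 t2 i1 i2 =>
    rw [hS, Finset.sum_union hd]
    have := mul_le_mul_of_nonneg_left hw (t1.nonneg IL.nonneg').1
    linarith

/-- every item fits -/
lemma Tr.fits (t : Tr (IL wd ht) w h k S) : ∀ i ∈ S, wd i ≤ w ∧ ht i ≤ h := by
  induction t with
  | leaf hk h => exact h.2.2.2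
  | vc w1 w2 k1 k2 S1 S2 hd hS hw hk t1 t2 i1 i2 =>
    intro i hi
    have n1 := t1.nonneg IL.nonneg'
    have n2 := t2.nonneg IL.nonneg'
    rw [hS, Finset.mem_union] at hi
    rcases hi with hi | hi
    · have := i1 i hi; constructor <;> linarith
    · have := i2 i hi; constructor <;> linarith
  | hc w1 w2 k1 k2 S1 S2 hd hS hw hk t1 t2 i1 i2 =>
    intro i hi
    have n1 := t1.nonneg IL.nonneg'
    have n2 := t2.nonneg IL.nonneg'
    rw [hS, Finset.mem_union] at hi
    rcases hi with hi | hi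
    · have := i1 i hi; constructor <;> linarith
    · have := i2 i hi; constructor <;> linarith

/-- a guillotine tree as a tree of stacks with few leaves -/
lemma Tr.toSL (t : Tr (IL wd ht) w h k S) : Tr (KL wd ht) w h (max 1 S.card) S := by
  induction t with
  | @leaf w h k S hk h =>
    obtain ⟨a, b, c, d⟩ := h
    refine .leaf (le_max_left _ _) ⟨a, b, Or.inl ⟨fun i hi => (d i hi).1, ?_⟩⟩
    · rcases card_le_one_cases c with rfl | ⟨x, rfl⟩
      · simpa using b
      · simpa using (d x (by simp)).2
  | vc w1 w2 k1 k2 S1 S2 hd hS hw hk t1 t2 i1 i2 =>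
    have n1 := t1.nonneg IL.nonneg'
    have n2 := t2.nonneg IL.nonneg'
    rcases Finset.eq_empty_or_nonempty S1 with rfl | e1
    · simp at hS; subst hS; exact i2.mono KL.mono' (by linarith) le_rfl
    rcases Finset.eq_empty_or_nonempty S2 with rfl | e2
    · simp at hS; subst hS; exact i1.mono KL.mono' (by linarith) le_rfl
    have c1 := e1.card_pos
    have c2 := e2.card_pos
    refine .vc w1 w2 _ _ S1 S2 hd hS hw ?_ i1 i2
    rw [hS, Finset.card_union_of_disjoint hd]; omega
  | hc w1 w2 k1 k2 S1 S2 hd hS hw hk t1 t2 i1 i2 =>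
    have n1 := t1.nonneg IL.nonneg'
    have n2 := t2.nonneg IL.nonneg'
    rcases Finset.eq_empty_or_nonempty S1 with rfl | e1
    · simp at hS; subst hS; exact i2.mono KL.mono' le_rfl (by linarith)
    rcases Finset.eq_empty_or_nonempty S2 with rfl | e2
    · simp at hS; subst hS; exact i1.mono KL.mono' le_rfl (by linarith)
    have c1 := e1.card_pos
    have c2 := e2.card_pos
    refine .hc w1 w2 _ _ S1 S2 hd hS hw ?_ i1 i2
    rw [hS, Finset.card_union_of_disjoint hd]; omega

/-- Splitting lemma: greedy filling in decreasing order of a key. -/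
lemma split (key f : ι → ℝ) (hf : ∀ i, 0 < f i) (S : Finset ι) : ∀ a : ℝ, 0 ≤ a →
    ∃ P D R : Finset ι, Disjoint P D ∧ Disjoint P R ∧ Disjoint D R ∧ S = P ∪ D ∪ R ∧
      D.card ≤ 1 ∧ ∑ i ∈ P, f i ≤ a ∧ (R.Nonempty → a ≤ ∑ i ∈ P, f i + ∑ i ∈ D, f i) ∧
      ∀ i ∈ P ∪ D, ∀ j ∈ R, key j ≤ key i := by
  induction S using Finset.strongInduction with
  | H S ih =>
    intro a ha
    rcases S.eq_empty_or_nonempty with rfl | hne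
    · exact ⟨∅, ∅, ∅, by simp, by simp, by simp, by simp, by simp, by simpa using ha, by simp, by simp⟩
    obtain ⟨m, hm, hmax⟩ := S.exists_max_image key hne
    by_cases hfa : f m ≤ a
    · obtain ⟨P, D, R, h1, h2, h3, h4, h5, h6, h7, h8⟩ :=
        ih (S.erase m) (Finset.erase_ssubset hm) (a - f m) (by linarith)
      have hmn : m ∉ P ∪ D ∪ R := by rw [← h4]; simp
      simp only [Finset.mem_union, not_or] at hmn
      obtain ⟨⟨m1, m2⟩, m3⟩ := hmn
      refine ⟨insert m P, D, R, ?_, ?_, h3, ?_, h5, ?_, ?_, ?_⟩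
      · rw [Finset.disjoint_insert_left]; exact ⟨m2, h1⟩
      · rw [Finset.disjoint_insert_left]; exact ⟨m3, h2⟩
      · rw [Finset.insert_union, Finset.insert_union, ← h4, Finset.insert_erase hm]
      · rw [Finset.sum_insert m1]; linarith
      · intro hR; have := h7 hR; rw [Finset.sum_insert m1]; linarith
      · intro i hi j hj
        simp only [Finset.mem_union, Finset.mem_insert] at hi
        rcases hi with (rfl | hi) | hi
        · apply hmax
          have : j ∈ S.erase i := by rw [h4]; simp [hj]
          exact (Finset.mem_erase.1 this).2
        · exact h8 i (by simp [hi]) j hj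
        · exact h8 i (by simp [hi]) j hj
    · refine ⟨∅, {m}, S.erase m, by simp, by simp, by simp, ?_, by simp, by simpa using ha, ?_, ?_⟩
      · ext x; by_cases hx : x = m <;> simp [hx, hm]
      · intro _; simp; linarith
      · intro i hi j hj
        simp at hi; subst hi
        exact hmax _ (Finset.mem_erase.1 hj).2

lemma split2 (f : ι → ℝ) (hf : ∀ i, 0 < f i) (S : Finset ι) (a b : ℝ) (ha : 0 ≤ a) (hb : 0 ≤ b)
    (hs : ∑ i ∈ S, f i ≤ a + b) :
    ∃ P D R : Finset ι, Disjoint P D ∧ Disjoint P R ∧ Disjoint D R ∧ S = P ∪ D ∪ R ∧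
      D.card ≤ 1 ∧ ∑ i ∈ P, f i ≤ a ∧ ∑ i ∈ R, f i ≤ b := by
  obtain ⟨P, D, R, h1, h2, h3, h4, h5, h6, h7, h8⟩ := split f f hf S a ha
  refine ⟨P, D, R, h1, h2, h3, h4, h5, h6, ?_⟩
  rcases R.eq_empty_or_nonempty with rfl | hR
  · simpa using hb
  · have := h7 hR
    rw [h4, Finset.sum_union (by rw [Finset.disjoint_union_left]; exact ⟨h2, h3⟩),
      Finset.sum_union h1] at hs
    linarith

end
end GK

namespace GK
section
variable {ι : Type} [DecidableEq ι]
set_option linter.unusedSectionVars false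
set_option linter.unusedVariables false
variable {w h : ℝ} {k : ℕ} {S : Finset ι} {wd ht : ι → ℝ}

open MeasureTheory Set in
/-- length of `(a,b]` outside `U` -/
noncomputable def ln (U : Set ℝ) (a b : ℝ) : ℝ := (volume (Ioc a b \ U)).toReal

open MeasureTheory Set in
lemma ln_nonneg (U : Set ℝ) (a b : ℝ) : 0 ≤ ln U a b := ENNReal.toReal_nonneg

open MeasureTheory Set in
lemma ln_fin (U : Set ℝ) (a b : ℝ) : volume (Ioc a b \ U) ≠ ⊤ :=
  ne_top_of_le_ne_top (by simp) (measure_mono sdiff_subset : _ ≤ volume (Ioc a b))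

open MeasureTheory Set in
lemma ln_add {U : Set ℝ} (hU : MeasurableSet U) {a b c : ℝ} (h1 : a ≤ b) (h2 : b ≤ c) :
    ln U a b + ln U b c ≤ ln U a c := by
  unfold ln
  rw [← ENNReal.toReal_add (ln_fin _ _ _) (ln_fin _ _ _), ← measure_union]
  · apply ENNReal.toReal_mono (ln_fin _ _ _)
    apply measure_mono
    rintro x (⟨⟨hx1, hx2⟩, hx⟩ | ⟨⟨hx1, hx2⟩, hx⟩)
    · exact ⟨⟨hx1, hx2.trans h2⟩, hx⟩
    · exact ⟨⟨h1.trans_lt hx1, hx2⟩, hx⟩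
  · rw [Set.disjoint_left]
    rintro x ⟨⟨hx1, hx2⟩, hx⟩ ⟨⟨hx3, hx4⟩, _⟩
    linarith
  · exact measurableSet_Ioc.diff hU

open MeasureTheory Set in
lemma ln_ge {U : Set ℝ} {a b c d : ℝ} (h1 : a ≤ c) (h2 : d ≤ b) (hd : Disjoint (Ioo c d) U) :
    d - c ≤ ln U a b := by
  rcases le_total d c with h | h
  · linarith [ln_nonneg U a b]
  have : volume (Ioo c d) ≤ volume (Ioc a b \ U) := by
    apply measure_mono
    intro x hx
    exact ⟨⟨h1.trans_lt hx.1, (hx.2.trans_le h2).le⟩, fun hu => (Set.disjoint_left.1 hd hx hu)⟩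
  have := ENNReal.toReal_mono (ln_fin U a b) this
  simpa [ln, Real.volume_Ioo, ENNReal.toReal_ofReal (sub_nonneg.2 h)] using this

open MeasureTheory Set in
lemma ln_le_sub {U V : Set ℝ} {a b : ℝ} (h1 : a ≤ b) (hV : MeasurableSet V) (hVU : V ⊆ U) (hVab : V ⊆ Ioc a b) :
    ln U a b ≤ (b - a) - (volume V).toReal := by
  have hf : volume V ≠ ⊤ := ne_top_of_le_ne_top (by simp) (measure_mono hVab : _ ≤ volume (Ioc a b))
  have e : ln V a b = (b - a) - (volume V).toReal := by
    unfold ln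
    rw [measure_sdiff hVab hV.nullMeasurableSet hf, ENNReal.toReal_sub_of_le (measure_mono hVab) (by simp)]
    simp [ENNReal.toReal_ofReal (sub_nonneg.2 h1)]
  rw [← e]
  apply ENNReal.toReal_mono (ln_fin _ _ _)
  apply measure_mono
  intro x hx; exact ⟨hx.1, fun h => hx.2 (hVU h)⟩

open Set in
/-- Collapsing vertical and horizontal strips of a guillotine packing. -/
lemma collapse {Ux Uy : Set ℝ} (hUx : MeasurableSet Ux) (hUy : MeasurableSet Uy)
    {place : ι → Rect} {P : Rect} {S : Finset ι} (g : GuillotineSep place P S) :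
    ∀ S' ⊆ S, P.x1 ≤ P.x2 → P.y1 ≤ P.y2 →
      (∀ i ∈ S, (place i).SubRect P) →
      (∀ i ∈ S', wd i = (place i).width ∧ ht i = (place i).height ∧
        Disjoint (Ioo (place i).x1 (place i).x2) Ux ∧ Disjoint (Ioo (place i).y1 (place i).y2) Uy) →
    ∃ k, Tr (IL wd ht) (ln Ux P.x1 P.x2) (ln Uy P.y1 P.y2) k S' := by
  induction g with
  | base P S hS =>
    intro S' hS' _ _ hin hi
    refine ⟨1, .leaf le_rfl ⟨ln_nonneg _ _ _, ln_nonneg _ _ _, (Finset.card_le_card hS').trans hS, ?_⟩⟩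
    intro i hiS
    obtain ⟨a, b, c, d⟩ := hi i hiS
    obtain ⟨e1, e2, e3, e4⟩ := hin i (hS' hiS)
    rw [a, b]
    exact ⟨ln_ge e1 e2 c, ln_ge e3 e4 d⟩
  | vcut P S c h1 h2 hcross hL hR iL iR =>
    intro S' hS' hx hy hin hi
    obtain ⟨k1, t1⟩ := iL (S'.filter fun i => (place i).x2 ≤ c)
      (Finset.filter_subset_filter _ hS') h1.le hy
      (fun i hi => by
        rw [Finset.mem_filter] at hi
        obtain ⟨e1, e2, e3, e4⟩ := hin i hi.1
        exact ⟨e1, hi.2, e3, e4⟩)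
      (fun i hi' => hi i (Finset.mem_filter.1 hi').1)
    obtain ⟨k2, t2⟩ := iR (S'.filter fun i => ¬ (place i).x2 ≤ c)
      (Finset.filter_subset_filter _ hS') h2.le hy
      (fun i hi => by
        rw [Finset.mem_filter] at hi
        obtain ⟨e1, e2, e3, e4⟩ := hin i hi.1
        exact ⟨(hcross i hi.1).resolve_left hi.2, e2, e3, e4⟩)
      (fun i hi' => hi i (Finset.mem_filter.1 hi').1)
    exact ⟨k1 + k2, .vc _ _ k1 k2 _ _ (Finset.disjoint_filter_filter_not _ _ _)
      (Finset.filter_union_filter_not_eq _ _).symm (ln_add hUx h1.le h2.le) le_rfl t1 t2⟩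
  | hcut P S c h1 h2 hcross hL hR iL iR =>
    intro S' hS' hx hy hin hi
    obtain ⟨k1, t1⟩ := iL (S'.filter fun i => (place i).y2 ≤ c)
      (Finset.filter_subset_filter _ hS') hx h1.le
      (fun i hi => by
        rw [Finset.mem_filter] at hi
        obtain ⟨e1, e2, e3, e4⟩ := hin i hi.1
        exact ⟨e1, e2, e3, hi.2⟩)
      (fun i hi' => hi i (Finset.mem_filter.1 hi').1)
    obtain ⟨k2, t2⟩ := iR (S'.filter fun i => ¬ (place i).y2 ≤ c)
      (Finset.filter_subset_filter _ hS') hx h2.le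
      (fun i hi => by
        rw [Finset.mem_filter] at hi
        obtain ⟨e1, e2, e3, e4⟩ := hin i hi.1
        exact ⟨e1, e2, (hcross i hi.1).resolve_left hi.2, e4⟩)
      (fun i hi' => hi i (Finset.mem_filter.1 hi').1)
    exact ⟨k1 + k2, .hc _ _ k1 k2 _ _ (Finset.disjoint_filter_filter_not _ _ _)
      (Finset.filter_union_filter_not_eq _ _).symm (ln_add hUy h1.le h2.le) le_rfl t1 t2⟩

/-- Chains of long items around the corner of a box. -/
inductive LCh (wd ht : ι → ℝ) : ℝ → ℝ → Finset ι → Finset ι → Prop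
  | nil {w h : ℝ} (hw : 0 ≤ w) (hh : 0 ≤ h) : LCh wd ht w h ∅ ∅
  | consV {w h : ℝ} {SH SV : Finset ι} (i : ι) (hi : i ∉ SV) (hi' : i ∉ SH) (hw : wd i ≤ w) (hh : ht i ≤ h)
      (c : LCh wd ht (w - wd i) h SH SV) : LCh wd ht w h SH (insert i SV)
  | consH {w h : ℝ} {SH SV : Finset ι} (i : ι) (hi : i ∉ SH) (hi' : i ∉ SV) (hw : wd i ≤ w) (hh : ht i ≤ h)
      (c : LCh wd ht w (h - ht i) SH SV) : LCh wd ht w h (insert i SH) SV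

lemma LCh.swap {SH SV : Finset ι} (c : LCh wd ht w h SH SV) : LCh ht wd h w SV SH := by
  induction c with
  | nil hw hh => exact .nil hh hw
  | consV i hi hi' hw hh c ih => exact .consH i hi hi' hh hw ih
  | consH i hi hi' hw hh c ih => exact .consV i hi hi' hh hw ih

lemma LCh.nonneg {SH SV : Finset ι} (c : LCh wd ht w h SH SV) (hwd : ∀ i, 0 < wd i) (hht : ∀ i, 0 < ht i) :
    0 ≤ w ∧ 0 ≤ h := by
  cases c with
  | nil hw hh => exact ⟨hw, hh⟩
  | consV i hi hi' hw hh c => exact ⟨(hwd i).le.trans hw, (hht i).le.trans hh⟩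
  | consH i hi hi' hw hh c => exact ⟨(hwd i).le.trans hw, (hht i).le.trans hh⟩

lemma LCh.sums {SH SV : Finset ι} (c : LCh wd ht w h SH SV) :
    ∑ i ∈ SV, wd i ≤ w ∧ ∑ i ∈ SH, ht i ≤ h := by
  induction c with
  | nil hw hh => simpa using ⟨hw, hh⟩
  | consV i hi hi' hw hh c ih => rw [Finset.sum_insert hi]; exact ⟨by linarith [ih.1], ih.2⟩
  | consH i hi hi' hw hh c ih => rw [Finset.sum_insert hi]; exact ⟨ih.1, by linarith [ih.2]⟩

lemma LCh.mono {SH SV : Finset ι} (c : LCh wd ht w h SH SV) : ∀ {w' h' : ℝ}, w ≤ w' → h ≤ h' →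
    LCh wd ht w' h' SH SV := by
  induction c with
  | nil hw hh => exact fun h1 h2 => .nil (hw.trans h1) (hh.trans h2)
  | consV i hi hi' hw hh c ih => exact fun h1 h2 => .consV i hi hi' (hw.trans h1) (hh.trans h2) (ih (by linarith) h2)
  | consH i hi hi' hw hh c ih => exact fun h1 h2 => .consH i hi hi' (hw.trans h1) (hh.trans h2) (ih h1 (by linarith))

/-- add a pure family of vertical items in front -/
lemma LCh.addV (hwd : ∀ i, 0 < wd i) {SH SV : Finset ι} (A : Finset ι) : ∀ {w h : ℝ}, Disjoint A SH → Disjoint A SV →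
    (∀ i ∈ A, ht i ≤ h) → 0 ≤ w → LCh wd ht (w - ∑ i ∈ A, wd i) h SH SV → LCh wd ht w h SH (A ∪ SV) := by
  induction A using Finset.induction_on with
  | empty => intro w h _ _ _ _ c; simpa using c
  | insert a A ha ih =>
    intro w h h1 h2 h3 h4 c
    rw [Finset.disjoint_insert_left] at h1 h2
    rw [Finset.insert_union]
    rw [Finset.sum_insert ha] at c
    have key : wd a ≤ w := by
      have := c.sums.1
      have h5 : 0 ≤ ∑ i ∈ SV, wd i := Finset.sum_nonneg fun i _ => (hwd i).le
      have h6 : 0 ≤ ∑ i ∈ A, wd i := Finset.sum_nonneg fun i _ => (hwd i).le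
      linarith
    refine .consV a (by simp [ha, h2.1]) h1.1 key (h3 a (by simp)) ?_
    refine ih h1.2 h2.2 (fun i hi => h3 i (by simp [hi])) (by linarith) ?_
    rwa [sub_sub]

lemma LCh.addH (hht : ∀ i, 0 < ht i) {SH SV : Finset ι} (A : Finset ι) {w h : ℝ} (h1 : Disjoint A SH) (h2 : Disjoint A SV)
    (h3 : ∀ i ∈ A, wd i ≤ w) (h4 : 0 ≤ h) (c : LCh wd ht w (h - ∑ i ∈ A, ht i) SH SV) :
    LCh wd ht w h (A ∪ SH) SV :=
  (LCh.addV hht A h2 h1 h3 h4 c.swap).swap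

/-- tall items in a tree of height at most one are side by side -/
lemma Tr.tall_sum (hwd : ∀ i, 0 < wd i) (hht : ∀ i, 0 < ht i) (t : Tr (IL wd ht) w h k S) (hh : h ≤ 1)
    (hS : ∀ i ∈ S, 1 / 2 < ht i) : ∑ i ∈ S, wd i ≤ w := by
  induction t with
  | @leaf w h k S hk h =>
    obtain ⟨a, b, c, d⟩ := h
    rcases card_le_one_cases c with rfl | ⟨x, rfl⟩
    · simpa using a
    · simpa using (d x (by simp)).1
  | vc w1 w2 k1 k2 S1 S2 hd hS' hw hk t1 t2 i1 i2 =>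
    subst hS'
    rw [Finset.sum_union hd]
    have := i1 hh (fun i hi => hS i (by simp [hi]))
    have := i2 hh (fun i hi => hS i (by simp [hi]))
    linarith
  | @hc w h k S h1 h2 k1 k2 S1 S2 hd hS' hw hk t1 t2 i1 i2 =>
    subst hS'
    have n1 := t1.nonneg IL.nonneg'
    have n2 := t2.nonneg IL.nonneg'
    rw [Finset.sum_union hd]
    have e1 := i1 (by linarith) (fun i hi => hS i (by simp [hi]))
    have e2 := i2 (by linarith) (fun i hi => hS i (by simp [hi]))
    rcases S1.eq_empty_or_nonempty with rfl | ⟨x, hx⟩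
    · simpa using e2
    rcases S2.eq_empty_or_nonempty with rfl | ⟨y, hy⟩
    · simpa using e1
    have := (t1.fits x hx).2
    have := (t2.fits y hy).2
    have := hS x (by simp [hx])
    have := hS y (by simp [hy])
    linarith

/-- Long items of a guillotine packing form a chain. -/
lemma Tr.chain (hwd : ∀ i, 0 < wd i) (hht : ∀ i, 0 < ht i) (t : Tr (IL wd ht) w h k S) :
    ∀ (SH SV : Finset ι), S = SH ∪ SV → Disjoint SH SV → w ≤ 1 → h ≤ 1 →
      (∀ i ∈ SH, 1 / 2 < wd i) → (∀ i ∈ SV, 1 / 2 < ht i) → LCh wd ht w h SH SV := by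
  induction t with
  | @leaf w h k S hk hl =>
    intro SH SV hS hd hw hh h1 h2
    obtain ⟨a, b, c, d⟩ := hl
    rcases card_le_one_cases c with rfl | ⟨x, rfl⟩
    · obtain ⟨rfl, rfl⟩ := Finset.union_eq_empty.1 hS.symm
      exact .nil a b
    · have hx := d x (by simp)
      by_cases hm : x ∈ SH
      · have e1 : SH = {x} := Finset.eq_singleton_iff_unique_mem.2 ⟨hm, fun y hy => by
          have : y ∈ ({x} : Finset ι) := by rw [hS]; simp [hy]
          simpa using this⟩
        have e2 : SV = ∅ := by
          rw [Finset.eq_empty_iff_forall_notMem]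
          intro y hy
          have : y ∈ ({x} : Finset ι) := by rw [hS]; simp [hy]
          simp at this; subst this
          exact Finset.disjoint_left.1 hd hm hy
        subst e1 e2
        have := LCh.consH (wd := wd) (ht := ht) (SH := ∅) (SV := ∅) x (by simp) (by simp) hx.1 hx.2 (.nil a (by linarith [hx.2]))
        simpa using this
      · have hm2 : x ∈ SV := by
          have : x ∈ SH ∪ SV := by rw [← hS]; simp
          simpa [hm] using this
        have e1 : SV = {x} := Finset.eq_singleton_iff_unique_mem.2 ⟨hm2, fun y hy => by
          have : y ∈ ({x} : Finset ι) := by rw [hS]; simp [hy]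
          simpa using this⟩
        have e2 : SH = ∅ := by
          rw [Finset.eq_empty_iff_forall_notMem]
          intro y hy
          have : y ∈ ({x} : Finset ι) := by rw [hS]; simp [hy]
          simp at this; subst this
          exact hm hy
        subst e1 e2
        have := LCh.consV (wd := wd) (ht := ht) (SH := ∅) (SV := ∅) x (by simp) (by simp) hx.1 hx.2 (.nil (by linarith [hx.1]) b)
        simpa using this
  | @vc w h k S w1 w2 k1 k2 S1 S2 hd' hS' hw' hk t1 t2 i1 i2 =>
    intro SH SV hS hd hw hh hh1 hh2
    have n1 := t1.nonneg IL.nonneg'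
    have n2 := t2.nonneg IL.nonneg'
    have main : ∀ (wa wb : ℝ) (ka : ℕ) (A B : Finset ι), Disjoint A B → SH ∪ SV = A ∪ B → wa + wb ≤ w → 0 ≤ wb → wa ≤ 1 / 2 →
        Tr (IL wd ht) wa h ka A →
        (∀ (SH SV : Finset ι), B = SH ∪ SV → Disjoint SH SV → wb ≤ 1 → h ≤ 1 →
          (∀ i ∈ SH, 1 / 2 < wd i) → (∀ i ∈ SV, 1 / 2 < ht i) → LCh wd ht wb h SH SV) →
        LCh wd ht w h SH SV := by
      intro wa wb ka A B hAB hu hab hb ha tA iB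
      have nA := tA.nonneg IL.nonneg'
      have hASH : Disjoint A SH := by
        rw [Finset.disjoint_left]; intro i hi hi'
        have := hh1 i hi'
        have := (tA.fits i hi).1
        linarith
      have hAV : A ⊆ SV := by
        intro i hi
        have : i ∈ SH ∪ SV := by rw [hu]; simp [hi]
        rcases Finset.mem_union.1 this with h | h
        · exact absurd h (Finset.disjoint_left.1 hASH hi)
        · exact h
      have e : SV = A ∪ (SV \ A) := by rw [Finset.union_sdiff_of_subset hAV]
      have hsum := tA.tall_sum hwd hht hh (fun i hi => hh2 i (hAV hi))
      rw [e]
      refine LCh.addV hwd A hASH (Finset.disjoint_sdiff) (fun i hi => (tA.fits i hi).2) (by linarith) ?_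
      refine (iB SH (SV \ A) ?_ (hd.mono_right Finset.sdiff_subset) (by linarith) hh hh1
        (fun i hi => hh2 i (Finset.sdiff_subset hi))).mono (by linarith) le_rfl
      ext i
      have a1 : i ∈ SH ∪ SV ↔ i ∈ A ∪ B := by rw [hu]
      have a2 : i ∈ A → i ∉ B := fun h => Finset.disjoint_left.1 hAB h
      have a3 : i ∈ A → i ∉ SH := fun h => Finset.disjoint_left.1 hASH h
      simp only [Finset.mem_union, Finset.mem_sdiff] at *
      tauto
    rcases le_total w1 w2 with hle | hle
    · exact main w1 w2 k1 S1 S2 hd' (hS.symm.trans hS') hw' n2.1 (by linarith) t1 i2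
    · exact main w2 w1 k2 S2 S1 hd'.symm (by rw [← hS, hS', Finset.union_comm]) (by linarith) n1.1 (by linarith) t2 i1
  | @hc w h k S w1 w2 k1 k2 S1 S2 hd' hS' hw' hk t1 t2 i1 i2 =>
    intro SH SV hS hd hw hh hh1 hh2
    have n1 := t1.nonneg IL.nonneg'
    have n2 := t2.nonneg IL.nonneg'
    have main : ∀ (wa wb : ℝ) (ka : ℕ) (A B : Finset ι), Disjoint A B → SH ∪ SV = A ∪ B → wa + wb ≤ h → 0 ≤ wb → wa ≤ 1 / 2 →
        Tr (IL wd ht) w wa ka A →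
        (∀ (SH SV : Finset ι), B = SH ∪ SV → Disjoint SH SV → w ≤ 1 → wb ≤ 1 →
          (∀ i ∈ SH, 1 / 2 < wd i) → (∀ i ∈ SV, 1 / 2 < ht i) → LCh wd ht w wb SH SV) →
        LCh wd ht w h SH SV := by
      intro wa wb ka A B hAB hu hab hb ha tA iB
      have nA := tA.nonneg IL.nonneg'
      have hASH : Disjoint A SV := by
        rw [Finset.disjoint_left]; intro i hi hi'
        have := hh2 i hi'
        have := (tA.fits i hi).2
        linarith
      have hAV : A ⊆ SH := by
        intro i hi
        have : i ∈ SH ∪ SV := by rw [hu]; simp [hi]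
        rcases Finset.mem_union.1 this with h | h
        · exact h
        · exact absurd h (Finset.disjoint_left.1 hASH hi)
      have e : SH = A ∪ (SH \ A) := by rw [Finset.union_sdiff_of_subset hAV]
      have hsum := (tA.swap IL.swap').tall_sum hht hwd hw (fun i hi => hh1 i (hAV hi))
      rw [e]
      refine LCh.addH hht A (Finset.disjoint_sdiff) hASH (fun i hi => (tA.fits i hi).1) (by linarith) ?_
      refine (iB (SH \ A) SV ?_ (hd.mono_left Finset.sdiff_subset) hw (by linarith)
        (fun i hi => hh1 i (Finset.sdiff_subset hi)) hh2).mono le_rfl (by linarith)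
      ext i
      have a1 : i ∈ SH ∪ SV ↔ i ∈ A ∪ B := by rw [hu]
      have a2 : i ∈ A → i ∉ B := fun h => Finset.disjoint_left.1 hAB h
      have a3 : i ∈ A → i ∉ SV := fun h => Finset.disjoint_left.1 hASH h
      simp only [Finset.mem_union, Finset.mem_sdiff] at *
      tauto
    rcases le_total w1 w2 with hle | hle
    · exact main w1 w2 k1 S1 S2 hd' (hS.symm.trans hS') hw' n2.2 (by linarith) t1 i2
    · exact main w2 w1 k2 S2 S1 hd'.symm (by rw [← hS, hS', Finset.union_comm]) (by linarith) n1.2 (by linarith) t2 i1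

end
end GK

namespace GK
section
variable {ι : Type} [DecidableEq ι]
set_option linter.unusedSectionVars false
set_option linter.unusedVariables false
variable {w h : ℝ} {k : ℕ} {S : Finset ι} {wd ht : ι → ℝ} {ρ δ : ℝ}

/-- Leaf containing only horizontal (width a multiple of `ρ`) or only vertical (height at least `δ`) items. -/
def PL (wd ht : ι → ℝ) (ρ δ : ℝ) (w h : ℝ) (S : Finset ι) : Prop :=
  (∃ k, Tr (IL wd ht) w h k S) ∧ ((∀ i ∈ S, ∃ n : ℕ, wd i = n * ρ) ∨ (∀ i ∈ S, δ ≤ ht i))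

lemma PL.mono' : ∀ w h w' h' S, PL wd ht ρ δ w h S → w ≤ w' → h ≤ h' → PL wd ht ρ δ w' h' S := by
  rintro w h w' h' S ⟨⟨k, t⟩, c⟩ h1 h2
  exact ⟨⟨k, t.mono IL.mono' h1 h2⟩, c⟩

lemma PL.nonneg' : ∀ w h S, PL wd ht ρ δ w h S → 0 ≤ w ∧ 0 ≤ h := by
  rintro w h S ⟨⟨k, t⟩, c⟩
  exact t.nonneg IL.nonneg'

lemma floor_add_le {a b c : ℝ} (ha : 0 ≤ a) (hb : 0 ≤ b) (hρ : 0 < ρ) (h : a + b ≤ c) :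
    ⌊a / ρ⌋₊ + ⌊b / ρ⌋₊ ≤ ⌊c / ρ⌋₊ := by
  apply Nat.le_floor
  push_cast
  have h1 := Nat.floor_le (div_nonneg ha hρ.le)
  have h2 := Nat.floor_le (div_nonneg hb hρ.le)
  have h3 : (a + b) / ρ ≤ c / ρ := div_le_div_of_nonneg_right h hρ.le
  rw [add_div] at h3
  linarith

lemma mul_floor_le {a : ℝ} (ha : 0 ≤ a) (hρ : 0 < ρ) : ρ * ⌊a / ρ⌋₊ ≤ a := by
  have h1 := Nat.floor_le (div_nonneg ha hρ.le)
  rw [le_div_iff₀ hρ] at h1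
  linarith

lemma Tr.shrink (hρ : 0 < ρ) (t : Tr (IL wd ht) w h k S) (hS : ∀ i ∈ S, ∃ n : ℕ, wd i = n * ρ) :
    Tr (IL wd ht) (ρ * ⌊w / ρ⌋₊) h k S := by
  induction t with
  | leaf hk hl =>
    obtain ⟨a, b, c, d⟩ := hl
    refine .leaf hk ⟨by positivity, b, c, fun i hi => ⟨?_, (d i hi).2⟩⟩
    obtain ⟨n, hn⟩ := hS i hi
    have h1 := (d i hi).1
    rw [hn, mul_comm]
    apply mul_le_mul_of_nonneg_left _ hρ.le
    rw [hn] at h1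
    exact_mod_cast Nat.le_floor ((le_div_iff₀ hρ).2 h1)
  | vc w1 w2 k1 k2 S1 S2 hd hS' hw hk t1 t2 i1 i2 =>
    have n1 := t1.nonneg IL.nonneg'
    have n2 := t2.nonneg IL.nonneg'
    refine .vc _ _ k1 k2 S1 S2 hd hS' ?_ hk (i1 fun i hi => hS i (by simp [hS', hi])) (i2 fun i hi => hS i (by simp [hS', hi]))
    rw [← mul_add]
    apply mul_le_mul_of_nonneg_left _ hρ.le
    exact_mod_cast floor_add_le n1.1 n2.1 hρ hw
  | hc w1 w2 k1 k2 S1 S2 hd hS' hw hk t1 t2 i1 i2 =>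
    exact .hc _ _ k1 k2 S1 S2 hd hS' hw hk (i1 fun i hi => hS i (by simp [hS', hi])) (i2 fun i hi => hS i (by simp [hS', hi]))

def kap : ℕ → ℕ
  | 0 => 1
  | m + 1 => 2 * kap m + 4

lemma kap_pos (m : ℕ) : 1 ≤ kap m := by
  induction m with
  | zero => simp [kap]
  | succ m ih => simp [kap]

def MX (wd ht : ι → ℝ) (ρ δ : ℝ) (w h : ℝ) (m : ℕ) (S : Finset ι) : Prop :=
  ∃ (x y : ℝ) (A B R : Finset ι), 0 ≤ x ∧ 0 ≤ y ∧ ρ * ⌊w / ρ⌋₊ ≤ w - x ∧ y ≤ h ∧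
    S = A ∪ (B ∪ R) ∧ Disjoint A (B ∪ R) ∧ Disjoint B R ∧
    (∀ i ∈ A, δ ≤ ht i) ∧ (∀ i ∈ B, ∃ n : ℕ, wd i = n * ρ) ∧
    (∃ k, Tr (IL wd ht) x h k A) ∧ (∃ k, Tr (IL wd ht) (w - x) y k B) ∧
    Tr (PL wd ht ρ δ) (w - x) (h - y) (kap m) R

lemma MX.tree {m : ℕ} (c : MX wd ht ρ δ w h m S) : Tr (PL wd ht ρ δ) w h (kap m + 2) S := by
  obtain ⟨x, y, A, B, R, hx, hy, h1, h2, hS, d1, d2, hA, hB, tA, tB, tR⟩ := c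
  refine .vc x (w - x) 1 (kap m + 1) A (B ∪ R) d1 hS (by linarith) (by omega) (.leaf le_rfl ⟨tA, Or.inr hA⟩) ?_
  exact .hc y (h - y) 1 (kap m) B R d2 rfl (by linarith) (by omega) (.leaf le_rfl ⟨tB, Or.inl hB⟩) tR

lemma MX.ofTree (hρ : 0 < ρ) {m : ℕ} (t : Tr (PL wd ht ρ δ) w h (kap m) S) : MX wd ht ρ δ w h m S := by
  have n := t.nonneg PL.nonneg'
  refine ⟨0, 0, ∅, ∅, S, le_rfl, le_rfl, ?_, n.2, by simp, by simp, by simp, by simp, by simp, ?_, ?_, ?_⟩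
  · simpa using mul_floor_le n.1 hρ
  · exact ⟨1, .leaf le_rfl ⟨le_rfl, n.2, by simp, by simp⟩⟩
  · exact ⟨1, .leaf le_rfl ⟨by simpa using n.1, le_rfl, by simp, by simp⟩⟩
  · simpa using t

lemma MX.ofLeaf (hρ : 0 < ρ) {m : ℕ} (hL : PL wd ht ρ δ w h S) : MX wd ht ρ δ w h m S :=
  MX.ofTree hρ (.leaf (kap_pos m) hL)

lemma floor_zero {a : ℝ} (hρ : 0 < ρ) (h : ⌊a / ρ⌋₊ = 0) : a < ρ := by
  rw [Nat.floor_eq_zero, div_lt_one hρ] at h; exact h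

lemma pureV_of_floor (hwd : ∀ i, 0 < wd i) (hρ : 0 < ρ) (t : Tr (IL wd ht) w h k S)
    (hS : ∀ i ∈ S, (∃ n : ℕ, wd i = n * ρ) ∨ δ ≤ ht i) (h0 : ⌊w / ρ⌋₊ = 0) : ∀ i ∈ S, δ ≤ ht i := by
  intro i hi
  rcases hS i hi with ⟨n, hn⟩ | h
  · exfalso
    have h1 := floor_zero hρ h0
    have h2 := (t.fits i hi).1
    have h3 := hwd i
    rw [hn] at h2 h3
    rcases Nat.eq_zero_or_pos n with rfl | hp
    · simp at h3
    · have : (1 : ℝ) ≤ n := by exact_mod_cast hp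
      nlinarith
  · exact h

lemma pureH_of_floor (hδ : 0 < δ) (t : Tr (IL wd ht) w h k S)
    (hS : ∀ i ∈ S, (∃ n : ℕ, wd i = n * ρ) ∨ δ ≤ ht i) (h0 : ⌊h / δ⌋₊ = 0) : ∀ i ∈ S, ∃ n : ℕ, wd i = n * ρ := by
  intro i hi
  rcases hS i hi with h | h
  · exact h
  · have h1 := floor_zero hδ h0
    have h2 := (t.fits i hi).2
    linarith

lemma MX.absorbV (hρ : 0 < ρ) {w1 w2 : ℝ} {k1 m : ℕ} {S1 S2 : Finset ι} (hd : Disjoint S1 S2)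
    (hw : w1 + w2 ≤ w) (t1 : Tr (IL wd ht) w1 h k1 S1) (hV : ∀ i ∈ S1, δ ≤ ht i)
    (hp : ⌊w2 / ρ⌋₊ = ⌊w / ρ⌋₊) (c : MX wd ht ρ δ w2 h m S2) : MX wd ht ρ δ w h m (S1 ∪ S2) := by
  obtain ⟨x, y, A, B, R, hx, hy, h1, h2, hS, d1, d2, hA, hB, ⟨kA, tA⟩, ⟨kB, tB⟩, tR⟩ := c
  have n1 := t1.nonneg IL.nonneg'
  subst hS
  rw [Finset.disjoint_union_right] at hd
  refine ⟨w1 + x, y, S1 ∪ A, B, R, by linarith, hy, ?_, h2, ?_, ?_, d2, ?_, hB, ?_, ?_, ?_⟩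
  · rw [← hp]; linarith
  · rw [Finset.union_assoc]
  · rw [Finset.disjoint_union_left]; exact ⟨hd.2, d1⟩
  · intro i hi; rcases Finset.mem_union.1 hi with h | h
    exacts [hV i h, hA i h]
  · exact ⟨k1 + kA, .vc _ _ _ _ _ _ hd.1 rfl le_rfl le_rfl t1 tA⟩
  · exact ⟨kB, tB.mono IL.mono' (by linarith) le_rfl⟩
  · exact tR.mono PL.mono' (by linarith) le_rfl

lemma MX.absorbH (hρ : 0 < ρ) {h1 h2 : ℝ} {k1 m : ℕ} {S1 S2 : Finset ι} (hd : Disjoint S1 S2)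
    (hw : h1 + h2 ≤ h) (t1 : Tr (IL wd ht) w h1 k1 S1) (hH : ∀ i ∈ S1, ∃ n : ℕ, wd i = n * ρ)
    (c : MX wd ht ρ δ w h2 m S2) : MX wd ht ρ δ w h m (S1 ∪ S2) := by
  obtain ⟨x, y, A, B, R, hx, hy, e1, e2, hS, d1, d2, hA, hB, ⟨kA, tA⟩, ⟨kB, tB⟩, tR⟩ := c
  have n1 := t1.nonneg IL.nonneg'
  subst hS
  rw [Finset.disjoint_union_right, Finset.disjoint_union_right] at hd
  rw [Finset.disjoint_union_right] at d1
  refine ⟨x, h1 + y, A, S1 ∪ B, R, hx, by linarith, e1, by linarith, ?_, ?_, ?_, hA, ?_, ?_, ?_, ?_⟩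
  · ext i; simp only [Finset.mem_union]; tauto
  · rw [Finset.disjoint_union_right, Finset.disjoint_union_right]; exact ⟨⟨hd.1.symm, d1.1⟩, d1.2⟩
  · rw [Finset.disjoint_union_left]; exact ⟨hd.2.2, d2⟩
  · intro i hi; rcases Finset.mem_union.1 hi with h | h
    exacts [hH i h, hB i h]
  · exact ⟨kA, tA.mono IL.mono' le_rfl (by linarith)⟩
  · exact ⟨k1 + kB, .hc _ _ _ _ _ _ hd.2.1 rfl le_rfl le_rfl ((t1.shrink hρ hH).mono IL.mono' e1 le_rfl) tB⟩
  · exact tR.mono PL.mono' le_rfl (by linarith)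

lemma Tr.mixed (hwd : ∀ i, 0 < wd i) (hρ : 0 < ρ) (hδ : 0 < δ) (t : Tr (IL wd ht) w h k S) :
    (∀ i ∈ S, (∃ n : ℕ, wd i = n * ρ) ∨ δ ≤ ht i) →
    ∀ m : ℕ, ⌊w / ρ⌋₊ + ⌊h / δ⌋₊ ≤ m → MX wd ht ρ δ w h m S := by
  induction t with
  | @leaf w h k S hk hl =>
    intro hS m hm
    refine MX.ofLeaf hρ ⟨⟨k, .leaf hk hl⟩, ?_⟩
    obtain ⟨a, b, c, d⟩ := hl
    rcases card_le_one_cases c with rfl | ⟨x, rfl⟩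
    · left; simp
    · rcases hS x (by simp) with h | h
      · left; simpa using h
      · right; simpa using h
  | @vc w h k S w1 w2 k1 k2 S1 S2 hd hS' hw hk t1 t2 i1 i2 =>
    intro hS m hm
    have n1 := t1.nonneg IL.nonneg'
    have n2 := t2.nonneg IL.nonneg'
    subst hS'
    have hS1 := fun i (hi : i ∈ S1) => hS i (by simp [hi])
    have hS2 := fun i (hi : i ∈ S2) => hS i (by simp [hi])
    have hp := floor_add_le n1.1 n2.1 hρ hw
    by_cases z1 : ⌊w1 / ρ⌋₊ = 0
    · have hV := pureV_of_floor hwd hρ t1 hS1 z1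
      by_cases z2 : ⌊w2 / ρ⌋₊ = ⌊w / ρ⌋₊
      · exact MX.absorbV hρ hd hw t1 hV z2 (i2 hS2 m (by omega))
      · obtain ⟨m, rfl⟩ : ∃ m', m = m' + 1 := ⟨m - 1, by omega⟩
        refine MX.ofTree hρ (.vc w1 w2 1 _ S1 S2 hd rfl hw ?_ (.leaf le_rfl ⟨⟨_, t1⟩, Or.inr hV⟩)
          (i2 hS2 m (by omega)).tree)
        simp only [kap]; omega
    by_cases z1' : ⌊w2 / ρ⌋₊ = 0
    · have hV := pureV_of_floor hwd hρ t2 hS2 z1'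
      by_cases z2 : ⌊w1 / ρ⌋₊ = ⌊w / ρ⌋₊
      · rw [Finset.union_comm]
        exact MX.absorbV hρ hd.symm (by linarith) t2 hV z2 (i1 hS1 m (by omega))
      · obtain ⟨m, rfl⟩ : ∃ m', m = m' + 1 := ⟨m - 1, by omega⟩
        refine MX.ofTree hρ (.vc w1 w2 _ 1 S1 S2 hd rfl hw ?_ (i1 hS1 m (by omega)).tree
          (.leaf le_rfl ⟨⟨_, t2⟩, Or.inr hV⟩))
        simp only [kap]; omega
    obtain ⟨m, rfl⟩ : ∃ m', m = m' + 1 := ⟨m - 1, by omega⟩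
    refine MX.ofTree hρ (.vc w1 w2 _ _ S1 S2 hd rfl hw ?_ (i1 hS1 m (by omega)).tree
      (i2 hS2 m (by omega)).tree)
    simp only [kap]; omega
  | @hc w h k S h1 h2 k1 k2 S1 S2 hd hS' hw hk t1 t2 i1 i2 =>
    intro hS m hm
    have n1 := t1.nonneg IL.nonneg'
    have n2 := t2.nonneg IL.nonneg'
    subst hS'
    have hS1 := fun i (hi : i ∈ S1) => hS i (by simp [hi])
    have hS2 := fun i (hi : i ∈ S2) => hS i (by simp [hi])
    have hp := floor_add_le n1.2 n2.2 hδ hw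
    by_cases z1 : ⌊h1 / δ⌋₊ = 0
    · exact MX.absorbH hρ hd hw t1 (pureH_of_floor hδ t1 hS1 z1) (i2 hS2 m (by omega))
    by_cases z2 : ⌊h2 / δ⌋₊ = 0
    · rw [Finset.union_comm]
      exact MX.absorbH hρ hd.symm (by linarith) t2 (pureH_of_floor hδ t2 hS2 z2) (i1 hS1 m (by omega))
    obtain ⟨m, rfl⟩ : ∃ m', m = m' + 1 := ⟨m - 1, by omega⟩
    refine MX.ofTree hρ (.hc h1 h2 _ _ S1 S2 hd rfl hw ?_ (i1 hS1 m (by omega)).tree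
      (i2 hS2 m (by omega)).tree)
    simp only [kap]; omega

lemma kap_mono {m m' : ℕ} (h : m ≤ m') : kap m ≤ kap m' := by
  induction h with
  | refl => exact le_rfl
  | step _ ih => simp only [kap]; omega

end
end GK

namespace GK
section
variable {ι : Type} [DecidableEq ι]
set_option linter.unusedSectionVars false
set_option linter.unusedVariables false
variable {w h : ℝ} {k : ℕ} {S : Finset ι} {wd ht : ι → ℝ} {ρ δ : ℝ}

/-- total height of the items of type `g` -/
def dem (ht : ι → ℝ) (ty : ι → ℕ) (S : Finset ι) (g : ℕ) : ℝ := ∑ i ∈ S with ty i = g, ht i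

lemma dem_union {ty : ι → ℕ} {A B : Finset ι} (hd : Disjoint A B) (g : ℕ) :
    dem ht ty (A ∪ B) g = dem ht ty A g + dem ht ty B g := by
  unfold dem
  rw [Finset.filter_union, Finset.sum_union]
  exact Finset.disjoint_filter_filter hd

lemma dem_nonneg (hht : ∀ i, 0 < ht i) {ty : ι → ℕ} {A : Finset ι} (g : ℕ) : 0 ≤ dem ht ty A g :=
  Finset.sum_nonneg fun i _ => (hht i).le

def Conf (ht : ι → ℝ) (ty : ι → ℕ) (u : ℕ → ℝ) (w τ : ℝ) (S : Finset ι) : Prop :=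
  ∃ (J : Type) (_ : Fintype J) (t : J → ℝ) (c : J → List ℕ), (∀ j, 0 ≤ t j) ∧ ∑ j, t j = τ ∧
    (∀ j, ((c j).map u).sum ≤ w) ∧ (∀ j, ∀ g ∈ c j, ∃ i ∈ S, ty i = g) ∧
    ∀ g, dem ht ty S g ≤ ∑ j, t j * (c j).count g

lemma Tr.conf (hht : ∀ i, 0 < ht i) {ty : ι → ℕ} {u : ℕ → ℝ} (t : Tr (IL wd ht) w h k S) :
    (∀ i ∈ S, u (ty i) ≤ wd i) → Conf ht ty u w h S := by
  induction t with
  | @leaf w h k S hk hl =>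
    intro hS
    obtain ⟨a, b, c, d⟩ := hl
    rcases card_le_one_cases c with rfl | ⟨x, rfl⟩
    · exact ⟨Unit, inferInstance, fun _ => h, fun _ => [], fun _ => b, by simp, by simpa using a, by simp, by simp [dem]⟩
    · refine ⟨Unit, inferInstance, fun _ => h, fun _ => [ty x], fun _ => b, by simp, ?_, by simp, ?_⟩
      · intro _; simpa using (hS x (by simp)).trans (d x (by simp)).1
      · intro g
        have := (d x (by simp)).2
        by_cases hg : ty x = g
        · subst hg; simpa [dem, Finset.filter_singleton] using this
        · simp [dem, Finset.filter_singleton, hg]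
  | @vc w h k S w1 w2 k1 k2 S1 S2 hd hS' hw hk t1 t2 i1 i2 =>
    intro hS
    have n1 := t1.nonneg IL.nonneg'
    have n2 := t2.nonneg IL.nonneg'
    obtain ⟨J1, f1, x1, c1, a1, b1, e1, g1, d1⟩ := i1 fun i hi => hS i (by simp [hS', hi])
    obtain ⟨J2, f2, x2, c2, a2, b2, e2, g2, d2⟩ := i2 fun i hi => hS i (by simp [hS', hi])
    rcases n1.2.eq_or_lt with h0 | hpos
    · have hemp : S = ∅ := by
        rw [Finset.eq_empty_iff_forall_notMem]
        intro i hi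
        rw [hS', Finset.mem_union] at hi
        have := hht i
        rcases hi with hi | hi
        · linarith [(t1.fits i hi).2]
        · linarith [(t2.fits i hi).2]
      rw [hemp]
      exact ⟨Unit, inferInstance, fun _ => h, fun _ => [], fun _ => n1.2, by simp, by simp; linarith, by simp, by simp [dem]⟩
    · refine ⟨J1 × J2, inferInstance, fun j => x1 j.1 * x2 j.2 / h, fun j => c1 j.1 ++ c2 j.2, ?_, ?_, ?_, ?_, ?_⟩
      · intro j; exact div_nonneg (mul_nonneg (a1 _) (a2 _)) n1.2
      · rw [← Finset.sum_div, Fintype.sum_prod_type]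
        simp only [← Finset.mul_sum, b2]
        rw [← Finset.sum_mul, b1]; field_simp
      · intro j
        have h1 := e1 j.1
        have h2 := e2 j.2
        simp only [List.map_append, List.sum_append]; linarith
      · intro j g hg
        rcases List.mem_append.1 hg with hg | hg
        · obtain ⟨i, hi, e⟩ := g1 _ g hg; exact ⟨i, by simp [hS', hi], e⟩
        · obtain ⟨i, hi, e⟩ := g2 _ g hg; exact ⟨i, by simp [hS', hi], e⟩
      · intro g
        rw [hS', dem_union hd]
        refine (add_le_add (d1 g) (d2 g)).trans (le_of_eq ?_)
        have : ∀ j : J1 × J2, x1 j.1 * x2 j.2 / h * ((c1 j.1 ++ c2 j.2).count g : ℝ)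
            = (x1 j.1 * (c1 j.1).count g) * x2 j.2 / h + x1 j.1 * (x2 j.2 * (c2 j.2).count g) / h := by
          intro j; rw [List.count_append]; push_cast; ring
        rw [Finset.sum_congr rfl fun j _ => this j, Finset.sum_add_distrib, ← Finset.sum_div, ← Finset.sum_div,
          Fintype.sum_prod_type, Fintype.sum_prod_type]
        simp only [← Finset.mul_sum]
        rw [← Finset.sum_mul, ← Finset.sum_mul, b1, b2]
        field_simp
  | @hc w h k S h1 h2 k1 k2 S1 S2 hd hS' hw hk t1 t2 i1 i2 =>
    intro hS
    have n1 := t1.nonneg IL.nonneg'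
    obtain ⟨J1, f1, x1, c1, a1, b1, e1, g1, d1⟩ := i1 fun i hi => hS i (by simp [hS', hi])
    obtain ⟨J2, f2, x2, c2, a2, b2, e2, g2, d2⟩ := i2 fun i hi => hS i (by simp [hS', hi])
    refine ⟨(J1 ⊕ J2) ⊕ Unit, inferInstance, Sum.elim (Sum.elim x1 x2) (fun _ => h - h1 - h2),
      Sum.elim (Sum.elim c1 c2) (fun _ => []), ?_, ?_, ?_, ?_, ?_⟩
    · rintro ((j | j) | j)
      · exact a1 j
      · exact a2 j
      · simp; linarith
    · simp [b1, b2]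
    · rintro ((j | j) | j)
      · exact e1 j
      · exact e2 j
      · simpa using n1.1
    · rintro ((j | j) | j) g hg
      · obtain ⟨i, hi, e⟩ := g1 _ g hg; exact ⟨i, by simp [hS', hi], e⟩
      · obtain ⟨i, hi, e⟩ := g2 _ g hg; exact ⟨i, by simp [hS', hi], e⟩
      · simp at hg
    · intro g
      rw [hS', dem_union hd]
      simpa using add_le_add (d1 g) (d2 g)

lemma lists_finite (n m : ℕ) : {l : List ℕ | l.length ≤ m ∧ ∀ g ∈ l, g < n}.Finite := by
  refine ((List.finite_length_le (Fin n) m).image (List.map Fin.val)).subset ?_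
  rintro l ⟨h1, h2⟩
  refine ⟨l.pmap (fun g hg => ⟨g, hg⟩) h2, by simpa using h1, ?_⟩
  rw [List.map_pmap]; simp

noncomputable def Ls (n m : ℕ) : Finset (List ℕ) := (lists_finite n m).toFinset

lemma mem_Ls {n m : ℕ} {l : List ℕ} : l ∈ Ls n m ↔ l.length ≤ m ∧ ∀ g ∈ l, g < n := by
  simp [Ls]

/-- one slab -/
lemma pack_slab (hht : ∀ i, 0 < ht i) {ty : ι → ℕ} {u : ℕ → ℝ} (hu : ∀ g, 0 ≤ u g) (t : ℝ) (ht0 : 0 ≤ t)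
    (f : ℕ → ℝ) (hf : ∀ g, 0 ≤ f g) (c : List ℕ) : ∀ S : Finset ι, (∀ i ∈ S, wd i ≤ u (ty i)) →
    (∀ g, dem ht ty S g ≤ f g + t * c.count g) →
    ∃ P R : Finset ι, Disjoint P R ∧ P ∪ R ⊆ S ∧ (S \ (P ∪ R)).card ≤ c.length ∧
      Tr (KL wd ht) ((c.map u).sum) t (c.length + 1) P ∧ ∀ g, dem ht ty R g ≤ f g := by
  induction c with
  | nil =>
    intro S hS hd
    exact ⟨∅, S, by simp, by simp, by simp, .leaf (by simp) ⟨by simp, ht0, Or.inl (by simpa using ht0)⟩,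
      by simpa using hd⟩
  | cons g c ih =>
    intro S hS hd
    have hg := hd g
    simp only [List.count_cons_self] at hg
    push_cast at hg
    obtain ⟨P0, D0, R0, q1, q2, q3, q4, q5, q6, q7⟩ := split2 ht hht (S.filter fun i => ty i = g) t
      (f g + t * c.count g) ht0 (by have := hf g; positivity)
      (by unfold dem at hg; linarith)
    have hR0 : R0 ⊆ S.filter fun i => ty i = g := by rw [q4]; exact Finset.subset_union_right
    have hP0 : P0 ⊆ S.filter fun i => ty i = g := by rw [q4, Finset.union_assoc]; exact Finset.subset_union_left
    have hS1 : R0 ∪ (S.filter fun i => ¬ ty i = g) ⊆ S := by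
      intro i hi
      rcases Finset.mem_union.1 hi with hi | hi
      · exact (Finset.mem_filter.1 (hR0 hi)).1
      · exact (Finset.mem_filter.1 hi).1
    obtain ⟨P, R, p1, p2, p3, p4, p5⟩ := ih (R0 ∪ (S.filter fun i => ¬ ty i = g))
      (fun i hi => hS i (hS1 hi)) (by
        intro g'
        by_cases hgg : g' = g
        · subst hgg
          refine le_trans (le_of_eq ?_) q7
          unfold dem
          apply Finset.sum_congr _ (fun _ _ => rfl)
          ext i
          have := @hR0 i
          simp only [Finset.mem_filter, Finset.mem_union] at *
          tauto
        · have := hd g'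
          rw [List.count_cons_of_ne (Ne.symm hgg)] at this
          refine le_trans (le_of_eq ?_) this
          unfold dem
          apply Finset.sum_congr _ (fun _ _ => rfl)
          ext i
          have := @hR0 i
          simp only [Finset.mem_filter, Finset.mem_union] at *
          constructor
          · rintro ⟨a | a, b⟩
            · exact ⟨(this a).1, b⟩
            · exact ⟨a.1, b⟩
          · rintro ⟨a, b⟩
            exact ⟨Or.inr ⟨a, by rw [b]; exact hgg⟩, b⟩)
    have hdis : Disjoint P0 (R0 ∪ (S.filter fun i => ¬ ty i = g)) := by
      rw [Finset.disjoint_union_right]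
      refine ⟨q2, ?_⟩
      rw [Finset.disjoint_left]
      intro i h1 h2
      exact (Finset.mem_filter.1 h2).2 (Finset.mem_filter.1 (hP0 h1)).2
    refine ⟨P0 ∪ P, R, ?_, ?_, ?_, ?_, p5⟩
    · rw [Finset.disjoint_union_left]
      exact ⟨hdis.mono_right (Finset.subset_union_right.trans p2), p1⟩
    · rw [Finset.union_assoc]
      exact Finset.union_subset (hP0.trans (Finset.filter_subset _ _)) (p2.trans hS1)
    · have : S \ (P0 ∪ P ∪ R) ⊆ D0 ∪ ((R0 ∪ (S.filter fun i => ¬ ty i = g)) \ (P ∪ R)) := by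
        intro i
        have h4 : i ∈ (S.filter fun i => ty i = g) ↔ i ∈ P0 ∪ D0 ∪ R0 := by rw [q4]
        simp only [Finset.mem_sdiff, Finset.mem_union, Finset.mem_filter] at *
        tauto
      have := (Finset.card_le_card this).trans (Finset.card_union_le _ _)
      simp only [List.length_cons]; omega
    · refine .vc (u g) ((c.map u).sum) 1 (c.length + 1) P0 P (hdis.mono_right (Finset.subset_union_left.trans p2)) rfl
        (by simp) (by simp; omega) (.leaf le_rfl ⟨hu g, ht0, Or.inl ⟨?_, q6⟩⟩) p4
      intro i hi
      have := Finset.mem_filter.1 (hP0 hi)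
      rw [← this.2]; exact hS i this.1

lemma pack_slabs (hht : ∀ i, 0 < ht i) {ty : ι → ℕ} {u : ℕ → ℝ} (hu : ∀ g, 0 ≤ u g) (hw : 0 ≤ w) (m : ℕ)
    (X : List ℕ → ℝ) (hX : ∀ c, 0 ≤ X c) (F : Finset (List ℕ)) : ∀ S : Finset ι,
    (∀ c ∈ F, c.length ≤ m ∧ (c.map u).sum ≤ w) → (∀ i ∈ S, wd i ≤ u (ty i)) →
    (∀ g, dem ht ty S g ≤ ∑ c ∈ F, X c * c.count g) →
    ∃ S' ⊆ S, (S \ S').card ≤ F.card * m ∧ Tr (KL wd ht) w (∑ c ∈ F, X c) (F.card * (m + 1) + 1) S' := by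
  induction F using Finset.induction_on with
  | empty =>
    intro S _ _ hd
    have : S = ∅ := by
      rw [Finset.eq_empty_iff_forall_notMem]
      intro i hi
      have h1 := hd (ty i)
      simp only [Finset.sum_empty] at h1
      have : ht i ≤ dem ht ty S (ty i) :=
        Finset.single_le_sum (f := ht) (fun i _ => (hht i).le) (by simp [hi])
      linarith [hht i]
    subst this
    exact ⟨∅, by simp, by simp, .leaf (by simp) ⟨hw, by simp, by simp⟩⟩
  | insert c F hc ih =>
    intro S hF hS hd
    obtain ⟨P, R, p1, p2, p3, p4, p5⟩ := pack_slab (wd := wd) hht hu (X c) (hX c) (fun g => ∑ c ∈ F, X c * c.count g)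
      (fun g => Finset.sum_nonneg fun c _ => mul_nonneg (hX c) (Nat.cast_nonneg _)) c S hS (by
        intro g; have := hd g; rw [Finset.sum_insert hc] at this; linarith)
    obtain ⟨S', s1, s2, s3⟩ := ih R (fun c hc => hF c (by simp [hc]))
      (fun i hi => hS i (p2 (by simp [hi]))) p5
    have hcl := (hF c (by simp)).1
    refine ⟨P ∪ S', ?_, ?_, ?_⟩
    · exact (Finset.union_subset_union le_rfl s1).trans p2
    · have : S \ (P ∪ S') ⊆ (S \ (P ∪ R)) ∪ (R \ S') := by
        intro i; simp only [Finset.mem_sdiff, Finset.mem_union]; tauto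
      have := (Finset.card_le_card this).trans (Finset.card_union_le _ _)
      rw [Finset.card_insert_of_notMem hc, add_mul]; omega
    · rw [Finset.sum_insert hc, Finset.card_insert_of_notMem hc]
      refine .hc _ _ (c.length + 1) _ P S' (p1.mono_right s1) rfl le_rfl ?_
        (p4.mono KL.mono' (hF c (by simp)).2 le_rfl) s3
      rw [add_mul]; omega

noncomputable def Kc (n m : ℕ) : ℕ := (Ls n m).card * (m + 1) + 1

lemma config_pack (hht : ∀ i, 0 < ht i) {ty ty' : ι → ℕ} {u : ℕ → ℝ} (hu : ∀ g, 0 ≤ u g) {β : ℝ} (hβ : 0 < β)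
    {n m : ℕ} (hm : w / β ≤ m) (t : Tr (IL wd ht) w h k S)
    (hS : ∀ i ∈ S, u (ty i) ≤ wd i ∧ β ≤ u (ty i) ∧ ty i < n) (S2 : Finset ι)
    (hS2 : ∀ i ∈ S2, wd i ≤ u (ty' i)) (hd : ∀ g, dem ht ty' S2 g ≤ dem ht ty S g) :
    ∃ S' ⊆ S2, (S2 \ S').card ≤ Kc n m ∧ Tr (KL wd ht) w h (Kc n m) S' := by
  have nn := t.nonneg IL.nonneg'
  obtain ⟨J, fJ, x, c, a, b, e, g', d⟩ := t.conf hht (ty := ty) (u := u) (fun i hi => (hS i hi).1)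
  have hc : ∀ j, c j ∈ Ls n m := by
    intro j
    rw [mem_Ls]
    constructor
    · have h1 : ((c j).length : ℝ) * β ≤ ((c j).map u).sum := by
        have := List.card_nsmul_le_sum ((c j).map u) β (by
          intro y hy
          obtain ⟨g, hg, rfl⟩ := List.mem_map.1 hy
          obtain ⟨i, hi, rfl⟩ := g' j g hg
          exact (hS i hi).2.1)
        simpa using this
      have h2 := h1.trans (e j)
      rw [← le_div_iff₀ hβ] at h2
      exact_mod_cast h2.trans hm
    · intro g hg
      obtain ⟨i, hi, rfl⟩ := g' j g hg
      exact (hS i hi).2.2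
  set F := (Ls n m).filter fun c => (c.map u).sum ≤ w with hF
  have hcF : ∀ j, c j ∈ F := fun j => Finset.mem_filter.2 ⟨hc j, e j⟩
  have hFc : F.card ≤ (Ls n m).card := Finset.card_filter_le _ _
  obtain ⟨S', s1, s2, s3⟩ := pack_slabs (wd := wd) hht hu nn.1 m (fun l => ∑ j with c j = l, x j)
    (fun l => Finset.sum_nonneg fun j _ => a j) F S2 (fun l hl => by
      have := Finset.mem_filter.1 hl
      exact ⟨(mem_Ls.1 this.1).1, this.2⟩) hS2 (by
      intro g
      refine (hd g).trans ((d g).trans (le_of_eq ?_))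
      rw [← Finset.sum_fiberwise_of_maps_to (s := Finset.univ) (t := F) (g := c) (fun j _ => hcF j)]
      apply Finset.sum_congr rfl
      intro l _
      rw [Finset.sum_mul]
      apply Finset.sum_congr rfl
      intro j hj
      rw [(Finset.mem_filter.1 hj).2])
  rw [Finset.sum_fiberwise_of_maps_to (s := Finset.univ) (t := F) (g := c) (fun j _ => hcF j), b] at s3
  refine ⟨S', s1, s2.trans ?_, s3.monok ?_⟩
  · unfold Kc
    exact (Nat.mul_le_mul hFc (Nat.le_succ m)).trans (Nat.le_succ _)
  · unfold Kc
    exact Nat.succ_le_succ (Nat.mul_le_mul_right _ hFc)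

/-- exact packing of horizontal items with rounded widths -/
lemma pureH_exact (hwd : ∀ i, 0 < wd i) (hht : ∀ i, 0 < ht i) (hρ : 0 < ρ) {m : ℕ} (hm : w / ρ ≤ m)
    (t : Tr (IL wd ht) w h k S) (hS : ∀ i ∈ S, ∃ n : ℕ, wd i = n * ρ) :
    ∃ S' ⊆ S, (S \ S').card ≤ Kc (m + 1) m ∧ Tr (KL wd ht) w h (Kc (m + 1) m) S' := by
  choose! ty hty using hS
  refine config_pack (ty := ty) (ty' := ty) (u := fun g => g * ρ) hht (fun g => by positivity) hρ hm t ?_ S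
    (fun i hi => (hty i hi).le) (fun g => le_rfl)
  intro i hi
  have h1 := hty i hi
  have h2 := hwd i
  have h3 := (t.fits i hi).1
  refine ⟨h1.ge, ?_, ?_⟩
  · rcases Nat.eq_zero_or_pos (ty i) with h0 | hp
    · rw [h1, h0] at h2; simp at h2
    · have : (1 : ℝ) ≤ ty i := by exact_mod_cast hp
      show ρ ≤ (ty i : ℝ) * ρ
      nlinarith
  · rw [h1, ← le_div_iff₀ hρ] at h3
    have := h3.trans hm
    have : ty i ≤ m := by exact_mod_cast this
    omega

lemma grouping (key f : ι → ℝ) (hf : ∀ i, 0 < f i) (t0 : ℝ) (ht0 : 0 < t0) (n : ℕ) : ∀ S : Finset ι,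
    ∑ i ∈ S, f i ≤ n * t0 →
    ∃ (ty : ι → ℕ) (D : Finset ι), D ⊆ S ∧ D.card ≤ n ∧ (∀ i ∈ S, ty i < n) ∧
      (∀ g, dem f ty (S \ D) g ≤ t0) ∧ (∀ i ∈ S, ∀ j ∈ S, ty i < ty j → key j ≤ key i) ∧
      (∀ j ∈ S, ∀ g < ty j, t0 ≤ dem f ty S g) := by
  induction n with
  | zero =>
    intro S hS
    have : S = ∅ := by
      rw [Finset.eq_empty_iff_forall_notMem]
      intro i hi
      have : f i ≤ ∑ i ∈ S, f i := Finset.single_le_sum (f := f) (fun i _ => (hf i).le) hi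
      simp at hS
      linarith [hf i]
    subst this
    exact ⟨fun _ => 0, ∅, by simp, by simp, by simp, by intro g; simpa [dem] using ht0.le, by simp, by simp⟩
  | succ n ih =>
    intro S hS
    obtain ⟨P, D, R, h1, h2, h3, h4, h5, h6, h7, h8⟩ := split key f hf S t0 ht0.le
    have hsum : ∑ i ∈ S, f i = ∑ i ∈ P, f i + ∑ i ∈ D, f i + ∑ i ∈ R, f i := by
      rw [h4, Finset.sum_union (by rw [Finset.disjoint_union_left]; exact ⟨h2, h3⟩), Finset.sum_union h1]
    obtain ⟨ty, D', a1, a2, a3, a4, a5, a6⟩ := ih R (by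
      rcases R.eq_empty_or_nonempty with rfl | hR
      · simp; positivity
      · have := h7 hR
        push_cast at hS; linarith)
    have dPR : Disjoint (P ∪ D) R := by rw [Finset.disjoint_union_left]; exact ⟨h2, h3⟩
    have hPD : ∀ i ∈ P ∪ D, i ∉ R := fun i hi => Finset.disjoint_left.1 dPR hi
    set ty' : ι → ℕ := fun i => if i ∈ R then ty i + 1 else 0 with hty'
    have tyR : ∀ i ∈ R, ty' i = ty i + 1 := fun i hi => by simp [hty', hi]
    have tyN : ∀ i, i ∉ R → ty' i = 0 := fun i hi => by simp [hty', hi]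
    have hmem : ∀ i, i ∈ S ↔ i ∈ P ∪ D ∨ i ∈ R := fun i => by rw [h4, Finset.mem_union]
    refine ⟨ty', D ∪ D', ?_, ?_, ?_, ?_, ?_, ?_⟩
    · intro i hi
      rw [hmem]
      rcases Finset.mem_union.1 hi with h | h
      · left; simp [h]
      · right; exact a1 h
    · have := Finset.card_union_le D D'; omega
    · intro i hi
      by_cases hiR : i ∈ R
      · rw [tyR i hiR]; have := a3 i hiR; omega
      · rw [tyN i hiR]; omega
    · intro g
      rcases Nat.eq_zero_or_pos g with rfl | hg
      · refine le_trans (Finset.sum_le_sum_of_subset_of_nonneg ?_ (fun i _ _ => (hf i).le)) h6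
        intro i hi
        rw [Finset.mem_filter, Finset.mem_sdiff, hmem] at hi
        simp only [Finset.mem_union, not_or] at hi
        obtain ⟨⟨hi1, hi2, hi3⟩, hi4⟩ := hi
        rcases hi1 with (hi1 | hi1) | hi1
        · exact hi1
        · exact absurd hi1 hi2
        · rw [tyR i hi1] at hi4; omega
      · obtain ⟨g, rfl⟩ : ∃ g', g = g' + 1 := ⟨g - 1, by omega⟩
        refine le_trans (Finset.sum_le_sum_of_subset_of_nonneg ?_ (fun i _ _ => (hf i).le)) (a4 g)
        intro i hi
        rw [Finset.mem_filter, Finset.mem_sdiff] at hi ⊢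
        simp only [Finset.mem_union, not_or] at hi
        by_cases hiR : i ∈ R
        · rw [tyR i hiR] at hi
          exact ⟨⟨hiR, hi.1.2.2⟩, by omega⟩
        · rw [tyN i hiR] at hi; omega
    · intro i hi j hj hij
      by_cases hjR : j ∈ R
      · by_cases hiR : i ∈ R
        · rw [tyR i hiR, tyR j hjR] at hij
          exact a5 i hiR j hjR (by omega)
        · exact h8 i (((hmem i).1 hi).resolve_right hiR) j hjR
      · rw [tyN j hjR] at hij; omega
    · intro j hj g hg
      by_cases hjR : j ∈ R
      · rw [tyR j hjR] at hg
        rcases Nat.eq_zero_or_pos g with rfl | hg'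
        · refine (h7 ⟨j, hjR⟩).trans ?_
          rw [← Finset.sum_union h1]
          refine Finset.sum_le_sum_of_subset_of_nonneg ?_ (fun i _ _ => (hf i).le)
          intro i hi
          rw [Finset.mem_filter, hmem]
          exact ⟨Or.inl hi, tyN i (hPD i hi)⟩
        · obtain ⟨g, rfl⟩ : ∃ g', g = g' + 1 := ⟨g - 1, by omega⟩
          refine (a6 j hjR g (by omega)).trans ?_
          refine Finset.sum_le_sum_of_subset_of_nonneg ?_ (fun i _ _ => (hf i).le)
          intro i hi
          rw [Finset.mem_filter] at hi ⊢
          exact ⟨(hmem i).2 (Or.inr hi.1), by rw [tyR i hi.1, hi.2]⟩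
      · rw [tyN j hjR] at hg; omega

/-- packing of horizontal items of width at least `δ` in a box stretched vertically -/
lemma pureH_stretch (hwd : ∀ i, 0 < wd i) (hht : ∀ i, 0 < ht i) (hδ : 0 < δ) {η : ℝ} (hη : 0 < η) {n m : ℕ} (hm : w / δ ≤ m)
    (hn : w / (δ * η) ≤ n) (t : Tr (IL wd ht) w h k S) (hS : ∀ i ∈ S, δ ≤ wd i) :
    ∃ S' ⊆ S, (S \ S').card ≤ n + Kc n m ∧ Tr (KL wd ht) w ((1 + η) * h) (Kc n m + 1) S' := by
  have nn := t.nonneg IL.nonneg'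
  rcases nn.2.eq_or_lt with h0 | hpos
  · have hemp : S = ∅ := by
      rw [Finset.eq_empty_iff_forall_notMem]
      intro i hi
      linarith [hht i, (t.fits i hi).2]
    exact ⟨∅, by simp, by simp [hemp], .leaf (by omega) ⟨nn.1, by positivity, by simp; left; positivity⟩⟩
  have hsum : ∑ i ∈ S, ht i ≤ n * (η * h) := by
    have h1 := t.area hwd hht
    have h2 : ∑ i ∈ S, δ * ht i ≤ ∑ i ∈ S, wd i * ht i :=
      Finset.sum_le_sum fun i hi => mul_le_mul_of_nonneg_right (hS i hi) (hht i).le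
    rw [← Finset.mul_sum] at h2
    rw [div_le_iff₀ (by positivity)] at hn
    have h3 : w * h ≤ n * (δ * η) * h := mul_le_mul_of_nonneg_right hn hpos.le
    have h4 : δ * ∑ i ∈ S, ht i ≤ δ * (n * (η * h)) := by nlinarith
    exact le_of_mul_le_mul_left h4 hδ
  have ht0 : 0 < η * h := by positivity
  obtain ⟨ty, D, a1, a2, a3, a4, a5, a6⟩ := grouping wd ht hht (η * h) ht0 n S hsum
  classical
  set u : ℕ → ℝ := fun g => if hg : (S.filter fun i => ty i = g).Nonempty then
    (S.filter fun i => ty i = g).inf' hg wd else 0 with hu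
  have hu1 : ∀ g, 0 ≤ u g := by
    intro g
    simp only [hu]
    split_ifs with hg
    · exact (Finset.le_inf'_iff _ _).2 fun i _ => (hwd i).le
    · exact le_rfl
  have hu2 : ∀ i ∈ S, u (ty i) ≤ wd i ∧ δ ≤ u (ty i) ∧ ty i < n := by
    intro i hi
    have hm : i ∈ S.filter fun j => ty j = ty i := by simp [hi]
    have hg : (S.filter fun j => ty j = ty i).Nonempty := ⟨i, hm⟩
    have e : u (ty i) = (S.filter fun j => ty j = ty i).inf' hg wd := by simp only [hu]; rw [dif_pos hg]
    rw [e]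
    exact ⟨Finset.inf'_le _ hm, (Finset.le_inf'_iff _ _).2 fun j hj => hS j (Finset.mem_filter.1 hj).1, a3 i hi⟩
  have hu3 : ∀ i ∈ S, ∀ g, ty i = g + 1 → wd i ≤ u g := by
    intro i hi g hg
    have hne : (S.filter fun j => ty j = g).Nonempty := by
      by_contra hc
      rw [Finset.not_nonempty_iff_eq_empty] at hc
      have := a6 i hi g (by omega)
      rw [dem, hc] at this
      simp at this
      linarith
    have e : u g = (S.filter fun j => ty j = g).inf' hne wd := by simp only [hu]; rw [dif_pos hne]
    rw [e]
    refine (Finset.le_inf'_iff _ _).2 fun j hj => ?_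
    have := Finset.mem_filter.1 hj
    exact a5 j this.1 i hi (by omega)
  obtain ⟨S', s1, s2, s3⟩ := config_pack (ty := ty) (ty' := fun i => ty i - 1) (u := u) hht hu1 hδ hm t hu2
    ((S \ D).filter fun i => 1 ≤ ty i) (by
      intro i hi
      rw [Finset.mem_filter, Finset.mem_sdiff] at hi
      exact hu3 i hi.1.1 (ty i - 1) (by omega)) (by
      intro g
      rcases (((S \ D).filter fun i => ty i = g + 1)).eq_empty_or_nonempty with he | ⟨j, hj⟩
      · refine le_trans (le_of_eq ?_) (dem_nonneg hht g)
        refine Finset.sum_eq_zero fun i hi => ?_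
        have : i ∈ (S \ D).filter fun i => ty i = g + 1 := by
          simp only [Finset.mem_filter] at hi ⊢
          exact ⟨hi.1.1, by omega⟩
        rw [he] at this; simp at this
      · rw [Finset.mem_filter, Finset.mem_sdiff] at hj
        refine le_trans ?_ ((a4 (g + 1)).trans (a6 j hj.1.1 g (by omega)))
        refine Finset.sum_le_sum_of_subset_of_nonneg ?_ (fun i _ _ => (hht i).le)
        intro i hi
        simp only [Finset.mem_filter] at hi ⊢
        exact ⟨hi.1.1, by omega⟩)
  set P0 := (S \ D).filter fun i => ty i = 0 with hP0
  have hd : Disjoint P0 S' := by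
    rw [Finset.disjoint_left]
    intro i h1 h2
    have h3 := s1 h2
    rw [hP0] at h1
    rw [Finset.mem_filter] at h1 h3
    omega
  refine ⟨P0 ∪ S', ?_, ?_, ?_⟩
  · intro i hi
    rcases Finset.mem_union.1 hi with hi | hi
    · exact (Finset.mem_sdiff.1 (Finset.mem_filter.1 hi).1).1
    · exact (Finset.mem_sdiff.1 (Finset.mem_filter.1 (s1 hi)).1).1
  · have : S \ (P0 ∪ S') ⊆ D ∪ (((S \ D).filter fun i => 1 ≤ ty i) \ S') := by
      intro i hi
      simp only [hP0, Finset.mem_sdiff, Finset.mem_union, Finset.mem_filter, not_or, not_and] at hi ⊢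
      by_cases hD : i ∈ D
      · exact Or.inl hD
      · have := hi.2.1 ⟨hi.1, hD⟩
        exact Or.inr ⟨⟨⟨hi.1, hD⟩, by omega⟩, hi.2.2⟩
    have := (Finset.card_le_card this).trans (Finset.card_union_le _ _)
    omega
  · refine .hc (η * h) h 1 (Kc n m) P0 S' hd rfl (by linarith) (by omega) (.leaf le_rfl ⟨nn.1, ht0.le, Or.inl ⟨?_, a4 0⟩⟩) s3
    intro i hi
    exact (t.fits i (Finset.mem_sdiff.1 (Finset.mem_filter.1 hi).1).1).1

end
end GK

namespace GK
section
variable {ι : Type} [DecidableEq ι]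
set_option linter.unusedSectionVars false
set_option linter.unusedVariables false
variable {w h : ℝ} {k : ℕ} {S : Finset ι} {wd ht : ι → ℝ} {ρ δ : ℝ}

lemma aug (δ η : ℝ) (hδ : 0 < δ) (hη : 0 < η) : ∃ K : ℕ, ∀ (ι : Type) [DecidableEq ι] (wd ht : ι → ℝ)
    (S : Finset ι) (w h : ℝ) (k : ℕ), (∀ i, 0 < wd i) → (∀ i, 0 < ht i) → w ≤ 1 → h ≤ 1 →
    (∀ i ∈ S, δ ≤ wd i ∨ δ ≤ ht i) → Tr (IL wd ht) w h k S →
    ∃ S' ⊆ S, (S \ S').card ≤ K ∧ Tr (KL wd ht) ((1 + η) * w) h K S' := by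
  set e := min η 1 / 3 with he
  have he0 : 0 < e := by positivity
  have he1 : e ≤ 1 / 3 := by rw [he]; have := min_le_right η 1; linarith
  have he3 : 3 * e ≤ η := by rw [he]; have := min_le_left η 1; linarith
  set ρ := δ * e with hρdef
  have hρ : 0 < ρ := by positivity
  set m0 := ⌊2 / ρ⌋₊ + ⌊1 / δ⌋₊ with hm0
  set m1 := ⌈2 / ρ⌉₊ with hm1
  set m2 := ⌈1 / δ⌉₊ with hm2
  set n2 := ⌈1 / (δ * e)⌉₊ with hn2
  set d := Kc (m1 + 1) m1 + (n2 + Kc n2 m2) + 1 with hd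
  refine ⟨(kap m0 + 2) * d, ?_⟩
  intro ι _ wd ht S w h k hwd hht hw hh hS t
  have nn := t.nonneg IL.nonneg'
  set wd' : ι → ℝ := fun i => if δ ≤ wd i then ⌈wd i / ρ⌉₊ * ρ else wd i with hwd'
  have hle : ∀ i, wd i ≤ wd' i := by
    intro i
    simp only [hwd']
    split_ifs with h
    · exact (div_le_iff₀ hρ).1 (Nat.le_ceil _)
    · exact le_rfl
  have hle2 : ∀ i, wd' i ≤ (1 + e) * wd i := by
    intro i
    simp only [hwd']
    split_ifs with h
    · have h1 := (Nat.ceil_lt_add_one (div_nonneg (hwd i).le hρ.le)).le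
      have h2 := mul_le_mul_of_nonneg_right h1 hρ.le
      rw [add_mul, div_mul_cancel₀ _ hρ.ne'] at h2
      refine h2.trans ?_
      rw [hρdef]; nlinarith
    · nlinarith [hwd i]
  have t1 : Tr (IL wd' ht) ((1 + e) * w) (1 * h) k S := t.map (1 + e) 1 (by positivity) zero_le_one (by
    rintro w h S ⟨a, b, c, d⟩
    refine ⟨by positivity, by simpa using b, c, fun i hi => ⟨?_, by simpa using (d i hi).2⟩⟩
    exact (hle2 i).trans (mul_le_mul_of_nonneg_left (d i hi).1 (by positivity)))
  rw [one_mul] at t1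
  have hW2 : (1 + e) * w ≤ 2 := by nlinarith
  have t2 := (t1.mixed (fun i => (hwd i).trans_le (hle i)) hρ hδ (by
      intro i hi
      by_cases hc : δ ≤ wd i
      · left; exact ⟨⌈wd i / ρ⌉₊, by simp only [hwd', if_pos hc]⟩
      · right; exact (hS i hi).resolve_left hc) m0 (by
      apply add_le_add <;> apply Nat.floor_le_floor
      · exact div_le_div_of_nonneg_right hW2 hρ.le
      · exact div_le_div_of_nonneg_right hh hδ.le)).tree
  obtain ⟨S', s1, s2, s3⟩ := Tr.bind (L' := KL wd' ht) (1 + e) (by positivity) d d t2 PL.nonneg' 2 1 hW2 hh (by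
    rintro w h S hP hw hh
    have np := PL.nonneg' _ _ _ hP
    obtain ⟨⟨k, tp⟩, hp | hp⟩ := hP
    · obtain ⟨S', a1, a2, a3⟩ := pureH_exact (fun i => (hwd i).trans_le (hle i)) hht hρ (m := m1)
        ((div_le_div_of_nonneg_right hw hρ.le).trans (Nat.le_ceil _)) tp hp
      exact ⟨S', a1, a2.trans (by omega), (a3.mono KL.mono' (by nlinarith) le_rfl).monok (by omega)⟩
    · obtain ⟨S', a1, a2, a3⟩ := pureH_stretch hht (fun i => (hwd i).trans_le (hle i)) hδ he0 (m := m2) (n := n2)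
        ((div_le_div_of_nonneg_right hh hδ.le).trans (Nat.le_ceil _))
        ((div_le_div_of_nonneg_right hh (by positivity)).trans (Nat.le_ceil _)) (tp.swap IL.swap') hp
      exact ⟨S', a1, a2.trans (by omega), (a3.swap KL.swap').monok (by omega)⟩)
  refine ⟨S', s1, s2, ?_⟩
  have t3 : Tr (KL wd ht) ((1 + e) * ((1 + e) * w)) h ((kap m0 + 2) * d) S' := s3.weaken (by
    rintro w h S ⟨a, b, c⟩
    refine ⟨a, b, c.imp ?_ ?_⟩
    · exact fun d => ⟨fun i hi => (hle i).trans (d.1 i hi), d.2⟩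
    · exact fun d => ⟨d.1, (Finset.sum_le_sum fun i _ => hle i).trans d.2⟩)
  refine t3.mono KL.mono' ?_ le_rfl
  rw [← mul_assoc]
  exact mul_le_mul_of_nonneg_right (by nlinarith) nn.1

/-- Next-fit-decreasing-height. -/
lemma nfdh (hwd : ∀ i, 0 < wd i) (hht : ∀ i, 0 < ht i) (a μ : ℝ) (hμ : 0 < μ) (ha : μ < a) : ∀ (n : ℕ) (S : Finset ι) (b m : ℝ),
    S.card ≤ n → (∀ i ∈ S, wd i ≤ μ) → (∀ i ∈ S, ht i ≤ m) → 0 ≤ m → m ≤ b →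
    ∑ i ∈ S, wd i * ht i ≤ (a - μ) * (b - m) → ∃ k, Tr (IL wd ht) a b k S := by
  have shelf : ∀ (P : Finset ι) (a m : ℝ), 0 ≤ m → (∀ i ∈ P, ht i ≤ m) → ∑ i ∈ P, wd i ≤ a → ∃ k, Tr (IL wd ht) a m k P := by
    intro P
    induction P using Finset.induction_on with
    | empty => intro a m hm _ hs; exact ⟨1, .leaf le_rfl ⟨by simpa using hs, hm, by simp, by simp⟩⟩
    | insert x P hx ih =>
      intro a m hm h1 hs
      rw [Finset.sum_insert hx] at hs
      obtain ⟨k, t⟩ := ih (a - wd x) m hm (fun i hi => h1 i (by simp [hi])) (by linarith)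
      refine ⟨1 + k, .vc (wd x) (a - wd x) 1 k {x} P (by simpa using hx) (by rfl) (by linarith) le_rfl ?_ t⟩
      exact .leaf le_rfl ⟨(hwd x).le, hm, by simp, by simpa using h1 x (by simp)⟩
  intro n
  induction n with
  | zero =>
    intro S b m hc _ _ hm hb _
    have : S = ∅ := Finset.card_eq_zero.1 (by omega)
    subst this
    exact ⟨1, .leaf le_rfl ⟨by linarith, by linarith, by simp, by simp⟩⟩
  | succ n ih =>
    intro S b m hc h1 h2 hm hb hA
    rcases S.eq_empty_or_nonempty with rfl | hne
    · exact ⟨1, .leaf le_rfl ⟨by linarith, by linarith, by simp, by simp⟩⟩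
    obtain ⟨P, D, R, d1, d2, d3, e, dc, p1, p2, p3⟩ := split ht wd hwd S (a - μ) (by linarith)
    have dPR : Disjoint (P ∪ D) R := by rw [Finset.disjoint_union_left]; exact ⟨d2, d3⟩
    have hPDs : ∑ i ∈ P ∪ D, wd i ≤ a := by
      rw [Finset.sum_union d1]
      have : ∑ i ∈ D, wd i ≤ μ := by
        rcases card_le_one_cases dc with rfl | ⟨x, rfl⟩
        · simpa using hμ.le
        · simpa using h1 x (by rw [e]; simp)
      linarith
    obtain ⟨k1, t1⟩ := shelf (P ∪ D) a m hm (fun i hi => h2 i (by rw [e]; exact Finset.mem_union_left _ hi)) hPDs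
    rcases R.eq_empty_or_nonempty with rfl | hR
    · rw [Finset.union_empty] at e
      rw [e]
      exact ⟨k1, t1.mono IL.mono' le_rfl hb⟩
    obtain ⟨r, hr, hmax⟩ := R.exists_max_image ht hR
    have hPDne : (P ∪ D).Nonempty := by
      rw [Finset.nonempty_iff_ne_empty]
      intro h0
      have h00 := Finset.union_eq_empty.1 h0
      have := p2 hR
      rw [h00.1, h00.2] at this
      simp at this; linarith
    have hcard : (P ∪ D).card + R.card = S.card := by rw [e, Finset.card_union_of_disjoint dPR]
    have hpos := hPDne.card_pos
    have hsum : ∑ i ∈ S, wd i * ht i = ∑ i ∈ P ∪ D, wd i * ht i + ∑ i ∈ R, wd i * ht i := by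
      rw [e, Finset.sum_union dPR]
    have hlow : (a - μ) * ht r ≤ ∑ i ∈ P ∪ D, wd i * ht i := by
      have h3 : (∑ i ∈ P ∪ D, wd i) * ht r ≤ ∑ i ∈ P ∪ D, wd i * ht i := by
        rw [Finset.sum_mul]
        exact Finset.sum_le_sum fun i hi => mul_le_mul_of_nonneg_left (p3 i hi r hr) (hwd i).le
      have h4 := p2 hR
      rw [← Finset.sum_union d1] at h4
      exact (mul_le_mul_of_nonneg_right h4 (hht r).le).trans h3
    have hR0 : 0 ≤ ∑ i ∈ R, wd i * ht i := Finset.sum_nonneg fun i _ => (mul_pos (hwd i) (hht i)).le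
    have hrest : ∑ i ∈ R, wd i * ht i ≤ (a - μ) * (b - m - ht r) := by nlinarith
    have hb2 : ht r ≤ b - m := by
      have : 0 ≤ (a - μ) * (b - m - ht r) := hR0.trans hrest
      have := nonneg_of_mul_nonneg_right this (by linarith)
      linarith
    obtain ⟨k2, t2⟩ := ih R (b - m) (ht r) (by omega) (fun i hi => h1 i (by rw [e]; exact Finset.mem_union_right _ hi))
      hmax (hht r).le hb2 hrest
    exact ⟨k1 + k2, .hc m (b - m) k1 k2 (P ∪ D) R dPR e (by linarith) le_rfl t1 t2⟩

end
end GK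

namespace GK
section
variable {ι : Type} [DecidableEq ι]
set_option linter.unusedSectionVars false
set_option linter.unusedVariables false
variable {w h : ℝ} {k : ℕ} {S : Finset ι} {wd ht : ι → ℝ} {ε u : ℝ}

def ar (wd ht : ι → ℝ) (S : Finset ι) : ℝ := ∑ i ∈ S, wd i * ht i

lemma ar_swap : ar wd ht S = ar ht wd S := Finset.sum_congr rfl fun i _ => mul_comm _ _

lemma ar_union {A B : Finset ι} (hd : Disjoint A B) : ar wd ht (A ∪ B) = ar wd ht A + ar wd ht B :=
  Finset.sum_union hd

lemma ar_nonneg (hwd : ∀ i, 0 < wd i) (hht : ∀ i, 0 < ht i) : 0 ≤ ar wd ht S :=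
  Finset.sum_nonneg fun i _ => (mul_pos (hwd i) (hht i)).le

lemma ar_zero (hwd : ∀ i, 0 < wd i) (hht : ∀ i, 0 < ht i) (h : ar wd ht S ≤ 0) : S = ∅ := by
  rw [Finset.eq_empty_iff_forall_notMem]
  intro i hi
  have : wd i * ht i ≤ ar wd ht S :=
    Finset.single_le_sum (f := fun i => wd i * ht i) (fun i _ => (mul_pos (hwd i) (hht i)).le) hi
  linarith [mul_pos (hwd i) (hht i)]

/-- Small items of total area at most `cap` can be added (up to `K` of them). -/
def Fil (wd ht : ι → ℝ) (ε u w h : ℝ) (S : Finset ι) (cap : ℝ) (K : ℕ) : Prop :=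
  ∀ Q : Finset ι, Disjoint S Q → (∀ i ∈ Q, wd i ≤ u ∧ ht i ≤ u) → ar wd ht Q ≤ max 0 cap →
    ∃ Q' ⊆ Q, (Q \ Q').card ≤ K ∧ Tr (CL wd ht ε) w h K (S ∪ Q')

lemma Fil.mono {cap cap' : ℝ} {K K' : ℕ} (f : Fil wd ht ε u w h S cap K) (h1 : cap' ≤ cap) (h2 : K ≤ K') :
    Fil wd ht ε u w h S cap' K' := by
  intro Q a b c
  obtain ⟨Q', d, e, t⟩ := f Q a b (c.trans (max_le_max le_rfl h1))
  exact ⟨Q', d, e.trans h2, t.monok h2⟩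

lemma Fil.swap {cap : ℝ} {K : ℕ} (f : Fil wd ht ε u w h S cap K) : Fil ht wd ε u h w S cap K := by
  intro Q a b c
  obtain ⟨Q', d, e, t⟩ := f Q a (fun i hi => (b i hi).symm) (by rwa [ar_swap])
  exact ⟨Q', d, e, t.swap CL.swap'⟩

lemma Fil.vc (hwd : ∀ i, 0 < wd i) (hht : ∀ i, 0 < ht i) {w1 w2 cap1 cap2 : ℝ} {K1 K2 : ℕ} {S1 S2 : Finset ι}
    (hd : Disjoint S1 S2) (hw : w1 + w2 ≤ w) (f1 : Fil wd ht ε u w1 h S1 cap1 K1) (f2 : Fil wd ht ε u w2 h S2 cap2 K2) :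
    Fil wd ht ε u w h (S1 ∪ S2) (cap1 + cap2) (K1 + K2 + 1) := by
  intro Q a b c
  rw [Finset.disjoint_union_left] at a
  have h1 : max 0 (cap1 + cap2) ≤ max 0 cap1 + max 0 cap2 := by
    apply max_le
    · exact add_nonneg (le_max_left _ _) (le_max_left _ _)
    · exact add_le_add (le_max_right _ _) (le_max_right _ _)
  obtain ⟨P, D, R, q1, q2, q3, q4, q5, q6, q7⟩ := split2 (fun i => wd i * ht i) (fun i => mul_pos (hwd i) (hht i)) Q
    (max 0 cap1) (max 0 cap2) (le_max_left _ _) (le_max_left _ _) (c.trans h1)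
  have hP : P ⊆ Q := by rw [q4, Finset.union_assoc]; exact Finset.subset_union_left
  have hR : R ⊆ Q := by rw [q4]; exact Finset.subset_union_right
  obtain ⟨P', p1, p2, p3⟩ := f1 P (a.1.mono_right hP) (fun i hi => b i (hP hi)) q6
  obtain ⟨R', r1, r2, r3⟩ := f2 R (a.2.mono_right hR) (fun i hi => b i (hR hi)) q7
  refine ⟨P' ∪ R', Finset.union_subset (p1.trans hP) (r1.trans hR), ?_, ?_⟩
  · have : Q \ (P' ∪ R') ⊆ (P \ P') ∪ (R \ R') ∪ D := by
      intro i; rw [q4]; simp only [Finset.mem_sdiff, Finset.mem_union]; tauto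
    have h2 := (Finset.card_le_card this).trans (Finset.card_union_le _ _)
    have h3 := Finset.card_union_le (P \ P') (R \ R')
    omega
  · refine .vc w1 w2 K1 K2 (S1 ∪ P') (S2 ∪ R') ?_ ?_ hw (by omega) p3 r3
    · rw [Finset.disjoint_union_left, Finset.disjoint_union_right, Finset.disjoint_union_right]
      exact ⟨⟨hd, a.1.mono_right (r1.trans hR)⟩, (a.2.mono_right (p1.trans hP)).symm, q2.mono p1 r1⟩
    · ext i; simp only [Finset.mem_union]; tauto

lemma Fil.hc (hwd : ∀ i, 0 < wd i) (hht : ∀ i, 0 < ht i) {h1 h2 cap1 cap2 : ℝ} {K1 K2 : ℕ} {S1 S2 : Finset ι}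
    (hd : Disjoint S1 S2) (hw : h1 + h2 ≤ h) (f1 : Fil wd ht ε u w h1 S1 cap1 K1) (f2 : Fil wd ht ε u w h2 S2 cap2 K2) :
    Fil wd ht ε u w h (S1 ∪ S2) (cap1 + cap2) (K1 + K2 + 1) :=
  (Fil.vc hht hwd hd hw f1.swap f2.swap).swap

lemma Fil.free (hwd : ∀ i, 0 < wd i) (hht : ∀ i, 0 < ht i) (hε : 0 < ε) (hε1 : ε ≤ 1) (hu : 0 < u)
    (hw : 0 ≤ w) (hh : 0 ≤ h) (hw1 : w ≤ 1) (hh1 : h ≤ 1) : Fil wd ht ε u w h ∅ (w * h - 2 * u / ε) 1 := by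
  intro Q a b c
  refine ⟨Q, le_rfl, by simp, .leaf le_rfl ?_⟩
  rw [Finset.empty_union]
  rcases le_or_gt (w * h - 2 * u / ε) 0 with h0 | h0
  · rw [max_eq_left h0] at c
    rw [ar_zero hwd hht c]
    left
    exact ⟨hw, hh, Or.inl (by simpa using hh)⟩
  · rw [max_eq_right h0.le] at c
    right
    have hu2 : 0 < u / ε := by positivity
    have huε : u ≤ u / ε := by rw [le_div_iff₀ hε]; nlinarith
    have e2 : 2 * u / ε = 2 * (u / ε) := by ring
    rw [e2] at c h0
    have hw2 : u / ε < w := by nlinarith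
    have hh2 : u / ε < h := by nlinarith
    refine ⟨hw, hh, ?_, ?_⟩
    · refine nfdh hwd hht w u hu (by linarith) Q.card Q h u le_rfl (fun i hi => (b i hi).1) (fun i hi => (b i hi).2)
        hu.le (by linarith) (c.trans ?_)
      nlinarith
    · intro i hi
      rw [div_lt_iff₀ hε] at hw2 hh2
      have := b i hi
      constructor <;> linarith

lemma Fil.zero (hwd : ∀ i, 0 < wd i) (hht : ∀ i, 0 < ht i) (hk : KL wd ht w h S) : Fil wd ht ε u w h S 0 1 := by
  intro Q a b c
  rw [max_self] at c
  rw [ar_zero hwd hht c]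
  exact ⟨∅, by simp, by simp, .leaf le_rfl (Or.inl (by simpa using hk))⟩

lemma Fil.stack (hwd : ∀ i, 0 < wd i) (hht : ∀ i, 0 < ht i) (hε : 0 < ε) (hε1 : ε ≤ 1) (hu : 0 < u)
    (hw : 0 ≤ w) (hw1 : w ≤ 1) (K : ℕ) (hK : 0 < K) : ∀ (m : ℕ) (S : Finset ι) (h : ℝ), m ≤ K → 0 ≤ h → h ≤ 1 →
    (∀ i ∈ S, wd i ≤ m * (w / K)) → ∑ i ∈ S, ht i ≤ h →
    Fil wd ht ε u w h S (w * h - ar wd ht S - (w / K) * ∑ i ∈ S, ht i - (m + 1) * (2 * u / ε)) (4 * m + 1) := by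
  intro m
  induction m with
  | zero =>
    intro S h _ hh hh1 hS _
    have : S = ∅ := by
      rw [Finset.eq_empty_iff_forall_notMem]
      intro i hi
      have := hS i hi
      simp at this
      linarith [hwd i]
    subst this
    exact (Fil.free hwd hht hε hε1 hu hw hh hw1 hh1).mono (by simp [ar]) le_rfl
  | succ m ih =>
    intro S h hm hh hh1 hS hs
    have hK' : (0 : ℝ) < K := by exact_mod_cast hK
    have hwK : 0 ≤ w / K := by positivity
    set A := S.filter fun i => ¬ wd i ≤ m * (w / K) with hA
    set B := S.filter fun i => wd i ≤ m * (w / K) with hB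
    have hd : Disjoint A B := (Finset.disjoint_filter_filter_not S S _).symm
    have hu' : S = A ∪ B := by rw [Finset.union_comm]; exact (Finset.filter_union_filter_not_eq _ _).symm
    have hsum : ∑ i ∈ S, ht i = ∑ i ∈ A, ht i + ∑ i ∈ B, ht i := by rw [hu', Finset.sum_union hd]
    have har : ar wd ht S = ar wd ht A + ar wd ht B := by rw [hu', ar_union hd]
    have hA0 : 0 ≤ ∑ i ∈ A, ht i := Finset.sum_nonneg fun i _ => (hht i).le
    have hB0 : 0 ≤ ∑ i ∈ B, ht i := Finset.sum_nonneg fun i _ => (hht i).le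
    set b := ∑ i ∈ A, ht i with hb
    have hmK : (m + 1 : ℝ) * (w / K) ≤ w := by
      have : (m + 1 : ℝ) ≤ K := by exact_mod_cast hm
      calc (m + 1 : ℝ) * (w / K) ≤ K * (w / K) := mul_le_mul_of_nonneg_right this hwK
        _ = w := by field_simp
    have hm0 : (0 : ℝ) ≤ (m + 1 : ℝ) * (w / K) := by positivity
    have f1 : Fil wd ht ε u ((m + 1 : ℝ) * (w / K)) b A 0 1 := Fil.zero hwd hht ⟨hm0, hA0, Or.inl ⟨fun i hi => by
      have := hS i (Finset.mem_filter.1 hi).1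
      push_cast at this; exact this, le_rfl⟩⟩
    have f2 : Fil wd ht ε u (w - (m + 1 : ℝ) * (w / K)) b ∅ _ 1 :=
      Fil.free hwd hht hε hε1 hu (by linarith) hA0 (by linarith) (by linarith)
    have f12 := Fil.vc (w := w) hwd hht (by simp) (by linarith) f1 f2
    have f3 := ih B (h - b) (by omega) (by linarith) (by linarith) (fun i hi => (Finset.mem_filter.1 hi).2) (by linarith)
    have f := Fil.hc (h := h) hwd hht (by simpa using hd) (by linarith) f12 f3
    rw [Finset.union_empty, ← hu'] at f
    refine f.mono ?_ (by omega)
    have hlow : m * (w / K) * b ≤ ar wd ht A := by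
      rw [hb, Finset.mul_sum]
      refine Finset.sum_le_sum fun i hi => mul_le_mul_of_nonneg_right ?_ (hht i).le
      exact (not_le.1 (Finset.mem_filter.1 hi).2).le
    rw [har, hsum]
    push_cast
    nlinarith

/-- filling a tree of stacks with small items -/
lemma Tr.fill (hwd : ∀ i, 0 < wd i) (hht : ∀ i, 0 < ht i) (hε : 0 < ε) (hε1 : ε ≤ 1) (hu : 0 < u)
    (K : ℕ) (hK : 0 < K) (t : Tr (KL wd ht) w h k S) : ∀ w' h', w ≤ w' → h ≤ h' → w' ≤ 1 → h' ≤ 1 →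
    ∃ K', K' + 1 ≤ k * (4 * K + 2) ∧
    Fil wd ht ε u w' h' S ((1 - 1 / K) * (w' * h') - ar wd ht S - k * ((K + 1) * (2 * u / ε))) K' := by
  have hK' : (0 : ℝ) < K := by exact_mod_cast hK
  have hc0 : 0 ≤ (K + 1 : ℝ) * (2 * u / ε) := by positivity
  have base : ∀ (wd ht : ι → ℝ) (w h : ℝ) (S : Finset ι), (∀ i, 0 < wd i) → (∀ i, 0 < ht i) → 0 ≤ w → 0 ≤ h → w ≤ 1 → h ≤ 1 →
      (∀ i ∈ S, wd i ≤ w) → ∑ i ∈ S, ht i ≤ h →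
      Fil wd ht ε u w h S ((1 - 1 / K) * (w * h) - ar wd ht S - ((K + 1) * (2 * u / ε))) (4 * K + 1) := by
    intro wd ht w h S hwd hht hw hh hw1 hh1 h1 h2
    refine (Fil.stack hwd hht hε hε1 hu hw hw1 K hK K S h le_rfl hh hh1 (fun i hi => ?_) h2).mono ?_ le_rfl
    · rw [mul_div_cancel₀ _ hK'.ne']; exact h1 i hi
    · have : (w / K) * ∑ i ∈ S, ht i ≤ (w / K) * h := mul_le_mul_of_nonneg_left h2 (by positivity)
      have e : (w / K) * h = 1 / K * (w * h) := by ring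
      linarith
  induction t with
  | @leaf w h k S hk hl =>
    intro w' h' a b c d
    have hl' := KL.mono' _ _ _ _ _ hl a b
    obtain ⟨e1, e2, e3⟩ := hl'
    have hk1 : (1 : ℝ) ≤ k := by exact_mod_cast hk
    refine ⟨4 * K + 1, by nlinarith, ?_⟩
    rcases e3 with e3 | e3
    · exact (base wd ht w' h' S hwd hht e1 e2 c d e3.1 e3.2).mono (by nlinarith) le_rfl
    · have := (base ht wd h' w' S hht hwd e2 e1 d c e3.1 e3.2).swap
      rw [ar_swap, mul_comm h' w'] at this
      exact this.mono (by nlinarith) le_rfl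
  | @vc w h k S w1 w2 k1 k2 S1 S2 hd hS hw hk t1 t2 i1 i2 =>
    intro w' h' a b c d
    have n1 := t1.nonneg KL.nonneg'
    have n2 := t2.nonneg KL.nonneg'
    obtain ⟨K1, a1, f1⟩ := i1 w1 h' le_rfl b (by linarith) d
    obtain ⟨K2, a2, f2⟩ := i2 (w' - w1) h' (by linarith) b (by linarith) d
    have hk' : (k1 + k2 : ℝ) ≤ k := by exact_mod_cast hk
    refine ⟨K1 + K2 + 1, ?_, ?_⟩
    · have := Nat.mul_le_mul_right (4 * K + 2) hk
      rw [add_mul] at this; omega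
    · rw [hS]
      refine (Fil.vc hwd hht hd (by linarith) f1 f2).mono ?_ le_rfl
      rw [ar_union hd]
      nlinarith
  | @hc w h k S h1 h2 k1 k2 S1 S2 hd hS hw hk t1 t2 i1 i2 =>
    intro w' h' a b c d
    have n1 := t1.nonneg KL.nonneg'
    have n2 := t2.nonneg KL.nonneg'
    obtain ⟨K1, a1, f1⟩ := i1 w' h1 a le_rfl c (by linarith)
    obtain ⟨K2, a2, f2⟩ := i2 w' (h' - h1) a (by linarith) c (by linarith)
    have hk' : (k1 + k2 : ℝ) ≤ k := by exact_mod_cast hk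
    refine ⟨K1 + K2 + 1, ?_, ?_⟩
    · have := Nat.mul_le_mul_right (4 * K + 2) hk
      rw [add_mul] at this; omega
    · rw [hS]
      refine (Fil.hc hwd hht hd (by linarith) f1 f2).mono ?_ le_rfl
      rw [ar_union hd]
      nlinarith

end
end GK

namespace GK
section
variable {ι : Type} [DecidableEq ι]
set_option linter.unusedSectionVars false
set_option linter.unusedVariables false
variable {w h : ℝ} {k : ℕ} {S : Finset ι} {wd ht : ι → ℝ} {ε u : ℝ} {place place' : ι → Rect} {P P' : Rect}

/-- transposition of a rectangle -/
def sw (r : Rect) : Rect := ⟨r.y1, r.y2, r.x1, r.x2⟩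

lemma sw_disj {r s : Rect} (h : Disjoint r.toSet s.toSet) : Disjoint (sw r).toSet (sw s).toSet := by
  rw [Set.disjoint_left] at h ⊢
  rintro ⟨p, q⟩ ⟨a, b, c, d⟩ ⟨a', b', c', d'⟩
  exact h (a := (q, p)) ⟨c, d, a, b⟩ ⟨c', d', a', b'⟩

lemma sep_swap (g : GuillotineSep place P S) : GuillotineSep (fun i => sw (place i)) (sw P) S := by
  induction g with
  | base P S hS => exact .base _ _ hS
  | vcut P S c h1 h2 hcross hL hR iL iR => exact .hcut _ _ c h1 h2 hcross iL iR
  | hcut P S c h1 h2 hcross hL hR iL iR => exact .vcut _ _ c h1 h2 hcross iL iR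

lemma gp_swap (g : GuillotinePacking wd ht S place P) : GuillotinePacking ht wd S (fun i => sw (place i)) (sw P) :=
  ⟨⟨g.1.hh, g.1.hw, fun i hi => by
    obtain ⟨a, b, c, d⟩ := g.1.hin i hi
    exact ⟨c, d, a, b⟩, fun i hi j hj hij => sw_disj (g.1.hdisj i hi j hj hij)⟩, sep_swap g.2⟩

lemma sub_trans {a b c : Rect} (h1 : a.SubRect b) (h2 : b.SubRect c) : a.SubRect c :=
  ⟨h2.1.trans h1.1, h1.2.1.trans h2.2.1, h2.2.2.1.trans h1.2.2.1, h1.2.2.2.trans h2.2.2.2⟩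

lemma toSet_mono {a b : Rect} (h1 : a.SubRect b) : a.toSet ⊆ b.toSet := fun p hp =>
  ⟨h1.1.trans_lt hp.1, hp.2.1.trans_le h1.2.1, h1.2.2.1.trans_lt hp.2.2.1, hp.2.2.2.trans_le h1.2.2.2⟩

lemma sep_mono (g : GuillotineSep place P S) : ∀ P', P.SubRect P' → GuillotineSep place P' S := by
  induction g with
  | base P S hS => exact fun _ _ => .base _ _ hS
  | vcut P S c h1 h2 hcross hL hR iL iR =>
    rintro P' ⟨a, b, c', d⟩
    exact .vcut _ _ c (a.trans_lt h1) (h2.trans_le b) hcross (iL _ ⟨a, le_rfl, c', d⟩) (iR _ ⟨le_rfl, b, c', d⟩)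
  | hcut P S c h1 h2 hcross hL hR iL iR =>
    rintro P' ⟨a, b, c', d⟩
    exact .hcut _ _ c (c'.trans_lt h1) (h2.trans_le d) hcross (iL _ ⟨a, b, c', le_rfl⟩) (iR _ ⟨a, b, le_rfl, d⟩)

lemma sep_congr (g : GuillotineSep place P S) : (∀ i ∈ S, place' i = place i) → GuillotineSep place' P S := by
  induction g with
  | base P S hS => exact fun _ => .base _ _ hS
  | vcut P S c h1 h2 hcross hL hR iL iR =>
    intro he
    refine .vcut _ _ c h1 h2 (fun i hi => by rw [he i hi]; exact hcross i hi) ?_ ?_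
    · rw [Finset.filter_congr (q := fun i => (place i).x2 ≤ c) (fun i hi => by rw [he i hi])]
      exact iL fun i hi => he i (Finset.mem_filter.1 hi).1
    · rw [Finset.filter_congr (q := fun i => ¬ (place i).x2 ≤ c) (fun i hi => by rw [he i hi])]
      exact iR fun i hi => he i (Finset.mem_filter.1 hi).1
  | hcut P S c h1 h2 hcross hL hR iL iR =>
    intro he
    refine .hcut _ _ c h1 h2 (fun i hi => by rw [he i hi]; exact hcross i hi) ?_ ?_
    · rw [Finset.filter_congr (q := fun i => (place i).y2 ≤ c) (fun i hi => by rw [he i hi])]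
      exact iL fun i hi => he i (Finset.mem_filter.1 hi).1
    · rw [Finset.filter_congr (q := fun i => ¬ (place i).y2 ≤ c) (fun i hi => by rw [he i hi])]
      exact iR fun i hi => he i (Finset.mem_filter.1 hi).1

lemma gp_congr (g : GuillotinePacking wd ht S place P) (he : ∀ i ∈ S, place' i = place i) :
    GuillotinePacking wd ht S place' P := by
  refine ⟨⟨?_, ?_, ?_, ?_⟩, sep_congr g.2 he⟩
  · intro i hi; rw [he i hi]; exact g.1.hw i hi
  · intro i hi; rw [he i hi]; exact g.1.hh i hi
  · intro i hi; rw [he i hi]; exact g.1.hin i hi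
  · intro i hi j hj; rw [he i hi, he j hj]; exact g.1.hdisj i hi j hj

lemma gp_mono (g : GuillotinePacking wd ht S place P) (hP : P.SubRect P') : GuillotinePacking wd ht S place P' :=
  ⟨⟨g.1.hw, g.1.hh, fun i hi => sub_trans (g.1.hin i hi) hP, g.1.hdisj⟩, sep_mono g.2 _ hP⟩

lemma gp_vc (hwd : ∀ i, 0 < wd i) {x1 x2 y1 y2 c : ℝ} {S1 S2 : Finset ι} (h1 : x1 ≤ c) (h2 : c ≤ x2)
    (g1 : GuillotinePacking wd ht S1 place ⟨x1, c, y1, y2⟩) (g2 : GuillotinePacking wd ht S2 place ⟨c, x2, y1, y2⟩) :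
    GuillotinePacking wd ht (S1 ∪ S2) place ⟨x1, x2, y1, y2⟩ := by
  rcases S1.eq_empty_or_nonempty with rfl | ⟨a, ha⟩
  · rw [Finset.empty_union]; exact gp_mono g2 ⟨h1, le_rfl, le_rfl, le_rfl⟩
  rcases S2.eq_empty_or_nonempty with rfl | ⟨b, hb⟩
  · rw [Finset.union_empty]; exact gp_mono g1 ⟨le_rfl, h2, le_rfl, le_rfl⟩
  have f1 : ∀ i ∈ S1, (place i).x2 ≤ c := fun i hi => (g1.1.hin i hi).2.1
  have f2 : ∀ i ∈ S2, c ≤ (place i).x1 := fun i hi => (g2.1.hin i hi).1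
  have f3 : ∀ i ∈ S2, ¬ (place i).x2 ≤ c := fun i hi => by
    have e1 := g2.1.hw i hi; have e2 := hwd i; have e3 := f2 i hi
    rw [Rect.width] at e1; linarith
  have e1 : (S1 ∪ S2).filter (fun i => (place i).x2 ≤ c) = S1 := by
    ext i
    have q1 := f1 i; have q3 := f3 i
    simp only [Finset.mem_filter, Finset.mem_union]; tauto
  have e2 : (S1 ∪ S2).filter (fun i => ¬ (place i).x2 ≤ c) = S2 := by
    ext i
    have q1 := f1 i; have q3 := f3 i
    simp only [Finset.mem_filter, Finset.mem_union]; tauto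
  have cross : ∀ i ∈ S1, ∀ j ∈ S2, Disjoint (place i).toSet (place j).toSet := by
    intro i hi j hj
    rw [Set.disjoint_left]
    rintro p ⟨_, q1, _, _⟩ ⟨q2, _, _, _⟩
    have := f1 i hi; have := f2 j hj; linarith
  refine ⟨⟨?_, ?_, ?_, ?_⟩, .vcut _ _ c ?_ ?_ ?_ (by rw [e1]; exact g1.2) (by rw [e2]; exact g2.2)⟩
  · intro i hi
    rcases Finset.mem_union.1 hi with hi | hi
    exacts [g1.1.hw i hi, g2.1.hw i hi]
  · intro i hi
    rcases Finset.mem_union.1 hi with hi | hi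
    exacts [g1.1.hh i hi, g2.1.hh i hi]
  · intro i hi
    rcases Finset.mem_union.1 hi with hi | hi
    · exact sub_trans (g1.1.hin i hi) ⟨le_rfl, h2, le_rfl, le_rfl⟩
    · exact sub_trans (g2.1.hin i hi) ⟨h1, le_rfl, le_rfl, le_rfl⟩
  · intro i hi j hj hij
    rcases Finset.mem_union.1 hi with hi | hi <;> rcases Finset.mem_union.1 hj with hj | hj
    · exact g1.1.hdisj i hi j hj hij
    · exact cross i hi j hj
    · exact (cross j hj i hi).symm
    · exact g2.1.hdisj i hi j hj hij
  · have q := g1.1.hin a ha; have q2 := g1.1.hw a ha; have := hwd a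
    have q3 := q.1; have q4 := q.2.1
    rw [Rect.width] at q2; dsimp only at q3 q4 ⊢; linarith
  · have q := g2.1.hin b hb; have q2 := g2.1.hw b hb; have := hwd b
    have q3 := q.1; have q4 := q.2.1
    rw [Rect.width] at q2; dsimp only at q3 q4 ⊢; linarith
  · intro i hi
    rcases Finset.mem_union.1 hi with hi | hi
    exacts [Or.inl (f1 i hi), Or.inr (f2 i hi)]

lemma gp_hc (hht : ∀ i, 0 < ht i) {x1 x2 y1 y2 c : ℝ} {S1 S2 : Finset ι} (h1 : y1 ≤ c) (h2 : c ≤ y2)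
    (g1 : GuillotinePacking wd ht S1 place ⟨x1, x2, y1, c⟩) (g2 : GuillotinePacking wd ht S2 place ⟨x1, x2, c, y2⟩) :
    GuillotinePacking wd ht (S1 ∪ S2) place ⟨x1, x2, y1, y2⟩ :=
  gp_swap (gp_vc hht h1 h2 (gp_swap g1) (gp_swap g2))

lemma gp_single (x y : ℝ) (i : ι) (hp : place i = ⟨x, x + wd i, y, y + ht i⟩) :
    GuillotinePacking wd ht {i} place ⟨x, x + wd i, y, y + ht i⟩ := by
  refine ⟨⟨?_, ?_, ?_, ?_⟩, .base _ _ (by simp)⟩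
  · simp [hp, Rect.width]
  · simp [hp, Rect.height]
  · simp [hp, Rect.SubRect]
  · simp

lemma gp_empty : GuillotinePacking wd ht ∅ place P :=
  ⟨⟨by simp, by simp, by simp, by simp⟩, .base _ _ (by simp)⟩

/-- merge two placements -/
def mg {β : Type} (S : Finset ι) (f g : ι → β) : ι → β := fun i => if i ∈ S then f i else g i

lemma mg_left {β : Type} {S : Finset ι} {f g : ι → β} {i : ι} (hi : i ∈ S) : mg S f g i = f i := if_pos hi
lemma mg_right {β : Type} {S T : Finset ι} (hd : Disjoint S T) {f g : ι → β} {i : ι} (hi : i ∈ T) : mg S f g i = g i :=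
  if_neg (Finset.disjoint_right.1 hd hi)

lemma Tr.plc (hwd : ∀ i, 0 < wd i) (hht : ∀ i, 0 < ht i) (t : Tr (IL wd ht) w h k S) :
    ∀ x y : ℝ, ∃ place, GuillotinePacking wd ht S place ⟨x, x + w, y, y + h⟩ := by
  induction t with
  | @leaf w h k S hk hl =>
    intro x y
    obtain ⟨a, b, c, d⟩ := hl
    refine ⟨fun i => ⟨x, x + wd i, y, y + ht i⟩, ?_⟩
    rcases card_le_one_cases c with rfl | ⟨i, rfl⟩
    · exact gp_empty
    · refine gp_mono (gp_single x y i rfl) ?_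
      have := d i (by simp)
      exact ⟨le_rfl, by simpa using this.1, le_rfl, by simpa using this.2⟩
  | @vc w h k S w1 w2 k1 k2 S1 S2 hd hS hw hk t1 t2 i1 i2 =>
    intro x y
    have n1 := t1.nonneg IL.nonneg'
    have n2 := t2.nonneg IL.nonneg'
    obtain ⟨p1, g1⟩ := i1 x y
    obtain ⟨p2, g2⟩ := i2 (x + w1) y
    refine ⟨mg S1 p1 p2, ?_⟩
    rw [hS]
    refine gp_vc hwd (c := x + w1) (by linarith) (by linarith) (gp_congr g1 fun i hi => mg_left hi)
      (gp_mono (gp_congr g2 fun i hi => mg_right hd hi) ⟨le_rfl, ?_, le_rfl, le_rfl⟩)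
    show x + w1 + w2 ≤ x + w
    linarith
  | @hc w h k S h1 h2 k1 k2 S1 S2 hd hS hw hk t1 t2 i1 i2 =>
    intro x y
    have n1 := t1.nonneg IL.nonneg'
    have n2 := t2.nonneg IL.nonneg'
    obtain ⟨p1, g1⟩ := i1 x y
    obtain ⟨p2, g2⟩ := i2 x (y + h1)
    refine ⟨mg S1 p1 p2, ?_⟩
    rw [hS]
    refine gp_hc hht (c := y + h1) (by linarith) (by linarith) (gp_congr g1 fun i hi => mg_left hi)
      (gp_mono (gp_congr g2 fun i hi => mg_right hd hi) ⟨le_rfl, le_rfl, le_rfl, ?_⟩)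
    show y + h1 + h2 ≤ y + h
    linarith

lemma stack_place (hht : ∀ i, 0 < ht i) (S : Finset ι) : ∀ x y h : ℝ, (∀ i ∈ S, wd i ≤ w) → ∑ i ∈ S, ht i ≤ h →
    ∃ place, GuillotinePacking wd ht S place ⟨x, x + w, y, y + h⟩ ∧
      ∀ i ∈ S, ∀ j ∈ S, i ≠ j → (place i).y2 ≤ (place j).y1 ∨ (place j).y2 ≤ (place i).y1 := by
  induction S using Finset.induction_on with
  | empty => exact fun x y h _ _ => ⟨fun _ => ⟨0, 0, 0, 0⟩, gp_empty, by simp⟩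
  | insert a S ha ih =>
    intro x y h h1 h2
    rw [Finset.sum_insert ha] at h2
    have hs0 : 0 ≤ ∑ i ∈ S, ht i := Finset.sum_nonneg fun i _ => (hht i).le
    obtain ⟨p, g, s⟩ := ih x (y + ht a) (h - ht a) (fun i hi => h1 i (by simp [hi])) (by linarith)
    have hd : Disjoint ({a} : Finset ι) S := by simpa using ha
    set q : ι → Rect := mg {a} (fun _ => ⟨x, x + wd a, y, y + ht a⟩) p with hq
    have qa : q a = ⟨x, x + wd a, y, y + ht a⟩ := mg_left (by simp)
    have qs : ∀ i ∈ S, q i = p i := fun i hi => mg_right hd hi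
    refine ⟨q, ?_, ?_⟩
    · rw [Finset.insert_eq]
      refine gp_hc hht (c := y + ht a) (by linarith [hht a]) (by linarith) ?_ ?_
      · exact gp_mono (gp_single x y a qa) ⟨le_rfl, by simpa using h1 a (by simp), le_rfl, le_rfl⟩
      · exact gp_mono (gp_congr g qs) ⟨le_rfl, le_rfl, le_rfl, by show y + ht a + (h - ht a) ≤ y + h; linarith⟩
    · intro i hi j hj hij
      rw [Finset.mem_insert] at hi hj
      rcases hi with rfl | hi <;> rcases hj with rfl | hj
      · exact absurd rfl hij
      · left; rw [qa, qs j hj]; exact (g.1.hin j hj).2.2.1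
      · right; rw [qa, qs i hi]; exact (g.1.hin i hi).2.2.1
      · rw [qs i hi, qs j hj]; exact s i hi j hj hij

/-- label constraint of a single container -/
def OKj (l : CLabel) (r : Rect) (ε : ℝ) (T : Finset ι) (place : ι → Rect) : Prop :=
  (l = CLabel.large → ∀ i ∈ T, ∀ i' ∈ T, i = i') ∧
  (l = CLabel.horizontal → ∀ i ∈ T, ∀ i' ∈ T, i ≠ i' →
    (place i).y2 ≤ (place i').y1 ∨ (place i').y2 ≤ (place i).y1) ∧
  (l = CLabel.vertical → ∀ i ∈ T, ∀ i' ∈ T, i ≠ i' →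
    (place i).x2 ≤ (place i').x1 ∨ (place i').x2 ≤ (place i).x1) ∧
  (l = CLabel.area → ∀ i ∈ T, (place i).width ≤ ε * r.width ∧ (place i).height ≤ ε * r.height)

lemma OKj.congr {l : CLabel} {r : Rect} {T : Finset ι} (o : OKj l r ε T place) (he : ∀ i ∈ T, place' i = place i) :
    OKj l r ε T place' := by
  refine ⟨o.1, ?_, ?_, ?_⟩
  · intro hl i hi j hj; rw [he i hi, he j hj]; exact o.2.1 hl i hi j hj
  · intro hl i hi j hj; rw [he i hi, he j hj]; exact o.2.2.1 hl i hi j hj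
  · intro hl i hi; rw [he i hi]; exact o.2.2.2 hl i hi

lemma label_ok {cont : ℕ → Rect} {lab : ℕ → CLabel} {asg : ι → ℕ}
    (o : ∀ j < k, OKj (lab j) (cont j) ε (S.filter fun i => asg i = j) place) :
    ContainerLabelOK S place k cont lab asg ε := by
  refine ⟨?_, ?_, ?_, ?_⟩
  · intro j hj hl i hi i' hi' ha ha'
    exact (o j hj).1 hl i (by simp [hi, ha]) i' (by simp [hi', ha'])
  · intro j hj hl i hi i' hi' ha ha'
    exact (o j hj).2.1 hl i (by simp [hi, ha]) i' (by simp [hi', ha'])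
  · intro j hj hl i hi i' hi' ha ha'
    exact (o j hj).2.2.1 hl i (by simp [hi, ha]) i' (by simp [hi', ha'])
  · intro j hj hl i hi ha
    exact (o j hj).2.2.2 hl i (by simp [hi, ha])

/-- a placement together with containers -/
def CP (wd ht : ι → ℝ) (ε : ℝ) (P : Rect) (S : Finset ι) (place : ι → Rect) (k : ℕ) : Prop :=
  GuillotinePacking wd ht S place P ∧ ∃ (cont : ℕ → Rect) (lab : ℕ → CLabel) (asg : ι → ℕ),
    (∀ j < k, (cont j).SubRect P) ∧ (∀ j < k, ∀ j' < k, j ≠ j' → Disjoint (cont j).toSet (cont j').toSet) ∧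
    (∀ i ∈ S, asg i < k ∧ (place i).SubRect (cont (asg i))) ∧
    ∀ j < k, OKj (lab j) (cont j) ε (S.filter fun i => asg i = j) place

lemma CP.merge {P1 P2 : Rect} {S1 S2 : Finset ι} {p1 p2 : ι → Rect} {k1 k2 : ℕ} (hd : Disjoint S1 S2)
    (hP : Disjoint P1.toSet P2.toSet) (h1 : P1.SubRect P) (h2 : P2.SubRect P)
    (c1 : CP wd ht ε P1 S1 p1 k1) (c2 : CP wd ht ε P2 S2 p2 k2)
    (g : GuillotinePacking wd ht (S1 ∪ S2) (mg S1 p1 p2) P) : CP wd ht ε P (S1 ∪ S2) (mg S1 p1 p2) (k1 + k2) := by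
  obtain ⟨g1, cont1, lab1, asg1, a1, b1, d1, o1⟩ := c1
  obtain ⟨g2, cont2, lab2, asg2, a2, b2, d2, o2⟩ := c2
  have L : ∀ i ∈ S1, mg S1 p1 p2 i = p1 i := fun i hi => mg_left hi
  have R : ∀ i ∈ S2, mg S1 p1 p2 i = p2 i := fun i hi => mg_right hd hi
  set asg : ι → ℕ := mg S1 asg1 (fun i => k1 + asg2 i) with hasg
  have La : ∀ i ∈ S1, asg i = asg1 i := fun i hi => mg_left hi
  have Ra : ∀ i ∈ S2, asg i = k1 + asg2 i := fun i hi => mg_right hd hi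
  set cont : ℕ → Rect := fun j => if j < k1 then cont1 j else cont2 (j - k1) with hcont
  set lab : ℕ → CLabel := fun j => if j < k1 then lab1 j else lab2 (j - k1) with hlab
  have cL : ∀ j, j < k1 → cont j = cont1 j := fun j hj => if_pos hj
  have cR : ∀ j, cont (k1 + j) = cont2 j := fun j => by simp [hcont]
  have lL : ∀ j, j < k1 → lab j = lab1 j := fun j hj => if_pos hj
  have lR : ∀ j, lab (k1 + j) = lab2 j := fun j => by simp [hlab]
  have cases : ∀ j, j < k1 + k2 → j < k1 ∨ ∃ j', j' < k2 ∧ j = k1 + j' := by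
    intro j hj
    by_cases h : j < k1
    · exact Or.inl h
    · exact Or.inr ⟨j - k1, by omega, by omega⟩
  refine ⟨g, cont, lab, asg, ?_, ?_, ?_, ?_⟩
  · intro j hj
    rcases cases j hj with h | ⟨j', h, rfl⟩
    · rw [cL j h]; exact sub_trans (a1 j h) h1
    · rw [cR]; exact sub_trans (a2 _ h) h2
  · intro j hj i hi hij
    rcases cases j hj with h | ⟨j', h, rfl⟩ <;> rcases cases i hi with h' | ⟨i', h', rfl⟩
    · rw [cL j h, cL i h']; exact b1 _ h _ h' hij
    · rw [cL j h, cR]; exact hP.mono (toSet_mono (a1 _ h)) (toSet_mono (a2 _ h'))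
    · rw [cL i h', cR]; exact (hP.mono (toSet_mono (a1 _ h')) (toSet_mono (a2 _ h))).symm
    · rw [cR, cR]; exact b2 _ h _ h' (by omega)
  · intro i hi
    rcases Finset.mem_union.1 hi with h | h
    · rw [La i h, L i h, cL _ (d1 i h).1]; exact ⟨by have := (d1 i h).1; omega, (d1 i h).2⟩
    · rw [Ra i h, R i h, cR]; exact ⟨by have := (d2 i h).1; omega, (d2 i h).2⟩
  · intro j hj
    rcases cases j hj with h | ⟨j', h, rfl⟩
    · have e : (S1 ∪ S2).filter (fun i => asg i = j) = S1.filter fun i => asg1 i = j := by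
        ext i
        simp only [Finset.mem_filter, Finset.mem_union]
        constructor
        · rintro ⟨q | q, r⟩
          · rw [La i q] at r; exact ⟨q, r⟩
          · rw [Ra i q] at r; omega
        · rintro ⟨q, r⟩; exact ⟨Or.inl q, by rw [La i q]; exact r⟩
      rw [e, cL j h, lL j h]
      exact (o1 j h).congr fun i hi => L i (Finset.mem_filter.1 hi).1
    · have e : (S1 ∪ S2).filter (fun i => asg i = k1 + j') = S2.filter fun i => asg2 i = j' := by
        ext i
        simp only [Finset.mem_filter, Finset.mem_union]
        constructor
        · rintro ⟨q | q, r⟩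
          · rw [La i q] at r; have := (d1 i q).1; omega
          · rw [Ra i q] at r; exact ⟨q, by omega⟩
        · rintro ⟨q, r⟩; exact ⟨Or.inr q, by rw [Ra i q, r]⟩
      rw [e, cR, lR]
      exact (o2 j' h).congr fun i hi => R i (Finset.mem_filter.1 hi).1

lemma CP.single (l : CLabel) (g : GuillotinePacking wd ht S place P) (o : OKj l P ε S place) : CP wd ht ε P S place 1 := by
  refine ⟨g, fun _ => P, fun _ => l, fun _ => 0, ?_, ?_, ?_, ?_⟩
  · exact fun _ _ => ⟨le_rfl, le_rfl, le_rfl, le_rfl⟩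
  · intro j hj j' hj' h; omega
  · exact fun i hi => ⟨Nat.zero_lt_one, g.1.hin i hi⟩
  · intro j hj
    have : j = 0 := by omega
    subst this
    simpa using o

lemma CP.monoP (c : CP wd ht ε P S place k) (hP : P.SubRect P') : CP wd ht ε P' S place k := by
  obtain ⟨g, cont, lab, asg, a, b, d, o⟩ := c
  exact ⟨gp_mono g hP, cont, lab, asg, fun j hj => sub_trans (a j hj) hP, b, d, o⟩

lemma Tr.placeC (hwd : ∀ i, 0 < wd i) (hht : ∀ i, 0 < ht i) (t : Tr (CL wd ht ε) w h k S) :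
    ∀ x y : ℝ, ∃ place, ∃ k' ≤ k, CP wd ht ε ⟨x, x + w, y, y + h⟩ S place k' := by
  induction t with
  | @leaf w h k S hk hl =>
    intro x y
    rcases hl with ⟨a, b, ⟨c, d⟩ | ⟨c, d⟩⟩ | ⟨a, b, ⟨m, t⟩, d⟩
    · obtain ⟨p, g, s⟩ := stack_place hht S x y h c d
      refine ⟨p, 1, hk, CP.single .horizontal g ⟨by simp, fun _ => s, by simp, by simp⟩⟩
    · obtain ⟨p, g, s⟩ := stack_place hwd S y x w c d
      refine ⟨fun i => sw (p i), 1, hk, CP.single .vertical (gp_swap g) ⟨by simp, by simp, fun _ => s, by simp⟩⟩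
    · obtain ⟨p, g⟩ := t.plc hwd hht x y
      refine ⟨p, 1, hk, CP.single .area g ⟨by simp, by simp, by simp, fun _ i hi => ?_⟩⟩
      rw [g.1.hw i hi, g.1.hh i hi]
      simpa [Rect.width, Rect.height] using d i hi
  | @vc w h k S w1 w2 k1 k2 S1 S2 hd hS hw hk t1 t2 i1 i2 =>
    intro x y
    have n1 := t1.nonneg CL.nonneg'
    have n2 := t2.nonneg CL.nonneg'
    obtain ⟨p1, k1', hk1, c1⟩ := i1 x y
    obtain ⟨p2, k2', hk2, c2⟩ := i2 (x + w1) y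
    have hs2 : Rect.SubRect ⟨x + w1, x + w1 + w2, y, y + h⟩ ⟨x + w1, x + w, y, y + h⟩ :=
      ⟨le_rfl, by show x + w1 + w2 ≤ x + w; linarith, le_rfl, le_rfl⟩
    refine ⟨mg S1 p1 p2, k1' + k2', by omega, ?_⟩
    rw [hS]
    have c2' := c2.monoP hs2
    refine CP.merge (P1 := ⟨x, x + w1, y, y + h⟩) (P2 := ⟨x + w1, x + w, y, y + h⟩) hd ?_ (⟨le_rfl, by show x + w1 ≤ x + w; linarith, le_rfl, le_rfl⟩)
      (⟨by show x ≤ x + w1; linarith, le_rfl, le_rfl, le_rfl⟩) c1 c2' ?_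
    · rw [Set.disjoint_left]
      rintro p ⟨_, q1, _, _⟩ ⟨q2, _, _, _⟩
      dsimp only at q1 q2; linarith
    · exact gp_vc hwd (c := x + w1) (by linarith) (by linarith) (gp_congr c1.1 fun i hi => mg_left hi)
        (gp_congr c2'.1 fun i hi => mg_right hd hi)
  | @hc w h k S h1 h2 k1 k2 S1 S2 hd hS hw hk t1 t2 i1 i2 =>
    intro x y
    have n1 := t1.nonneg CL.nonneg'
    have n2 := t2.nonneg CL.nonneg'
    obtain ⟨p1, k1', hk1, c1⟩ := i1 x y
    obtain ⟨p2, k2', hk2, c2⟩ := i2 x (y + h1)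
    have hs2 : Rect.SubRect ⟨x, x + w, y + h1, y + h1 + h2⟩ ⟨x, x + w, y + h1, y + h⟩ :=
      ⟨le_rfl, le_rfl, le_rfl, by show y + h1 + h2 ≤ y + h; linarith⟩
    refine ⟨mg S1 p1 p2, k1' + k2', by omega, ?_⟩
    rw [hS]
    have c2' := c2.monoP hs2
    refine CP.merge (P1 := ⟨x, x + w, y, y + h1⟩) (P2 := ⟨x, x + w, y + h1, y + h⟩) hd ?_ (⟨le_rfl, le_rfl, le_rfl, by show y + h1 ≤ y + h; linarith⟩)
      (⟨le_rfl, le_rfl, by show y ≤ y + h1; linarith, le_rfl⟩) c1 c2' ?_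
    · rw [Set.disjoint_left]
      rintro p ⟨_, _, _, q1⟩ ⟨_, _, q2, _⟩
      dsimp only at q1 q2; linarith
    · exact gp_hc hht (c := y + h1) (by linarith) (by linarith) (gp_congr c1.1 fun i hi => mg_left hi)
        (gp_congr c2'.1 fun i hi => mg_right hd hi)

lemma LCh.plc (hwd : ∀ i, 0 < wd i) (hht : ∀ i, 0 < ht i) {SH SV SC : Finset ι} {X Y : ℝ} (c : LCh wd ht w h SH SV) :
    ∀ (x y : ℝ), X = x + w → Y = y + h → Disjoint SH SC → Disjoint SV SC → ∀ p0 : ι → Rect,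
    GuillotinePacking wd ht SC p0 ⟨x + ∑ i ∈ SV, wd i, X, y + ∑ i ∈ SH, ht i, Y⟩ →
    ∃ p, (∀ i ∈ SC, p i = p0 i) ∧ GuillotinePacking wd ht (SH ∪ SV ∪ SC) p ⟨x, X, y, Y⟩ ∧
      (∀ i ∈ SH, (p i).SubRect ⟨x, X, y, y + ∑ i ∈ SH, ht i⟩) ∧
      (∀ i ∈ SV, (p i).SubRect ⟨x, x + ∑ i ∈ SV, wd i, y, Y⟩) := by
  induction c with
  | nil hw hh =>
    intro x y hX hY d1 d2 p0 g
    refine ⟨p0, fun _ _ => rfl, ?_, by simp, by simp⟩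
    simpa using g
  | @consV w h SH SV a ha ha' hw hh c ih =>
    intro x y hX hY d1 d2 p0 g
    rw [Finset.disjoint_insert_left] at d2
    have hw' := hwd a
    rw [Finset.sum_insert ha] at g ⊢
    obtain ⟨p, q1, q2, q3, q4⟩ := ih (x + wd a) y (by linarith) hY d1 d2.2 p0 (by rwa [add_assoc])
    have hd : Disjoint ({a} : Finset ι) (SH ∪ SV ∪ SC) := by simp [ha, ha', d2.1]
    set q : ι → Rect := mg {a} (fun _ => ⟨x, x + wd a, y, y + ht a⟩) p with hq
    have qa : q a = ⟨x, x + wd a, y, y + ht a⟩ := mg_left (by simp)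
    have qs : ∀ i ∈ SH ∪ SV ∪ SC, q i = p i := fun i hi => mg_right hd hi
    have hsv : 0 ≤ ∑ i ∈ SV, wd i := Finset.sum_nonneg fun i _ => (hwd i).le
    refine ⟨q, ?_, ?_, ?_, ?_⟩
    · intro i hi; rw [qs i (by simp [hi]), q1 i hi]
    · have e : SH ∪ insert a SV ∪ SC = {a} ∪ (SH ∪ SV ∪ SC) := by
        ext i; simp only [Finset.mem_union, Finset.mem_insert, Finset.mem_singleton]; tauto
      rw [e]
      refine gp_vc hwd (c := x + wd a) (by linarith) (by linarith) ?_ (gp_congr q2 qs)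
      exact gp_mono (gp_single x y a qa) ⟨le_rfl, le_rfl, le_rfl, by show y + ht a ≤ Y; linarith⟩
    · intro i hi
      rw [qs i (by simp [hi])]
      exact sub_trans (q3 i hi) ⟨by show x ≤ x + wd a; linarith, le_rfl, le_rfl, le_rfl⟩
    · intro i hi
      rw [Finset.mem_insert] at hi
      rcases hi with rfl | hi
      · rw [qa]
        exact ⟨le_rfl, by dsimp only; linarith, le_rfl, by dsimp only; linarith⟩
      · rw [qs i (by simp [hi])]
        exact sub_trans (q4 i hi) ⟨by dsimp only; linarith, by dsimp only; linarith, le_rfl, le_rfl⟩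
  | @consH w h SH SV a ha ha' hw hh c ih =>
    intro x y hX hY d1 d2 p0 g
    rw [Finset.disjoint_insert_left] at d1
    have hw' := hht a
    rw [Finset.sum_insert ha] at g ⊢
    obtain ⟨p, q1, q2, q3, q4⟩ := ih x (y + ht a) hX (by linarith) d1.2 d2 p0 (by rwa [add_assoc])
    have hd : Disjoint ({a} : Finset ι) (SH ∪ SV ∪ SC) := by simp [ha, ha', d1.1]
    set q : ι → Rect := mg {a} (fun _ => ⟨x, x + wd a, y, y + ht a⟩) p with hq
    have qa : q a = ⟨x, x + wd a, y, y + ht a⟩ := mg_left (by simp)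
    have qs : ∀ i ∈ SH ∪ SV ∪ SC, q i = p i := fun i hi => mg_right hd hi
    have hsv : 0 ≤ ∑ i ∈ SH, ht i := Finset.sum_nonneg fun i _ => (hht i).le
    refine ⟨q, ?_, ?_, ?_, ?_⟩
    · intro i hi; rw [qs i (by simp [hi]), q1 i hi]
    · have e : insert a SH ∪ SV ∪ SC = {a} ∪ (SH ∪ SV ∪ SC) := by
        ext i; simp only [Finset.mem_union, Finset.mem_insert, Finset.mem_singleton]; tauto
      rw [e]
      refine gp_hc hht (c := y + ht a) (by linarith) (by linarith) ?_ (gp_congr q2 qs)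
      exact gp_mono (gp_single x y a qa) ⟨le_rfl, by show x + wd a ≤ X; linarith, le_rfl, le_rfl⟩
    · intro i hi
      rw [Finset.mem_insert] at hi
      rcases hi with rfl | hi
      · rw [qa]
        exact ⟨le_rfl, by dsimp only; linarith, le_rfl, by dsimp only; linarith⟩
      · rw [qs i (by simp [hi])]
        exact sub_trans (q3 i hi) ⟨le_rfl, le_rfl, by dsimp only; linarith, by dsimp only; linarith⟩
    · intro i hi
      rw [qs i (by simp [hi])]
      exact sub_trans (q4 i hi) ⟨le_rfl, le_rfl, by show y ≤ y + ht a; linarith, le_rfl⟩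

/-- position-free L&C packing -/
def LCP (wd ht : ι → ℝ) (N ε : ℝ) (S : Finset ι) (k : ℕ) : Prop :=
  ∃ SH SV SC : Finset ι, S = SH ∪ SV ∪ SC ∧ Disjoint SH SV ∧ Disjoint SH SC ∧ Disjoint SV SC ∧
    (∀ i ∈ SH, N / 2 < wd i ∧ ¬ N / 2 < ht i) ∧ (∀ i ∈ SV, N / 2 < ht i ∧ ¬ N / 2 < wd i) ∧
    LCh wd ht N N SH SV ∧ Tr (CL wd ht ε) (N - ∑ i ∈ SV, wd i) (N - ∑ i ∈ SH, ht i) k SC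

lemma LCP.swap {N : ℝ} (c : LCP wd ht N ε S k) : LCP ht wd N ε S k := by
  obtain ⟨SH, SV, SC, a1, a2, a3, a4, a5, a6, a7, a8⟩ := c
  exact ⟨SV, SH, SC, by rw [a1, Finset.union_comm SH SV], a2.symm, a4, a3, a6, a5, a7.swap, a8.swap CL.swap'⟩

lemma LCP.plc (hwd : ∀ i, 0 < wd i) (hht : ∀ i, 0 < ht i) {N : ℝ} (c : LCP wd ht N ε S k) :
    ∃ place, ∃ k' ≤ k, IsLCPacking wd ht N ε S place k' := by
  obtain ⟨SH, SV, SC, a1, a2, a3, a4, a5, a6, a7, a8⟩ := c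
  have hs := a7.sums
  have hsv : 0 ≤ ∑ i ∈ SV, wd i := Finset.sum_nonneg fun i _ => (hwd i).le
  have hsh : 0 ≤ ∑ i ∈ SH, ht i := Finset.sum_nonneg fun i _ => (hht i).le
  obtain ⟨p0, k', hk, cp⟩ := a8.placeC hwd hht (∑ i ∈ SV, wd i) (∑ i ∈ SH, ht i)
  rw [add_sub_cancel, add_sub_cancel] at cp
  obtain ⟨p, q1, q2, q3, q4⟩ := a7.plc hwd hht (X := N) (Y := N) 0 0 (by simp) (by simp) a3 a4 p0 (by simpa using cp.1)
  simp only [zero_add] at q3 q4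
  obtain ⟨g, cont, lab, asg, b1, b2, b3, b4⟩ := cp
  have e : S \ (SH ∪ SV) = SC := by
    rw [a1]
    ext i
    have h1 : i ∈ SC → i ∉ SH := fun h => Finset.disjoint_right.1 a3 h
    have h2 : i ∈ SC → i ∉ SV := fun h => Finset.disjoint_right.1 a4 h
    simp only [Finset.mem_sdiff, Finset.mem_union]; tauto
  refine ⟨p, k', hk, ∑ i ∈ SH, ht i, ∑ i ∈ SV, wd i, SH ∪ SV, cont, lab, asg, hsh, hs.2, hsv, hs.1, ?_, ?_, ?_, ?_, ?_, ?_, ?_, ?_, b2, ?_, ?_⟩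
  · rw [a1]; exact Finset.subset_union_left
  · rw [a1]; exact q2.1
  · rw [a1]; exact q2.2
  · intro i hi
    rcases Finset.mem_union.1 hi with h | h
    exacts [Or.inl (a5 i h).1, Or.inr (a6 i h).1]
  · intro i hi hw
    rcases Finset.mem_union.1 hi with h | h
    · exact q3 i h
    · exact absurd hw (a6 i h).2
  · intro i hi hw
    rcases Finset.mem_union.1 hi with h | h
    · exact absurd (a5 i h).1 hw
    · exact q4 i h
  · intro j hj
    exact sub_trans (b1 j hj) ⟨hsv, le_rfl, hsh, le_rfl⟩
  · intro j hj
    have := toSet_mono (b1 j hj)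
    rw [Set.disjoint_left]
    intro p hp
    obtain ⟨c1, c2, c3, c4⟩ := this hp
    rintro (⟨_, _, _, d⟩ | ⟨_, d, _, _⟩)
    · dsimp only at c3 d; linarith
    · dsimp only at c1 d; linarith
  · rw [e]
    intro i hi
    rw [q1 i hi]; exact b3 i hi
  · rw [e]
    apply label_ok
    intro j hj
    exact (b4 j hj).congr fun i hi => q1 i (Finset.mem_filter.1 hi).1

end
end GK

namespace GK
section
variable {ι : Type} [DecidableEq ι]
set_option linter.unusedSectionVars false
set_option linter.unusedVariables false
variable {w h : ℝ} {k : ℕ} {S S0 : Finset ι} {wd ht : ι → ℝ} {ε u : ℝ} {place place' : ι → Rect} {P P' : Rect}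

lemma sub_avg (f : ι → ℝ) (S : Finset ι) (d : ℕ) : d ≤ S.card →
    ∃ T ⊆ S, T.card = S.card - d ∧ S.card * ∑ i ∈ T, f i ≤ ((S.card - d : ℕ) : ℝ) * ∑ i ∈ S, f i := by
  induction d with
  | zero => intro _; exact ⟨S, Finset.Subset.refl _, by simp, by simp⟩
  | succ d ih =>
    intro hd
    obtain ⟨T, hT, hc, hs⟩ := ih (by omega)
    have hne : T.Nonempty := by rw [← Finset.card_pos]; omega
    obtain ⟨a, ha, hfa⟩ : ∃ a ∈ T, ∑ i ∈ T, f i ≤ T.card * f a := by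
      obtain ⟨a, ha, hm⟩ := Finset.exists_max_image T f hne
      refine ⟨a, ha, ?_⟩
      simpa using Finset.sum_le_sum fun i hi => hm i hi
    refine ⟨T.erase a, (Finset.erase_subset _ _).trans hT, by rw [Finset.card_erase_of_mem ha]; omega, ?_⟩
    have e := Finset.add_sum_erase T f ha
    have hm : ((S.card - d : ℕ) : ℝ) = ((S.card - (d + 1) : ℕ) : ℝ) + 1 := by
      rw [show S.card - d = (S.card - (d + 1)) + 1 by omega]; push_cast; ring
    rw [hm] at hs
    have hc' : (T.card : ℝ) = ((S.card - (d + 1) : ℕ) : ℝ) + 1 := by rw [hc, hm]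
    rw [hc'] at hfa
    set m : ℝ := ((S.card - (d + 1) : ℕ) : ℝ) with hmm
    have hm0 : 0 ≤ m := Nat.cast_nonneg _
    have hn0 : (0 : ℝ) ≤ S.card := Nat.cast_nonneg _
    have h1 : (m + 1) * ∑ i ∈ T.erase a, f i ≤ m * ∑ i ∈ T, f i := by nlinarith
    have h2 : (m + 1) * (S.card * ∑ i ∈ T.erase a, f i) ≤ (m + 1) * (m * ∑ i ∈ S, f i) := by
      nlinarith [mul_le_mul_of_nonneg_left h1 hn0, mul_le_mul_of_nonneg_left hs hm0]
    exact le_of_mul_le_mul_left h2 (by linarith)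

lemma disj_cases {r s : Rect} (h : Disjoint r.toSet s.toSet) (h1 : r.x1 < r.x2) (h2 : r.y1 < r.y2)
    (h3 : s.x1 < s.x2) (h4 : s.y1 < s.y2) :
    (r.x2 ≤ s.x1 ∨ s.x2 ≤ r.x1) ∨ (r.y2 ≤ s.y1 ∨ s.y2 ≤ r.y1) := by
  by_contra hc
  push Not at hc
  obtain ⟨⟨a, b⟩, c, d⟩ := hc
  obtain ⟨p, p1, p2⟩ := exists_between (show max r.x1 s.x1 < min r.x2 s.x2 by simp [*])
  obtain ⟨q, q1, q2⟩ := exists_between (show max r.y1 s.y1 < min r.y2 s.y2 by simp [*])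
  simp only [max_lt_iff, lt_min_iff] at p1 p2 q1 q2
  rw [Set.disjoint_left] at h
  exact h (a := (p, q)) ⟨p1.1, p2.1, q1.1, q2.1⟩ ⟨p1.2, p2.2, q1.2, q2.2⟩

lemma disj_Ioo {a b c d : ℝ} (h : b ≤ c ∨ d ≤ a) : Disjoint (Set.Ioo a b) (Set.Ioo c d) := by
  rw [Set.disjoint_left]
  rintro x ⟨h1, h2⟩ ⟨h3, h4⟩
  rcases h with h | h <;> linarith

open MeasureTheory Set in
lemma col (g : GuillotinePacking wd ht S0 place (knapsack 1)) {T : Finset ι} (hT : T ⊆ S0) {Vx Vy : Set ℝ}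
    (m1 : MeasurableSet Vx) (m2 : MeasurableSet Vy) (s1 : Vx ⊆ Ioc 0 1) (s2 : Vy ⊆ Ioc 0 1)
    (hd : ∀ i ∈ T, Disjoint (Ioo (place i).x1 (place i).x2) Vx ∧ Disjoint (Ioo (place i).y1 (place i).y2) Vy) :
    ∃ k, Tr (IL wd ht) (1 - (volume Vx).toReal) (1 - (volume Vy).toReal) k T := by
  obtain ⟨k, t⟩ := collapse (wd := wd) (ht := ht) m1 m2 g.2 T hT (by simp [knapsack]) (by simp [knapsack]) g.1.hin
    (fun i hi => ⟨(g.1.hw i (hT hi)).symm, (g.1.hh i (hT hi)).symm, (hd i hi).1, (hd i hi).2⟩)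
  refine ⟨k, t.mono IL.mono' ?_ ?_⟩
  · simpa [knapsack] using ln_le_sub (zero_le_one' ℝ) m1 (Subset.refl _) s1
  · simpa [knapsack] using ln_le_sub (zero_le_one' ℝ) m2 (Subset.refl _) s2

lemma col0 (g : GuillotinePacking wd ht S0 place (knapsack 1)) {T : Finset ι} (hT : T ⊆ S0) :
    ∃ k, Tr (IL wd ht) 1 1 k T := by
  have := col g hT (Vx := ∅) (Vy := ∅) MeasurableSet.empty MeasurableSet.empty (by simp) (by simp) (by simp)
  simpa using this

open MeasureTheory Set in
lemma vol_stack (f g : ι → ℝ) (T : Finset ι) (h : ∀ i ∈ T, f i ≤ g i)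
    (hd : ∀ i ∈ T, ∀ j ∈ T, i ≠ j → g i ≤ f j ∨ g j ≤ f i) :
    (volume (⋃ i ∈ T, Ioo (f i) (g i))).toReal = ∑ i ∈ T, (g i - f i) := by
  rw [measure_biUnion_finset]
  · simp only [Real.volume_Ioo]
    rw [ENNReal.toReal_sum (by simp)]
    exact Finset.sum_congr rfl fun i hi => ENNReal.toReal_ofReal (by linarith [h i hi])
  · intro i hi j hj hij
    exact disj_Ioo (hd i hi j hj hij)
  · exact fun _ _ => measurableSet_Ioo

/-- choice of a sparse strip -/
lemma strip_choice (x1 x2 : ι → ℝ) (V : Finset ι) (a δ : ℝ) (hδ : 0 < δ) (M : ℕ) (hM : 0 < M)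
    (hV : ∀ i ∈ V, x2 i - x1 i < δ) :
    ∃ j < M, M * (V.filter fun i => x1 i < a + (j + 1) * δ ∧ a + j * δ < x2 i).card ≤ 2 * V.card := by
  by_contra hc
  push Not at hc
  have h1 : ∑ j ∈ Finset.range M, (V.filter fun i => x1 i < a + (j + 1) * δ ∧ a + j * δ < x2 i).card ≤ 2 * V.card := by
    simp only [Finset.card_filter]
    rw [Finset.sum_comm, mul_comm, ← smul_eq_mul]
    apply Finset.sum_le_card_nsmul
    intro i hi
    rw [← Finset.card_filter]
    rcases ((Finset.range M).filter fun j : ℕ => x1 i < a + (j + 1) * δ ∧ a + j * δ < x2 i).eq_empty_or_nonempty with h0 | h0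
    · rw [h0]; simp
    obtain ⟨m, hm, hmin⟩ := Finset.exists_min_image _ (fun x : ℕ => x) h0
    have : ((Finset.range M).filter fun j : ℕ => x1 i < a + (j + 1) * δ ∧ a + j * δ < x2 i) ⊆ {m, m + 1} := by
      intro j hj
      have h2 := hmin j hj
      simp only [Finset.mem_filter] at hm hj
      have h3 : ¬ (m + 2 ≤ j) := by
        intro h3
        have h4 : ((m : ℝ) + 2) ≤ j := by exact_mod_cast h3
        have h5 : ((m : ℝ) + 2) * δ ≤ j * δ := mul_le_mul_of_nonneg_right h4 hδ.le
        have := hV i hi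
        nlinarith [hm.2.1, hj.2.2]
      simp only [Finset.mem_insert, Finset.mem_singleton]; omega
    exact (Finset.card_le_card this).trans Finset.card_le_two
  have h2 : ∑ j ∈ Finset.range M, (2 * V.card + 1) ≤ ∑ j ∈ Finset.range M, M * (V.filter fun i => x1 i < a + (j + 1) * δ ∧ a + j * δ < x2 i).card :=
    Finset.sum_le_sum fun j hj => hc j (Finset.mem_range.1 hj)
  rw [← Finset.mul_sum, Finset.sum_const, Finset.card_range, smul_eq_mul] at h2
  have := Nat.le_of_mul_le_mul_left h2 hM
  omega
end
end GK

namespace GK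
section
variable {ι : Type} [DecidableEq ι]
set_option linter.unusedSectionVars false
set_option linter.unusedVariables false
variable {w h : ℝ} {k : ℕ} {S S0 : Finset ι} {wd ht : ι → ℝ} {ε u : ℝ} {place place' : ι → Rect} {P P' : Rect}

open MeasureTheory Set in
lemma geo (hwd : ∀ i, 0 < wd i) (hht : ∀ i, 0 < ht i) (g : GuillotinePacking wd ht S0 place (knapsack 1))
    (M : ℕ) (hM : 0 < M) (δ t : ℝ) (hδ : 0 < δ) (ht2 : 2 * (M * δ) = t) (ht4 : t ≤ 1 / 4) (hu0 : 0 < u) (huδ : u < δ)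
    (H' Hn V : Finset ι) (hH' : H' ⊆ S0) (hHn : Hn ⊆ S0) (hV : V ⊆ S0) (hHV : Disjoint Hn V)
    (cH' : ∀ i ∈ H', 1 - u ≤ wd i) (cHn : ∀ i ∈ Hn, δ ≤ wd i ∧ wd i < 1 - t)
    (cV : ∀ i ∈ V, wd i < δ ∧ δ ≤ ht i) :
    ∃ H0 ⊆ H', ∃ E ⊆ Hn ∪ V, ∃ Vs ⊆ V, Disjoint E Vs ∧ ∑ i ∈ H0, ht i ≤ 1 / 2 ∧ H'.card ≤ 2 * H0.card + 1 ∧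
      δ * ∑ i ∈ Vs, wd i ≤ 2 * u ∧
      M * (Hn.card + 2 * V.card) ≤ M * (2 * E.card + 2 * Vs.card) + 4 * V.card ∧
      ∃ k, Tr (IL wd ht) (1 - δ) (1 - ∑ i ∈ H0, ht i) k E := by
  have hM1 : (1 : ℝ) ≤ M := by exact_mod_cast hM
  have hδ8 : δ ≤ 1 / 8 := by nlinarith
  -- basic facts about the placement
  have X : ∀ i ∈ S0, (place i).x2 = (place i).x1 + wd i ∧ (place i).y2 = (place i).y1 + ht i ∧
      0 ≤ (place i).x1 ∧ (place i).x2 ≤ 1 ∧ 0 ≤ (place i).y1 ∧ (place i).y2 ≤ 1 := by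
    intro i hi
    have h1 := g.1.hw i hi
    have h2 := g.1.hh i hi
    obtain ⟨a, b, c, d⟩ := g.1.hin i hi
    simp only [Rect.width, Rect.height, knapsack] at *
    exact ⟨by linarith, by linarith, a, b, c, d⟩
  have D : ∀ i ∈ S0, ∀ j ∈ S0, i ≠ j → ((place i).x2 ≤ (place j).x1 ∨ (place j).x2 ≤ (place i).x1) ∨
      ((place i).y2 ≤ (place j).y1 ∨ (place j).y2 ≤ (place i).y1) := by
    intro i hi j hj hij
    have a1 := X i hi
    have a2 := X j hj
    have := hwd i; have := hwd j; have := hht i; have := hht j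
    exact disj_cases (g.1.hdisj i hi j hj hij) (by linarith) (by linarith) (by linarith) (by linarith)
  -- choice of `H0`
  obtain ⟨H0, hH0, hc0, hs0⟩ := sub_avg ht H' (H'.card - H'.card / 2) (by omega)
  have eH : H'.card - (H'.card - H'.card / 2) = H'.card / 2 := by omega
  rw [eH] at hc0 hs0
  have hsH' : ∑ i ∈ H', ht i ≤ 1 := by
    obtain ⟨k, t⟩ := col0 g hH'
    exact (t.swap IL.swap').tall_sum hht hwd le_rfl (fun i hi => by have := cH' i hi; linarith)
  have hY : ∑ i ∈ H0, ht i ≤ 1 / 2 := by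
    rcases H'.eq_empty_or_nonempty with h0 | h0
    · subst h0
      rw [Finset.subset_empty.1 hH0]; simp
    have hp : (0 : ℝ) < H'.card := by exact_mod_cast Finset.card_pos.2 h0
    have h1 : ((H'.card / 2 : ℕ) : ℝ) ≤ (H'.card : ℝ) / 2 := Nat.cast_div_le
    have h2 : 0 ≤ ∑ i ∈ H', ht i := Finset.sum_nonneg fun i _ => (hht i).le
    have h3 : (H'.card : ℝ) * ∑ i ∈ H0, ht i ≤ H'.card * (1 / 2) := by
      have : ((H'.card / 2 : ℕ) : ℝ) * ∑ i ∈ H', ht i ≤ (H'.card : ℝ) / 2 * 1 := by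
        apply mul_le_mul h1 hsH' h2 (by positivity)
      linarith
    exact le_of_mul_le_mul_left h3 hp
  have sH0 : ∀ i ∈ H0, i ∈ S0 := fun i hi => hH' (hH0 hi)
  -- choice of the side
  obtain ⟨a, ha0, ha1, hB⟩ : ∃ a, 0 ≤ a ∧ a + t / 2 ≤ 1 ∧
      2 * (Hn.filter fun i => (place i).x1 < a + t / 2 ∧ a < (place i).x2).card ≤ Hn.card := by
    by_contra hc
    push Not at hc
    have h1 := hc 0 le_rfl (by linarith)
    have h2 := hc (1 - t / 2) (by linarith) (by linarith)
    have hd : Disjoint (Hn.filter fun i => (place i).x1 < 0 + t / 2 ∧ 0 < (place i).x2)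
        (Hn.filter fun i => (place i).x1 < 1 - t / 2 + t / 2 ∧ 1 - t / 2 < (place i).x2) := by
      rw [Finset.disjoint_left]
      intro i hi hj
      simp only [Finset.mem_filter] at hi hj
      have := X i (hHn hi.1)
      have := cHn i hi.1
      linarith [hi.2.1, hj.2.2]
    have h3 := Finset.card_le_card (Finset.union_subset (Finset.filter_subset (fun i => (place i).x1 < 0 + t / 2 ∧ 0 < (place i).x2) Hn)
      (Finset.filter_subset (fun i => (place i).x1 < 1 - t / 2 + t / 2 ∧ 1 - t / 2 < (place i).x2) Hn))
    rw [Finset.card_union_of_disjoint hd] at h3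
    omega
  set BH := Hn.filter fun i => (place i).x1 < a + t / 2 ∧ a < (place i).x2 with hBH
  obtain ⟨j, hj, hVj⟩ := strip_choice (fun i => (place i).x1) (fun i => (place i).x2) V a δ hδ M hM
    (fun i hi => by have := X i (hV hi); have := cV i hi; linarith)
  set Vj := V.filter fun i => (place i).x1 < a + (j + 1) * δ ∧ a + j * δ < (place i).x2 with hVjd
  have hj1 : (j + 1 : ℝ) ≤ M := by exact_mod_cast hj
  have hj2 : (j + 1 : ℝ) * δ ≤ t / 2 := by
    have := mul_le_mul_of_nonneg_right hj1 hδ.le; linarith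
  have hj3 : 0 ≤ (j : ℝ) * δ := by positivity
  set Uy : Set ℝ := ⋃ i ∈ H0, Ioo (place i).y1 (place i).y2 with hUy
  classical
  set Vs := V.filter fun i => ∃ l ∈ H0, ¬ Disjoint (Ioo (place i).y1 (place i).y2) (Ioo (place l).y1 (place l).y2) with hVs
  set E := (Hn \ BH) ∪ ((V \ Vj) \ Vs) with hE
  have hEsub : E ⊆ Hn ∪ V := Finset.union_subset_union Finset.sdiff_subset (Finset.sdiff_subset.trans Finset.sdiff_subset)
  have hEV : Disjoint E Vs := by
    rw [hE, Finset.disjoint_union_left]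
    refine ⟨?_, Finset.sdiff_disjoint⟩
    exact (hHV.mono_left Finset.sdiff_subset).mono_right (Finset.filter_subset _ _)
  refine ⟨H0, hH0, E, hEsub, Vs, Finset.filter_subset _ _, hEV, hY, by omega, ?_, ?_, ?_⟩
  · -- width of `Vs`
    have hvol : (volume (Ioo u (1 - u))).toReal = 1 - 2 * u := by
      rw [Real.volume_Ioo, ENNReal.toReal_ofReal (by linarith)]; ring
    obtain ⟨k, tr⟩ := col (T := Vs) (Vx := Ioo u (1 - u)) (Vy := ∅) g ((Finset.filter_subset _ _).trans hV) measurableSet_Ioo MeasurableSet.empty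
      (fun x hx => ⟨by linarith [hx.1], by linarith [hx.2]⟩) (by simp) (by
        intro i hi
        refine ⟨?_, by simp⟩
        obtain ⟨hi1, l, hl, hil⟩ := Finset.mem_filter.1 hi
        have x1 := X i (hV hi1)
        have x2 := X l (sH0 l hl)
        have c1 := cV i hi1
        have c2 := cH' l (hH0 hl)
        have hne : i ≠ l := by rintro rfl; linarith
        apply disj_Ioo
        rcases D i (hV hi1) l (sH0 l hl) hne with (h | h) | h
        · left; linarith
        · right; linarith
        · exact absurd (disj_Ioo h) hil)
    have := tr.area hwd hht
    rw [hvol] at this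
    simp only [measure_empty, ENNReal.toReal_zero] at this
    have h2 : δ * ∑ i ∈ Vs, wd i ≤ ∑ i ∈ Vs, wd i * ht i := by
      rw [Finset.mul_sum]
      apply Finset.sum_le_sum
      intro i hi
      have := cV i (Finset.mem_filter.1 hi).1
      nlinarith [hwd i]
    linarith
  · -- counting
    have h1 : E.card = (Hn \ BH).card + ((V \ Vj) \ Vs).card := by
      apply Finset.card_union_of_disjoint
      exact (hHV.mono_left Finset.sdiff_subset).mono_right (Finset.sdiff_subset.trans Finset.sdiff_subset)
    have h2 := Finset.card_sdiff_add_card_eq_card (Finset.filter_subset (fun i => (place i).x1 < a + t / 2 ∧ a < (place i).x2) Hn)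
    have h3 := Finset.card_sdiff_add_card_eq_card (Finset.filter_subset (fun i => (place i).x1 < a + (j + 1) * δ ∧ a + j * δ < (place i).x2) V)
    rw [← hBH] at h2
    rw [← hVjd] at h3
    have h4 := Finset.le_card_sdiff Vs (V \ Vj)
    have h5 : Hn.card + 2 * V.card ≤ 2 * E.card + 2 * Vs.card + 2 * Vj.card := by omega
    calc M * (Hn.card + 2 * V.card) ≤ M * (2 * E.card + 2 * Vs.card + 2 * Vj.card) := Nat.mul_le_mul_left _ h5
      _ = M * (2 * E.card + 2 * Vs.card) + 2 * (M * Vj.card) := by ring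
      _ ≤ _ := by omega
  · have hvx : (volume (Ioo (a + j * δ) (a + (j + 1) * δ))).toReal = δ := by
      rw [Real.volume_Ioo, ENNReal.toReal_ofReal (by nlinarith)]; ring
    have hvy : (volume Uy).toReal = ∑ i ∈ H0, ht i := by
      rw [hUy, vol_stack]
      · exact Finset.sum_congr rfl fun i hi => by have := X i (sH0 i hi); linarith
      · intro i hi; have := X i (sH0 i hi); have := hht i; linarith
      · intro i hi l hl hil
        have x1 := X i (sH0 i hi)
        have x2 := X l (sH0 l hl)
        have c1 := cH' i (hH0 hi)
        have c2 := cH' l (hH0 hl)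
        rcases D i (sH0 i hi) l (sH0 l hl) hil with (h | h) | h
        · linarith
        · linarith
        · exact h
    have := col (T := E) (Vx := Ioo (a + j * δ) (a + (j + 1) * δ)) (Vy := Uy) g
      (hEsub.trans (Finset.union_subset hHn hV)) measurableSet_Ioo
      (Finset.measurableSet_biUnion _ fun _ _ => measurableSet_Ioo)
      (fun x hx => ⟨by linarith [hx.1], by linarith [hx.2]⟩) (by
        intro y hy
        simp only [hUy, mem_iUnion, exists_prop] at hy
        obtain ⟨i, hi, hy⟩ := hy
        have x1 := X i (sH0 i hi)
        exact ⟨by linarith [hy.1], by linarith [hy.2]⟩) (by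
        intro i hi
        rw [hUy, Set.disjoint_iUnion₂_right]
        rcases Finset.mem_union.1 hi with hi | hi
        · obtain ⟨hi1, hi2⟩ := Finset.mem_sdiff.1 hi
          have x1 := X i (hHn hi1)
          have c1 := cHn i hi1
          constructor
          · apply disj_Ioo
            by_contra hc
            push Not at hc
            exact hi2 (Finset.mem_filter.2 ⟨hi1, by linarith, by linarith⟩)
          · intro l hl
            have x2 := X l (sH0 l hl)
            have c2 := cH' l (hH0 hl)
            have hne : i ≠ l := by rintro rfl; linarith
            rcases D i (hHn hi1) l (sH0 l hl) hne with (h | h) | h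
            · linarith
            · linarith
            · exact disj_Ioo h
        · obtain ⟨hi1, hi2⟩ := Finset.mem_sdiff.1 hi
          obtain ⟨hi1, hi3⟩ := Finset.mem_sdiff.1 hi1
          constructor
          · apply disj_Ioo
            by_contra hc
            push Not at hc
            exact hi3 (Finset.mem_filter.2 ⟨hi1, by linarith, by linarith⟩)
          · intro l hl
            by_contra hc
            exact hi2 (Finset.mem_filter.2 ⟨hi1, l, hl, hc⟩))
    rw [hvx, hvy] at this
    exact this
end
end GK

namespace GK
section
variable {ι : Type} [DecidableEq ι]
set_option linter.unusedSectionVars false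
set_option linter.unusedVariables false
variable {w h : ℝ} {k : ℕ} {S S0 : Finset ι} {wd ht : ι → ℝ} {ε u : ℝ} {place place' : ι → Rect} {P P' : Rect}

lemma ar_mono (hwd : ∀ i, 0 < wd i) (hht : ∀ i, 0 < ht i) {A B : Finset ι} (h : A ⊆ B) : ar wd ht A ≤ ar wd ht B :=
  Finset.sum_le_sum_of_subset_of_nonneg h fun i _ _ => (mul_pos (hwd i) (hht i)).le

lemma Q_sub (hwd : ∀ i, 0 < wd i) (hht : ∀ i, 0 < ht i) (Q : Finset ι) (M : ℕ) (hM : 0 < M) :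
    ∃ Q1 ⊆ Q, (M : ℝ) * (Q.card - Q1.card) ≤ Q.card + M ∧ ar wd ht Q1 ≤ (1 - 1 / M) * ar wd ht Q := by
  rcases Q.eq_empty_or_nonempty with rfl | h0
  · exact ⟨∅, by simp, by simp, by simp [ar]⟩
  have hn : 0 < Q.card := Finset.card_pos.2 h0
  set d := (Q.card + M - 1) / M with hd
  have e := Nat.div_add_mod (Q.card + M - 1) M
  have e2 := Nat.mod_lt (Q.card + M - 1) hM
  rw [← hd] at e
  have hdQ : d ≤ Q.card := by
    have : M * d < M * (Q.card + 1) := by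
      have h1 : Q.card ≤ M * Q.card := Nat.le_mul_of_pos_left _ hM
      rw [Nat.mul_add]
      omega
    have := Nat.lt_of_mul_lt_mul_left this
    omega
  have h1 : M * d ≤ Q.card + M := by omega
  have h2 : Q.card ≤ M * d := by omega
  obtain ⟨T, hT, hc, hs⟩ := sub_avg (fun i => wd i * ht i) Q d hdQ
  have hc' : (Q.card : ℝ) - T.card = d := by rw [hc, Nat.cast_sub hdQ]; ring
  have hMp : (0 : ℝ) < M := by exact_mod_cast hM
  have hnp : (0 : ℝ) < Q.card := by exact_mod_cast hn
  refine ⟨T, hT, by rw [hc']; exact_mod_cast h1, ?_⟩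
  rw [Nat.cast_sub hdQ] at hs
  have h3 : (Q.card : ℝ) ≤ M * d := by exact_mod_cast h2
  have h4 : (Q.card : ℝ) * (1 / M) ≤ d := by
    rw [mul_one_div, div_le_iff₀ hMp]; linarith
  have a0 : 0 ≤ ar wd ht Q := ar_nonneg hwd hht
  have h5 : (Q.card : ℝ) * ar wd ht T ≤ Q.card * ((1 - 1 / M) * ar wd ht Q) := by
    have : ((Q.card : ℝ) - d) * ar wd ht Q ≤ (Q.card * (1 - 1 / M)) * ar wd ht Q := by
      apply mul_le_mul_of_nonneg_right _ a0
      nlinarith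
    calc _ ≤ _ := hs
      _ ≤ _ := this
      _ = _ := by ring
  exact le_of_mul_le_mul_left h5 hnp

set_option maxHeartbeats 1000000 in
lemma core_half (hwd : ∀ i, 0 < wd i) (hht : ∀ i, 0 < ht i) (g : GuillotinePacking wd ht S0 place (knapsack 1))
    (hε : 0 < ε) (hε1 : ε ≤ 1)
    (M : ℕ) (hM : 0 < M) (δ t : ℝ) (hδ : 0 < δ) (ht2 : 2 * (M * δ) = t) (ht4 : t ≤ 1 / 4) (hu0 : 0 < u)
    (K1 : ℕ) (hA : ∀ (wd ht : ι → ℝ)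
      (S : Finset ι) (w h : ℝ) (k : ℕ), (∀ i, 0 < wd i) → (∀ i, 0 < ht i) → w ≤ 1 → h ≤ 1 →
      (∀ i ∈ S, δ ≤ wd i ∨ δ ≤ ht i) → Tr (IL wd ht) w h k S →
      ∃ S' ⊆ S, (S \ S').card ≤ K1 ∧ Tr (KL wd ht) ((1 + δ / 2) * w) h K1 S')
    (K : ℕ) (hK : 0 < K)
    (hσ : 1 / K + 4 * u / δ + (K1 + 1) * ((K + 1) * (2 * u / ε)) + u ≤ δ / (16 * M))
    (H' Hn V Q : Finset ι) (hH' : H' ⊆ S0) (hHn : Hn ⊆ S0) (hV : V ⊆ S0) (hQ : Q ⊆ S0)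
    (d1 : Disjoint H' Hn) (d2 : Disjoint H' V) (d3 : Disjoint Hn V) (d4 : Disjoint (H' ∪ Hn ∪ V) Q)
    (cH' : ∀ i ∈ H', 1 - u ≤ wd i ∧ ht i < δ) (cHn : ∀ i ∈ Hn, δ ≤ wd i ∧ wd i < 1 - t)
    (cV : ∀ i ∈ V, wd i < δ ∧ δ ≤ ht i) (cQ : ∀ i ∈ Q, wd i ≤ u ∧ ht i ≤ u) :
    ∃ S' ⊆ H' ∪ Hn ∪ V ∪ Q, LCP wd ht 1 ε S' ((K1 + 1) * (4 * K + 2) + K1 + 3) ∧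
      (H'.card / 2 + Hn.card / 2 + V.card - (2 / M) * V.card + Q.card - Q.card / M : ℝ)
        - ((K1 + 1) * (4 * K + 2) + K1 + 3 : ℕ) ≤ S'.card := by
  have hMp : (0 : ℝ) < M := by exact_mod_cast hM
  have hM1 : (1 : ℝ) ≤ M := by exact_mod_cast hM
  have hKp : (0 : ℝ) < K := by exact_mod_cast hK
  have hK1' : (1 : ℝ) / K ≤ 1 := by
    rw [div_le_one hKp]; exact_mod_cast hK
  have hK0 : (0 : ℝ) ≤ 1 / K := by positivity
  have hδ8 : δ ≤ 1 / 8 := by nlinarith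
  have hc0 : 0 ≤ ((K1 : ℝ) + 1) * ((K + 1) * (2 * u / ε)) := by positivity
  have hud : 0 ≤ 4 * u / δ := by positivity
  have hδM : δ / (16 * M) ≤ δ / 16 := by
    apply div_le_div_of_nonneg_left hδ.le (by norm_num) (by linarith)
  have huδ : u < δ := by linarith
  obtain ⟨H0, hH0, E, hE, Vs, hVs, dEV, hY, cH, hX, cE, k0, tE⟩ := geo hwd hht g M hM δ t hδ ht2 ht4 hu0 huδ H' Hn V hH' hHn hV d3
    (fun i hi => (cH' i hi).1) cHn cV
  set Y := ∑ i ∈ H0, ht i with hYd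
  have hY0 : 0 ≤ Y := Finset.sum_nonneg fun i _ => (hht i).le
  obtain ⟨E', hE', hEc, tE'⟩ := hA wd ht E (1 - δ) (1 - Y) k0 hwd hht (by linarith) (by linarith) (by
    intro i hi
    rcases Finset.mem_union.1 (hE hi) with h | h
    · exact Or.inl (cHn i h).1
    · exact Or.inr (cV i h).2) tE
  set Vss := Vs.filter fun i => ¬ 1 / 2 < ht i with hVss
  set Vsl := Vs.filter fun i => 1 / 2 < ht i with hVsl
  have dsl : Disjoint Vsl Vss := Finset.disjoint_filter_filter_not _ _ _
  have usl : Vsl ∪ Vss = Vs := Finset.filter_union_filter_not_eq _ _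
  have sss : Vss ⊆ Vs := Finset.filter_subset _ _
  have ssl : Vsl ⊆ Vs := Finset.filter_subset _ _
  set Xs := ∑ i ∈ Vss, wd i with hXs
  set Xl := ∑ i ∈ Vsl, wd i with hXl
  have hXs0 : 0 ≤ Xs := Finset.sum_nonneg fun i _ => (hwd i).le
  have hXl0 : 0 ≤ Xl := Finset.sum_nonneg fun i _ => (hwd i).le
  have hXX : Xl + Xs ≤ 2 * u / δ := by
    rw [hXl, hXs, ← Finset.sum_union dsl, usl, le_div_iff₀ hδ]; linarith
  have hud2 : 4 * u / δ = 2 * (2 * u / δ) := by ring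
  -- the container tree
  have tV : Tr (KL wd ht) Xs (1 - Y) 1 Vss := by
    refine .leaf le_rfl ⟨hXs0, by linarith, Or.inr ⟨fun i hi => ?_, le_rfl⟩⟩
    have := (Finset.mem_filter.1 hi).2
    linarith
  have dVE : Disjoint Vss E' := ((dEV.mono_left hE').mono_right sss).symm
  have tI : Tr (KL wd ht) (Xs + (1 + δ / 2) * (1 - δ)) (1 - Y) (K1 + 1) (Vss ∪ E') :=
    .vc _ _ 1 K1 _ _ dVE rfl le_rfl (by omega) tV tE'
  obtain ⟨Kf, hKf, hF⟩ := tI.fill hwd hht hε hε1 hu0 K hK (1 - Xl) (1 - Y) (by nlinarith) le_rfl (by linarith) (by linarith)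
  -- areas
  have htop : ∀ i ∈ S0, ht i ≤ 1 := by
    intro i hi
    have h2 := g.1.hh i hi
    obtain ⟨a, b, c, d⟩ := g.1.hin i hi
    simp only [Rect.height, knapsack] at *
    linarith
  have aVss : ar wd ht Vss ≤ Xs := by
    apply Finset.sum_le_sum
    intro i hi
    have := htop i (hV (hVs (sss hi)))
    nlinarith [hwd i]
  have aE' : ar wd ht E' ≤ ar wd ht E := ar_mono hwd hht hE'
  have aE : ar wd ht E ≤ (1 - δ) * (1 - Y) := tE.area hwd hht
  have dHE : Disjoint H0 E := by
    have : Disjoint H' (Hn ∪ V) := Finset.disjoint_union_right.2 ⟨d1, d2⟩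
    exact (this.mono_left hH0).mono_right hE
  have sHEQ : H0 ∪ E ⊆ H' ∪ Hn ∪ V := by
    rw [Finset.union_assoc]; exact Finset.union_subset_union hH0 hE
  have aAll : ar wd ht H0 + ar wd ht E + ar wd ht Q ≤ 1 := by
    have hs : H0 ∪ E ∪ Q ⊆ S0 := by
      refine Finset.union_subset (sHEQ.trans ?_) hQ
      exact Finset.union_subset (Finset.union_subset hH' hHn) hV
    obtain ⟨k, t⟩ := col0 g hs
    have := t.area hwd hht
    have e : ar wd ht (H0 ∪ E ∪ Q) = ar wd ht H0 + ar wd ht E + ar wd ht Q := by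
      rw [ar_union (d4.mono_left sHEQ), ar_union dHE]
    rw [← e]
    rw [mul_one] at this
    exact this
  have aH0 : (1 - u) * Y ≤ ar wd ht H0 := by
    rw [hYd, Finset.mul_sum]
    apply Finset.sum_le_sum
    intro i hi
    exact mul_le_mul_of_nonneg_right (cH' i (hH0 hi)).1 (hht i).le
  have aQ0 : 0 ≤ ar wd ht Q := ar_nonneg hwd hht
  obtain ⟨Q1, hQ1, cQ1, aQ1⟩ : ∃ Q1 ⊆ Q, (M : ℝ) * (Q.card - Q1.card) ≤ Q.card + M ∧
      ar wd ht Q1 ≤ (1 - 1 / K) * ((1 - Xl) * (1 - Y)) - ar wd ht (Vss ∪ E') - (K1 + 1 : ℕ) * ((K + 1) * (2 * u / ε)) := by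
    have hcap : (1 - Y) - ar wd ht E - (δ / (16 * M) - u) ≤
        (1 - 1 / K) * ((1 - Xl) * (1 - Y)) - ar wd ht (Vss ∪ E') - (K1 + 1 : ℕ) * ((K + 1) * (2 * u / ε)) := by
      rw [ar_union dVE]
      push_cast
      have hp1 : (1 - Y) - Xl ≤ (1 - Xl) * (1 - Y) := by
        have := mul_nonneg hXl0 hY0
        linarith
      have hp2 : (1 - Xl) * (1 - Y) ≤ 1 := mul_le_one₀ (by linarith) (by linarith) (by linarith)
      have hp3 : 1 / (K : ℝ) * ((1 - Xl) * (1 - Y)) ≤ 1 / (K : ℝ) := mul_le_of_le_one_right hK0 hp2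
      have hp4 : (1 - 1 / (K : ℝ)) * ((1 - Xl) * (1 - Y)) = (1 - Xl) * (1 - Y) - 1 / (K : ℝ) * ((1 - Xl) * (1 - Y)) := by ring
      rw [hp4]
      linarith
    rcases le_total (ar wd ht Q) (δ / 8) with hq | hq
    · refine ⟨Q, Finset.Subset.refl _, by simp; positivity, le_trans ?_ hcap⟩
      have h6 : δ * (1 / 2) ≤ δ * (1 - Y) := mul_le_mul_of_nonneg_left (by linarith) hδ.le
      have h7 : (1 - δ) * (1 - Y) = (1 - Y) - δ * (1 - Y) := by ring
      linarith
    · obtain ⟨Q1, h1, h2, h3⟩ := Q_sub hwd hht Q M hM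
      refine ⟨Q1, h1, h2, le_trans (le_trans h3 ?_) hcap⟩
      have h4 : δ / (16 * M) * 2 ≤ 1 / M * ar wd ht Q := by
        calc δ / (16 * M) * 2 = 1 / M * (δ / 8) := by field_simp; norm_num
          _ ≤ _ := mul_le_mul_of_nonneg_left hq (by positivity)
      have h5 : 0 < δ / (16 * M) := by positivity
      have h6 : u * Y ≤ u * 1 := mul_le_mul_of_nonneg_left (by linarith) hu0.le
      have h7 : (1 - u) * Y = Y - u * Y := by ring
      have h8 : (1 - 1 / (M : ℝ)) * ar wd ht Q = ar wd ht Q - 1 / M * ar wd ht Q := by ring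
      rw [h8]
      linarith
  have dVE' : Vss ∪ E' ⊆ H' ∪ Hn ∪ V := by
    apply Finset.union_subset
    · exact (sss.trans hVs).trans Finset.subset_union_right
    · rw [Finset.union_assoc]
      exact (hE'.trans hE).trans Finset.subset_union_right
  obtain ⟨Q2, hQ2, cQ2, tC⟩ := hF Q1 ((d4.mono_left dVE').mono_right hQ1) (fun i hi => cQ i (hQ1 hi))
    (le_max_of_le_right aQ1)
  have hd2 : Disjoint (Vss ∪ E') Q2 := (d4.mono_left dVE').mono_right (hQ2.trans hQ1)
  -- disjointness
  have dHs : Disjoint H0 Vs := (d2.mono_left hH0).mono_right hVs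
  have e1 : Disjoint H0 Vsl := dHs.mono_right ssl
  have e2 : Disjoint H0 (Vss ∪ E' ∪ Q2) := by
    rw [Finset.disjoint_union_right, Finset.disjoint_union_right]
    refine ⟨⟨dHs.mono_right sss, dHE.mono_right hE'⟩, ?_⟩
    exact (d4.mono_left (Finset.subset_union_left.trans sHEQ)).mono_right (hQ2.trans hQ1)
  have e3 : Disjoint Vsl (Vss ∪ E' ∪ Q2) := by
    rw [Finset.disjoint_union_right, Finset.disjoint_union_right]
    refine ⟨⟨dsl, ((dEV.mono_left hE').mono_right ssl).symm⟩, ?_⟩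
    exact (d4.mono_left ((ssl.trans hVs).trans Finset.subset_union_right)).mono_right (hQ2.trans hQ1)
  refine ⟨H0 ∪ Vsl ∪ (Vss ∪ E' ∪ Q2), ?_, ⟨H0, Vsl, Vss ∪ E' ∪ Q2, rfl, e1, e2, e3, ?_, ?_, ?_, ?_⟩, ?_⟩
  · apply Finset.union_subset
    · apply Finset.Subset.trans _ Finset.subset_union_left
      exact Finset.union_subset (Finset.subset_union_left.trans sHEQ) ((ssl.trans hVs).trans Finset.subset_union_right)
    · exact Finset.union_subset_union dVE' (hQ2.trans hQ1)
  · intro i hi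
    have := cH' i (hH0 hi)
    exact ⟨by linarith, by push Not; linarith⟩
  · intro i hi
    have := cV i (hVs (ssl hi))
    exact ⟨(Finset.mem_filter.1 hi).2, by push Not; linarith⟩
  · have hs : H0 ∪ Vsl ⊆ S0 := Finset.union_subset (hH0.trans hH') ((ssl.trans hVs).trans hV)
    obtain ⟨k, t⟩ := col0 g hs
    exact t.chain hwd hht H0 Vsl rfl e1 le_rfl le_rfl (fun i hi => by have := (cH' i (hH0 hi)).1; linarith)
      (fun i hi => (Finset.mem_filter.1 hi).2)
  · exact tC.monok (by omega)
  · have f1 : (H0 ∪ Vsl ∪ (Vss ∪ E' ∪ Q2)).card = H0.card + Vs.card + E'.card + Q2.card := by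
      rw [Finset.card_union_of_disjoint (Finset.disjoint_union_left.2 ⟨e2, e3⟩), Finset.card_union_of_disjoint e1,
        Finset.card_union_of_disjoint hd2, Finset.card_union_of_disjoint dVE, ← usl, Finset.card_union_of_disjoint dsl]
      omega
    have f2 := Finset.card_sdiff_add_card_eq_card hE'
    have f3 := Finset.card_sdiff_add_card_eq_card hQ2
    have f4 : E.card ≤ E'.card + K1 := by omega
    have f5 : Q1.card ≤ Q2.card + Kf := by omega
    rw [f1]
    have g1 : (H'.card : ℝ) ≤ 2 * H0.card + 1 := by exact_mod_cast cH
    have g2 : (E.card : ℝ) ≤ E'.card + K1 := by exact_mod_cast f4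
    have g3 : (Q1.card : ℝ) ≤ Q2.card + Kf := by exact_mod_cast f5
    have g4 : ((Kf + 1 : ℕ) : ℝ) ≤ ((K1 + 1) * (4 * K + 2) : ℕ) := by exact_mod_cast hKf
    have g5 : (M : ℝ) * (Hn.card + 2 * V.card) ≤ M * (2 * E.card + 2 * Vs.card) + 4 * V.card := by exact_mod_cast cE
    have g6 : (Hn.card + 2 * V.card : ℝ) ≤ (2 * E.card + 2 * Vs.card) + 2 * (2 / M * V.card) := by
      have : (M : ℝ) * (Hn.card + 2 * V.card) ≤ M * ((2 * E.card + 2 * Vs.card) + 2 * (2 / M * V.card)) := by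
        calc _ ≤ _ := g5
          _ = _ := by field_simp; ring
      exact le_of_mul_le_mul_left this hMp
    have g7 : (Q.card : ℝ) - Q1.card ≤ Q.card / M + 1 := by
      have : (M : ℝ) * (Q.card - Q1.card) ≤ M * (Q.card / M + 1) := by
        calc _ ≤ _ := cQ1
          _ = _ := by field_simp
      exact le_of_mul_le_mul_left this hMp
    push_cast at g4 ⊢
    linarith
end
end GK

namespace GK
section
variable {ι : Type} [DecidableEq ι]
set_option linter.unusedSectionVars false
set_option linter.unusedVariables false
variable {w h : ℝ} {k : ℕ} {S S0 : Finset ι} {wd ht : ι → ℝ} {ε u : ℝ} {place place' : ι → Rect} {P P' : Rect}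

/-- items avoiding the critical ranges -/
def Good (t u a b : ℝ) : Prop := (a < 1 - t ∨ 1 - u ≤ a) ∧ (b < 1 - t ∨ 1 - u ≤ b) ∧ (a < t → b < t → a < u ∧ b < u)

lemma LCP.monok {N : ℝ} {k' : ℕ} (c : LCP wd ht N ε S k) (hk : k ≤ k') : LCP wd ht N ε S k' := by
  obtain ⟨SH, SV, SC, a1, a2, a3, a4, a5, a6, a7, a8⟩ := c
  exact ⟨SH, SV, SC, a1, a2, a3, a4, a5, a6, a7, a8.monok hk⟩

set_option maxHeartbeats 1000000 in
lemma core1 (hwd : ∀ i, 0 < wd i) (hht : ∀ i, 0 < ht i) (g : GuillotinePacking wd ht S0 place (knapsack 1))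
    (hε : 0 < ε) (hε1 : ε ≤ 1)
    (M : ℕ) (hM : 0 < M) (hMε : 2 / M ≤ ε) (δ t : ℝ) (hδ : 0 < δ) (ht2 : 2 * (M * δ) = t) (ht4 : t ≤ 1 / 4) (hu0 : 0 < u)
    (K1 : ℕ) (hA : ∀ (wd ht : ι → ℝ)
      (S : Finset ι) (w h : ℝ) (k : ℕ), (∀ i, 0 < wd i) → (∀ i, 0 < ht i) → w ≤ 1 → h ≤ 1 →
      (∀ i ∈ S, δ ≤ wd i ∨ δ ≤ ht i) → Tr (IL wd ht) w h k S →
      ∃ S' ⊆ S, (S \ S').card ≤ K1 ∧ Tr (KL wd ht) ((1 + δ / 2) * w) h K1 S')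
    (K : ℕ) (hK : 0 < K)
    (hσ : 1 / K + 4 * u / δ + (K1 + 1) * ((K + 1) * (2 * u / ε)) + u ≤ δ / (16 * M))
    (Kb : ℕ) (hKb : 1 ≤ Kb * (δ * δ))
    (hS : S ⊆ S0) (hG : ∀ i ∈ S, Good t u (wd i) (ht i))
    (hle : (S.filter fun i => δ ≤ wd i ∧ ht i < δ).card ≤ (S.filter fun i => wd i < δ ∧ δ ≤ ht i).card) :
    ∃ S' ⊆ S, LCP wd ht 1 ε S' ((K1 + 1) * (4 * K + 2) + K1 + 3) ∧
      (3 / 4 - ε) * S.card - (((K1 + 1) * (4 * K + 2) + K1 + 3 : ℕ) + Kb) ≤ S'.card := by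
  have hMp : (0 : ℝ) < M := by exact_mod_cast hM
  have hM1 : (1 : ℝ) ≤ M := by exact_mod_cast hM
  have hδt : δ < t := by nlinarith
  set H := S.filter fun i => δ ≤ wd i ∧ ht i < δ with hH
  set V := S.filter fun i => wd i < δ ∧ δ ≤ ht i with hV
  set Q := S.filter fun i => wd i < δ ∧ ht i < δ with hQ
  set B := S.filter fun i => δ ≤ wd i ∧ δ ≤ ht i with hB
  set H' := H.filter fun i => 1 - u ≤ wd i with hH'
  set Hn := H.filter fun i => ¬ 1 - u ≤ wd i with hHn
  have sH : H ⊆ S := Finset.filter_subset _ _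
  have sV : V ⊆ S := Finset.filter_subset _ _
  have sQ : Q ⊆ S := Finset.filter_subset _ _
  have sB : B ⊆ S := Finset.filter_subset _ _
  have sH' : H' ⊆ H := Finset.filter_subset _ _
  have sHn : Hn ⊆ H := Finset.filter_subset _ _
  have uH : H' ∪ Hn = H := Finset.filter_union_filter_not_eq _ _
  have dHV : Disjoint H V := by
    rw [Finset.disjoint_left]; intro i h1 h2
    have := (Finset.mem_filter.1 h1).2; have := (Finset.mem_filter.1 h2).2; linarith
  have dHQ : Disjoint H Q := by
    rw [Finset.disjoint_left]; intro i h1 h2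
    have := (Finset.mem_filter.1 h1).2; have := (Finset.mem_filter.1 h2).2; linarith
  have dVQ : Disjoint V Q := by
    rw [Finset.disjoint_left]; intro i h1 h2
    have := (Finset.mem_filter.1 h1).2; have := (Finset.mem_filter.1 h2).2; linarith
  have dHH : Disjoint H' Hn := Finset.disjoint_filter_filter_not _ _ _
  have hcov : S ⊆ H ∪ V ∪ Q ∪ B := by
    intro i hi
    simp only [hH, hV, hQ, hB, Finset.mem_union, Finset.mem_filter, hi, true_and]
    rcases lt_or_ge (wd i) δ with h1 | h1 <;> rcases lt_or_ge (ht i) δ with h2 | h2 <;> simp [h1, h2]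
  have ccov : S.card ≤ H.card + V.card + Q.card + B.card := by
    refine (Finset.card_le_card hcov).trans ?_
    refine (Finset.card_union_le _ _).trans ?_
    have := Finset.card_union_le (H ∪ V) Q
    have := Finset.card_union_le H V
    omega
  have cB : B.card ≤ (Kb : ℝ) := by
    obtain ⟨k, t⟩ := col0 g (sB.trans hS)
    have h1 := t.area hwd hht
    have h2 : ∑ i ∈ B, δ * δ ≤ ∑ i ∈ B, wd i * ht i := by
      apply Finset.sum_le_sum
      intro i hi
      have := (Finset.mem_filter.1 hi).2
      exact mul_le_mul this.1 this.2 hδ.le (hwd i).le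
    rw [Finset.sum_const, nsmul_eq_mul] at h2
    have h3 : (B.card : ℝ) * (δ * δ) ≤ Kb * (δ * δ) := by linarith
    exact le_of_mul_le_mul_right h3 (by positivity)
  obtain ⟨S', hS', hL, hc⟩ := core_half hwd hht g hε hε1 M hM δ t hδ ht2 ht4 hu0 K1 hA K hK hσ H' Hn V Q
    ((sH'.trans sH).trans hS) ((sHn.trans sH).trans hS) (sV.trans hS) (sQ.trans hS) dHH (dHV.mono_left sH')
    (dHV.mono_left sHn) (by rw [uH, Finset.disjoint_union_left]; exact ⟨dHQ, dVQ⟩)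
    (fun i hi => by
      have h1 := Finset.mem_filter.1 hi
      have h2 := Finset.mem_filter.1 h1.1
      exact ⟨h1.2, h2.2.2⟩)
    (fun i hi => by
      have h1 := Finset.mem_filter.1 hi
      have h2 := Finset.mem_filter.1 h1.1
      refine ⟨h2.2.1, ?_⟩
      rcases (hG i h2.1).1 with h | h
      · exact h
      · exact absurd h h1.2)
    (fun i hi => (Finset.mem_filter.1 hi).2)
    (fun i hi => by
      have h1 := Finset.mem_filter.1 hi
      have := (hG i h1.1).2.2 (by linarith) (by linarith)
      exact ⟨this.1.le, this.2.le⟩)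
  refine ⟨S', ?_, hL, ?_⟩
  · rw [uH] at hS'
    exact hS'.trans (Finset.union_subset (Finset.union_subset sH sV) sQ)
  · have cH : H'.card + Hn.card = H.card := by rw [← uH, Finset.card_union_of_disjoint dHH]
    have r1 : (H'.card : ℝ) + Hn.card = H.card := by exact_mod_cast cH
    have r2 : (S.card : ℝ) ≤ H.card + V.card + Q.card + B.card := by exact_mod_cast ccov
    have r3 : (H.card : ℝ) ≤ V.card := by exact_mod_cast hle
    have r4 : 2 / M * (V.card : ℝ) ≤ ε * V.card := mul_le_mul_of_nonneg_right hMε (Nat.cast_nonneg _)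
    have r5 : (Q.card : ℝ) / M ≤ ε * Q.card := by
      calc (Q.card : ℝ) / M = 1 / M * Q.card := by ring
        _ ≤ ε * Q.card := mul_le_mul_of_nonneg_right (by
            refine le_trans ?_ hMε
            exact div_le_div_of_nonneg_right (by norm_num) hMp.le) (Nat.cast_nonneg _)
    have r6 : 0 ≤ ε * (H.card : ℝ) := by positivity
    have r7 : 0 ≤ ε * (B.card : ℝ) := by positivity
    have r8 : (0 : ℝ) ≤ B.card := Nat.cast_nonneg _
    have r9 : (0 : ℝ) ≤ Q.card := Nat.cast_nonneg _
    have r10 : 3 / 4 * (S.card : ℝ) - ε * S.card ≤ H.card / 2 + V.card + Q.card - ε * V.card - ε * Q.card + B.card := by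
      have h0 : 0 ≤ (H.card : ℝ) + V.card + Q.card + B.card - S.card := by linarith
      have hcS : (S.card : ℝ) = H.card + V.card + Q.card + B.card := by
        have h1 : H.card + V.card + Q.card + B.card ≤ S.card := by
          have dB : Disjoint (H ∪ V ∪ Q) B := by
            rw [Finset.disjoint_left]; intro i h1 h2
            simp only [hH, hV, hQ, hB, Finset.mem_union, Finset.mem_filter] at h1 h2
            rcases h1 with (h1 | h1) | h1 <;> linarith [h1.2.1, h1.2.2, h2.2.1, h2.2.2]
          rw [← Finset.card_union_of_disjoint dHV, ← Finset.card_union_of_disjoint (Finset.disjoint_union_left.2 ⟨dHQ, dVQ⟩),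
            ← Finset.card_union_of_disjoint dB]
          exact Finset.card_le_card (Finset.union_subset (Finset.union_subset (Finset.union_subset sH sV) sQ) sB)
        exact_mod_cast le_antisymm ccov h1
      rw [hcS]
      linarith
    linarith

lemma Good.swap {t u a b : ℝ} (h : Good t u a b) : Good t u b a :=
  ⟨h.2.1, h.1, fun h1 h2 => (h.2.2 h2 h1).symm⟩

lemma core (ε t : ℝ) (hε : 0 < ε) (hε1 : ε ≤ 1) (ht0 : 0 < t) (ht4 : t ≤ 1 / 4) :
    ∃ u : ℝ, 0 < u ∧ u < t ∧ ∃ K : ℕ, ∀ (ι : Type) [DecidableEq ι] (wd ht : ι → ℝ) (S0 S : Finset ι) (place : ι → Rect),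
      (∀ i, 0 < wd i) → (∀ i, 0 < ht i) → GuillotinePacking wd ht S0 place (knapsack 1) → S ⊆ S0 →
      (∀ i ∈ S, Good t u (wd i) (ht i)) → ∃ S' ⊆ S, LCP wd ht 1 ε S' K ∧ (3 / 4 - ε) * S.card - K ≤ S'.card := by
  obtain ⟨M, hM⟩ := exists_nat_gt (2 / ε)
  have hMp : (0 : ℝ) < M := lt_trans (by positivity) hM
  have hM0 : 0 < M := by exact_mod_cast hMp
  have hMε : 2 / (M : ℝ) ≤ ε := by
    rw [div_le_iff₀ hMp]; rw [div_lt_iff₀ hε] at hM; linarith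
  set δ := t / (2 * M) with hδ
  have hδ0 : 0 < δ := by positivity
  have ht2 : 2 * (M * δ) = t := by rw [hδ]; field_simp
  obtain ⟨K1, hA⟩ := aug δ (δ / 2) hδ0 (by positivity)
  obtain ⟨K, hK⟩ := exists_nat_gt (32 * M / δ)
  have hKp : (0 : ℝ) < K := lt_trans (by positivity) hK
  have hK0 : 0 < K := by exact_mod_cast hKp
  have hKi : 1 / (K : ℝ) ≤ δ / (32 * M) := by
    rw [div_le_div_iff₀ hKp (by positivity)]
    rw [div_lt_iff₀ hδ0] at hK; linarith
  obtain ⟨Kb, hKb⟩ := exists_nat_gt (1 / (δ * δ))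
  have hKb' : 1 ≤ Kb * (δ * δ) := by
    rw [div_lt_iff₀ (by positivity)] at hKb; exact hKb.le
  set A : ℝ := 4 / δ + (K1 + 1) * ((K + 1) * (2 / ε)) + 1 with hAd
  have hA0 : 0 < A := by positivity
  set u := δ / (32 * M) / A with hu
  have hu0 : 0 < u := by positivity
  have hAu : A * u = δ / (32 * M) := by rw [hu]; field_simp
  have hAu2 : 4 * u / δ + (K1 + 1) * ((K + 1) * (2 * u / ε)) + u = δ / (32 * M) := by
    rw [← hAu, hAd]; ring
  have hsum : δ / (32 * M) + δ / (32 * M) = δ / (16 * M) := by field_simp; norm_num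
  have hσ : 1 / K + 4 * u / δ + (K1 + 1) * ((K + 1) * (2 * u / ε)) + u ≤ δ / (16 * M) := by linarith
  have hut : u < t := by
    have h1 : 0 ≤ 4 * u / δ + (K1 + 1) * ((K + 1) * (2 * u / ε)) := by positivity
    have h2 : δ / (32 * M) ≤ t / 2 := by
      have hM1 : (1 : ℝ) ≤ M := by exact_mod_cast hM0
      have : δ ≤ t / 2 := by nlinarith
      have h3 : δ / (32 * M) ≤ δ := div_le_self hδ0.le (by linarith)
      linarith
    linarith
  refine ⟨u, hu0, hut, (K1 + 1) * (4 * K + 2) + K1 + 3 + Kb, ?_⟩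
  intro ι _ wd ht S0 S place hwd hht g hS hG
  rcases le_total (S.filter fun i => δ ≤ wd i ∧ ht i < δ).card (S.filter fun i => wd i < δ ∧ δ ≤ ht i).card with hle | hle
  · obtain ⟨S', h1, h2, h3⟩ := core1 hwd hht g hε hε1 M hM0 hMε δ t hδ0 ht2 ht4 hu0 K1 (hA ι) K hK0 hσ Kb hKb' hS hG hle
    exact ⟨S', h1, h2.monok (by omega), by push_cast at h3 ⊢; linarith⟩
  · obtain ⟨S', h1, h2, h3⟩ := core1 hht hwd (gp_swap g) hε hε1 M hM0 hMε δ t hδ0 ht2 ht4 hu0 K1 (hA ι) K hK0 hσ Kb hKb' hS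
      (fun i hi => (hG i hi).swap) (by
        have e1 : (S.filter fun i => δ ≤ ht i ∧ wd i < δ) = S.filter fun i => wd i < δ ∧ δ ≤ ht i :=
          Finset.filter_congr fun i _ => and_comm
        have e2 : (S.filter fun i => ht i < δ ∧ δ ≤ wd i) = S.filter fun i => δ ≤ wd i ∧ ht i < δ :=
          Finset.filter_congr fun i _ => and_comm
        rw [e1, e2]; exact hle)
    exact ⟨S', h1, h2.swap.monok (by omega), by push_cast at h3 ⊢; linarith⟩
end
end GK

namespace GK
section
variable {ι : Type} [DecidableEq ι]
set_option linter.unusedSectionVars false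
set_option linter.unusedVariables false
variable {w h : ℝ} {k : ℕ} {S S0 : Finset ι} {wd ht : ι → ℝ} {ε u : ℝ} {place place' : ι → Rect} {P P' : Rect}

lemma card_crit (s : ℕ → ℝ) (hs : Antitone s) (J : ℕ) (p : ℕ → Prop) [DecidablePred p] (x : ℝ)
    (hp : (∀ j, p j → s (j + 1) ≤ x ∧ x < s j) ∨ (∀ j, p j → s (j + 1) < x ∧ x ≤ s j)) :
    ((Finset.range J).filter p).card ≤ 1 := by
  rw [Finset.card_le_one]
  intro a ha b hb
  have key : ∀ a b, p a → p b → ¬ a < b := by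
    intro a b h1 h2 hab
    have h3 : s b ≤ s (a + 1) := hs hab
    rcases hp with hp | hp
    · have := hp a h1; have := hp b h2; linarith
    · have := hp a h1; have := hp b h2; linarith
  have h1 := (Finset.mem_filter.1 ha).2
  have h2 := (Finset.mem_filter.1 hb).2
  have := key a b h1 h2
  have := key b a h2 h1
  omega

open Classical in
lemma crit_choice (s : ℕ → ℝ) (hs : Antitone s) (J : ℕ) (hJ : 0 < J) (wd ht : ι → ℝ) (S : Finset ι) :
    ∃ j < J, J * (S.filter fun i => ¬ Good (s j) (s (j + 1)) (wd i) (ht i)).card ≤ 3 * S.card := by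
  by_contra hc
  push Not at hc
  have h1 : ∑ j ∈ Finset.range J, (S.filter fun i => ¬ Good (s j) (s (j + 1)) (wd i) (ht i)).card ≤ 3 * S.card := by
    simp only [Finset.card_filter]
    rw [Finset.sum_comm, mul_comm, ← smul_eq_mul]
    apply Finset.sum_le_card_nsmul
    intro i hi
    rw [← Finset.card_filter]
    have c1 := card_crit s hs J (fun j => s (j + 1) < 1 - wd i ∧ 1 - wd i ≤ s j) (1 - wd i) (Or.inr fun j h => h)
    have c2 := card_crit s hs J (fun j => s (j + 1) < 1 - ht i ∧ 1 - ht i ≤ s j) (1 - ht i) (Or.inr fun j h => h)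
    have c3 := card_crit s hs J (fun j => s (j + 1) ≤ max (wd i) (ht i) ∧ max (wd i) (ht i) < s j) (max (wd i) (ht i)) (Or.inl fun j h => h)
    have hsub : ((Finset.range J).filter fun j => ¬ Good (s j) (s (j + 1)) (wd i) (ht i)) ⊆
        ((Finset.range J).filter fun j => s (j + 1) < 1 - wd i ∧ 1 - wd i ≤ s j) ∪
        ((Finset.range J).filter fun j => s (j + 1) < 1 - ht i ∧ 1 - ht i ≤ s j) ∪
        ((Finset.range J).filter fun j => s (j + 1) ≤ max (wd i) (ht i) ∧ max (wd i) (ht i) < s j) := by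
      intro j hj
      obtain ⟨hj1, hj2⟩ := Finset.mem_filter.1 hj
      simp only [Finset.mem_union, Finset.mem_filter, hj1, true_and]
      by_contra hn
      push Not at hn
      obtain ⟨⟨n1, n2⟩, n3⟩ := hn
      apply hj2
      refine ⟨?_, ?_, ?_⟩
      · by_contra hh
        push Not at hh
        linarith [n1 (by linarith)]
      · by_contra hh
        push Not at hh
        linarith [n2 (by linarith)]
      · intro a b
        have : max (wd i) (ht i) < s (j + 1) := by
          by_contra hh
          push Not at hh
          have := n3 hh
          have := max_lt a b
          linarith
        exact max_lt_iff.1 this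
    have := Finset.card_le_card hsub
    have := Finset.card_union_le (((Finset.range J).filter fun j => s (j + 1) < 1 - wd i ∧ 1 - wd i ≤ s j) ∪
        ((Finset.range J).filter fun j => s (j + 1) < 1 - ht i ∧ 1 - ht i ≤ s j))
        ((Finset.range J).filter fun j => s (j + 1) ≤ max (wd i) (ht i) ∧ max (wd i) (ht i) < s j)
    have := Finset.card_union_le ((Finset.range J).filter fun j => s (j + 1) < 1 - wd i ∧ 1 - wd i ≤ s j)
        ((Finset.range J).filter fun j => s (j + 1) < 1 - ht i ∧ 1 - ht i ≤ s j)
    omega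
  have h2 : ∑ j ∈ Finset.range J, (3 * S.card + 1) ≤
      ∑ j ∈ Finset.range J, J * (S.filter fun i => ¬ Good (s j) (s (j + 1)) (wd i) (ht i)).card :=
    Finset.sum_le_sum fun j hj => hc j (Finset.mem_range.1 hj)
  rw [← Finset.mul_sum, Finset.sum_const, Finset.card_range, smul_eq_mul] at h2
  have := Nat.le_of_mul_le_mul_left h2 hJ
  omega

lemma trivial_LCP (g : GuillotinePacking wd ht S0 place (knapsack 1)) : LCP wd ht 1 ε S0 (max 1 S0.card) := by
  obtain ⟨k, t⟩ := col0 g (Finset.Subset.refl _)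
  refine ⟨∅, ∅, S0, by simp, by simp, by simp, by simp, by simp, by simp, .nil zero_le_one zero_le_one, ?_⟩
  simpa using t.toSL.weaken (L' := CL wd ht ε) (fun _ _ _ h => Or.inl h)

open Classical in
lemma final_unit (ε : ℝ) (hε : 0 < ε) (hε1 : ε < 1) :
    ∃ K : ℕ, ∀ (ι : Type) [DecidableEq ι] (wd ht : ι → ℝ) (S0 : Finset ι) (place : ι → Rect),
      (∀ i, 0 < wd i) → (∀ i, 0 < ht i) → GuillotinePacking wd ht S0 place (knapsack 1) →
      ∃ S' ⊆ S0, LCP wd ht 1 ε S' K ∧ (3 / 4 - 3 * ε) * S0.card ≤ S'.card := by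
  have hcore := fun t : {t : ℝ // 0 < t ∧ t ≤ 1 / 4} => core ε t.1 hε hε1.le t.2.1 t.2.2
  choose U hU0 hUt Kf hc using hcore
  let T : ℕ → {t : ℝ // 0 < t ∧ t ≤ 1 / 4} := fun n =>
    Nat.rec ⟨1 / 4, by norm_num, le_rfl⟩ (fun _ t => ⟨U t, hU0 t, (hUt t).le.trans t.2.2⟩) n
  have hT : ∀ n, (T (n + 1)).1 = U (T n) := fun n => rfl
  have hanti : Antitone fun n => (T n).1 := by
    apply antitone_nat_of_succ_le
    intro n
    rw [hT]; exact (hUt _).le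
  obtain ⟨J, hJ⟩ := exists_nat_gt (3 / ε)
  have hJp : (0 : ℝ) < J := lt_trans (by positivity) hJ
  have hJ0 : 0 < J := by exact_mod_cast hJp
  set Km := ∑ j ∈ Finset.range J, Kf (T j) with hKm
  obtain ⟨L, hL⟩ := exists_nat_gt (Km / ε)
  refine ⟨Km + L + 1, ?_⟩
  intro ι _ wd ht S0 place hwd hht g
  rcases le_total (S0.card : ℝ) L with hn | hn
  · refine ⟨S0, Finset.Subset.refl _, (trivial_LCP g).monok ?_, ?_⟩
    · have : S0.card ≤ L := by exact_mod_cast hn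
      exact max_le (by omega) (by omega)
    · have : (0 : ℝ) ≤ S0.card := Nat.cast_nonneg _
      nlinarith
  · obtain ⟨j, hj, hb⟩ := crit_choice (fun n => (T n).1) hanti J hJ0 wd ht S0
    set B := S0.filter fun i => ¬ Good (T j).1 (T (j + 1)).1 (wd i) (ht i) with hB
    have sB : B ⊆ S0 := Finset.filter_subset _ _
    obtain ⟨S', h1, h2, h3⟩ := hc (T j) ι wd ht S0 (S0 \ B) place hwd hht g Finset.sdiff_subset (by
      intro i hi
      obtain ⟨hi1, hi2⟩ := Finset.mem_sdiff.1 hi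
      by_contra hh
      exact hi2 (Finset.mem_filter.2 ⟨hi1, by rw [hT]; exact hh⟩))
    have hKj : Kf (T j) ≤ Km :=
      Finset.single_le_sum (f := fun j => Kf (T j)) (fun _ _ => Nat.zero_le _) (Finset.mem_range.2 hj)
    refine ⟨S', h1.trans Finset.sdiff_subset, h2.monok (by omega), ?_⟩
    have e := Finset.card_sdiff_add_card_eq_card sB
    have e' : ((S0 \ B).card : ℝ) = S0.card - B.card := by rw [← e]; push_cast; ring
    rw [e'] at h3
    have hb' : (J : ℝ) * B.card ≤ 3 * S0.card := by exact_mod_cast hb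
    have hn0 : (0 : ℝ) ≤ S0.card := Nat.cast_nonneg _
    have hb0 : (0 : ℝ) ≤ B.card := Nat.cast_nonneg _
    have hbε : (B.card : ℝ) ≤ ε * S0.card := by
      rw [div_lt_iff₀ hε] at hJ
      have : (J : ℝ) * B.card ≤ J * (ε * S0.card) := by nlinarith
      exact le_of_mul_le_mul_left this hJp
    have hKj' : (Kf (T j) : ℝ) ≤ Km := by exact_mod_cast hKj
    have hKn : (Km : ℝ) ≤ ε * S0.card := by
      rw [div_lt_iff₀ hε] at hL
      nlinarith
    have : 0 ≤ ε * (B.card : ℝ) := by positivity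
    linarith

/-- scaling of rectangles -/
def sc (c : ℝ) (r : Rect) : Rect := ⟨c * r.x1, c * r.x2, c * r.y1, c * r.y2⟩

lemma sep_sc {c : ℝ} (hc : 0 < c) (g : GuillotineSep place P S) : GuillotineSep (fun i => sc c (place i)) (sc c P) S := by
  induction g with
  | base P S hS => exact .base _ _ hS
  | vcut P S d h1 h2 hx hL hR iL iR =>
    refine .vcut _ _ (c * d) (mul_lt_mul_of_pos_left h1 hc) (mul_lt_mul_of_pos_left h2 hc) ?_ ?_ ?_
    · intro i hi
      exact (hx i hi).imp (fun h => mul_le_mul_of_nonneg_left h hc.le) (fun h => mul_le_mul_of_nonneg_left h hc.le)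
    · convert iL using 2 <;>
      simp [sc, hc]
    · convert iR using 2 <;>
      simp [sc, hc]
  | hcut P S d h1 h2 hx hL hR iL iR =>
    refine .hcut _ _ (c * d) (mul_lt_mul_of_pos_left h1 hc) (mul_lt_mul_of_pos_left h2 hc) ?_ ?_ ?_
    · intro i hi
      exact (hx i hi).imp (fun h => mul_le_mul_of_nonneg_left h hc.le) (fun h => mul_le_mul_of_nonneg_left h hc.le)
    · convert iL using 2 <;>
      simp [sc, hc]
    · convert iR using 2 <;>
      simp [sc, hc]

lemma gp_sc {c : ℝ} (hc : 0 < c) (g : GuillotinePacking wd ht S place P) :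
    GuillotinePacking (fun i => c * wd i) (fun i => c * ht i) S (fun i => sc c (place i)) (sc c P) := by
  refine ⟨⟨?_, ?_, ?_, ?_⟩, sep_sc hc g.2⟩
  · intro i hi; rw [← g.1.hw i hi]; simp only [sc, Rect.width]; ring
  · intro i hi; rw [← g.1.hh i hi]; simp only [sc, Rect.height]; ring
  · intro i hi
    obtain ⟨a, b, d, e⟩ := g.1.hin i hi
    exact ⟨mul_le_mul_of_nonneg_left a hc.le, mul_le_mul_of_nonneg_left b hc.le,
      mul_le_mul_of_nonneg_left d hc.le, mul_le_mul_of_nonneg_left e hc.le⟩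
  · intro i hi j hj hij
    have := g.1.hdisj i hi j hj hij
    rw [Set.disjoint_left] at this ⊢
    rintro ⟨p, q⟩ ⟨a, b, d, e⟩ ⟨a', b', d', e'⟩
    simp only [sc] at a b d e a' b' d' e'
    have hp : c * (p / c) = p := by field_simp
    have hq : c * (q / c) = q := by field_simp
    rw [← hp] at a b a' b'
    rw [← hq] at d e d' e'
    exact this (a := (p / c, q / c))
      ⟨lt_of_mul_lt_mul_left a hc.le, lt_of_mul_lt_mul_left b hc.le, lt_of_mul_lt_mul_left d hc.le, lt_of_mul_lt_mul_left e hc.le⟩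
      ⟨lt_of_mul_lt_mul_left a' hc.le, lt_of_mul_lt_mul_left b' hc.le, lt_of_mul_lt_mul_left d' hc.le, lt_of_mul_lt_mul_left e' hc.le⟩

lemma LCh.scale {c : ℝ} (hc : 0 ≤ c) {SH SV : Finset ι} (l : LCh wd ht w h SH SV) :
    LCh (fun i => c * wd i) (fun i => c * ht i) (c * w) (c * h) SH SV := by
  induction l with
  | nil hw hh => exact .nil (mul_nonneg hc hw) (mul_nonneg hc hh)
  | consV i hi hi' hw hh l ih =>
    refine .consV i hi hi' (mul_le_mul_of_nonneg_left hw hc) (mul_le_mul_of_nonneg_left hh hc) ?_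
    rw [← mul_sub]; exact ih
  | consH i hi hi' hw hh l ih =>
    refine .consH i hi hi' (mul_le_mul_of_nonneg_left hw hc) (mul_le_mul_of_nonneg_left hh hc) ?_
    rw [← mul_sub]; exact ih

lemma LCP.scale {c : ℝ} (hc : 0 < c) (l : LCP wd ht 1 ε S k) :
    LCP (fun i => c * wd i) (fun i => c * ht i) c ε S k := by
  obtain ⟨SH, SV, SC, a1, a2, a3, a4, a5, a6, a7, a8⟩ := l
  have hm : ∀ {a b : ℝ}, a ≤ b → c * a ≤ c * b := fun h => mul_le_mul_of_nonneg_left h hc.le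
  have e : ∀ a : ℝ, c / 2 < c * a ↔ 1 / 2 < a := by
    intro a
    rw [show c / 2 = c * (1 / 2) by ring]
    exact mul_lt_mul_iff_right₀ hc
  refine ⟨SH, SV, SC, a1, a2, a3, a4, ?_, ?_, ?_, ?_⟩
  · intro i hi; simp only [e]; exact a5 i hi
  · intro i hi; simp only [e]; exact a6 i hi
  · simpa using a7.scale hc.le
  · rw [← Finset.mul_sum, ← Finset.mul_sum]
    have := a8.map (L' := CL (fun i => c * wd i) (fun i => c * ht i) ε) c c hc.le hc.le (by
      intro w h S hl
      have kl : KL wd ht w h S → KL (fun i => c * wd i) (fun i => c * ht i) (c * w) (c * h) S := by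
        rintro ⟨p, q, r⟩
        refine ⟨mul_nonneg hc.le p, mul_nonneg hc.le q, r.imp ?_ ?_⟩
        · rintro ⟨r1, r2⟩
          exact ⟨fun i hi => hm (r1 i hi), by rw [← Finset.mul_sum]; exact hm r2⟩
        · rintro ⟨r1, r2⟩
          exact ⟨fun i hi => hm (r1 i hi), by rw [← Finset.mul_sum]; exact hm r2⟩
      rcases hl with hl | ⟨p, q, ⟨m, t⟩, d⟩
      · exact Or.inl (kl hl)
      · refine Or.inr ⟨mul_nonneg hc.le p, mul_nonneg hc.le q, ⟨m, ?_⟩, ?_⟩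
        · refine t.map c c hc.le hc.le ?_
          rintro w h S ⟨x1, x2, x3, x4⟩
          exact ⟨mul_nonneg hc.le x1, mul_nonneg hc.le x2, x3, fun i hi => ⟨hm (x4 i hi).1, hm (x4 i hi).2⟩⟩
        · intro i hi
          have := d i hi
          have h1 := hm this.1
          have h2 := hm this.2
          exact ⟨by linarith, by linarith⟩)
    simpa [mul_sub] using this

lemma ip_congr {wd' ht' : ι → ℝ} (g : IsPacking wd ht S place P) (h : ∀ i ∈ S, wd' i = wd i ∧ ht' i = ht i) :
    IsPacking wd' ht' S place P :=
  ⟨fun i hi => by rw [g.hw i hi, (h i hi).1], fun i hi => by rw [g.hh i hi, (h i hi).2], g.hin, g.hdisj⟩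

lemma lc_congr {wd' ht' : ι → ℝ} {N : ℝ} (g : IsLCPacking wd ht N ε S place k)
    (h : ∀ i ∈ S, wd' i = wd i ∧ ht' i = ht i) : IsLCPacking wd' ht' N ε S place k := by
  obtain ⟨N1, N2, SL, cont, lab, asg, b1, b2, b3, b4, b5, b6, b7, b8, b9, b10, b11⟩ := g
  refine ⟨N1, N2, SL, cont, lab, asg, b1, b2, b3, b4, b5, ip_congr b6 h, b7, ?_, ?_, ?_, b11⟩
  · intro i hi; rw [(h i (b5 hi)).1, (h i (b5 hi)).2]; exact b8 i hi
  · intro i hi; rw [(h i (b5 hi)).1]; exact b9 i hi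
  · intro i hi; rw [(h i (b5 hi)).1]; exact b10 i hi

lemma main (ε : ℝ) (hε : 0 < ε) (hε1 : ε < 1) :
    ∃ kb : ℕ, ∀ (ι : Type) [DecidableEq ι] (wd ht : ι → ℕ) (N : ℕ) (OPT : Finset ι), 0 < N →
      (∀ i ∈ OPT, 0 < wd i ∧ 0 < ht i) →
      (∃ place, GuillotinePacking (fun i => (wd i : ℝ)) (fun i => (ht i : ℝ)) OPT place (knapsack (N : ℝ))) →
      ∃ (S : Finset ι) (place : ι → Rect) (k : ℕ), S ⊆ OPT ∧ k ≤ kb ∧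
        IsLCPacking (fun i => (wd i : ℝ)) (fun i => (ht i : ℝ)) (N : ℝ) ε S place k ∧
          (3 / 4 - 3 * ε) * (OPT.card : ℝ) ≤ (S.card : ℝ) := by
  obtain ⟨K, hK⟩ := final_unit ε hε hε1
  refine ⟨K, ?_⟩
  rintro ι _ wd ht N OPT hN hpos ⟨place, g⟩
  have hNp : (0 : ℝ) < N := by exact_mod_cast hN
  set wm : ι → ℝ := fun i => ((max (wd i) 1 : ℕ) : ℝ) with hwm
  set hm : ι → ℝ := fun i => ((max (ht i) 1 : ℕ) : ℝ) with hhm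
  have hw0 : ∀ i, 0 < wm i := fun i => by
    have : 0 < max (wd i) 1 := by omega
    exact Nat.cast_pos.2 this
  have hh0 : ∀ i, 0 < hm i := fun i => by
    have : 0 < max (ht i) 1 := by omega
    exact Nat.cast_pos.2 this
  have heq : ∀ i ∈ OPT, wm i = (wd i : ℝ) ∧ hm i = (ht i : ℝ) := by
    intro i hi
    have := hpos i hi
    have h1 : max (wd i) 1 = wd i := by omega
    have h2 : max (ht i) 1 = ht i := by omega
    simp only [hwm, hhm, h1, h2, and_self]
  have g1 : GuillotinePacking wm hm OPT place (knapsack N) := ⟨ip_congr g.1 heq, g.2⟩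
  have g2 := gp_sc (c := (N : ℝ)⁻¹) (inv_pos.2 hNp) g1
  have hk : sc (N : ℝ)⁻¹ (knapsack N) = knapsack 1 := by
    simp [sc, knapsack, hNp.ne']
  rw [hk] at g2
  obtain ⟨S', h1, h2, h3⟩ := hK ι _ _ OPT _ (fun i => mul_pos (inv_pos.2 hNp) (hw0 i)) (fun i => mul_pos (inv_pos.2 hNp) (hh0 i)) g2
  have h4 := h2.scale hNp
  simp only [mul_inv_cancel_left₀ hNp.ne'] at h4
  obtain ⟨p, k', hk', h5⟩ := h4.plc hw0 hh0
  exact ⟨S', p, k', h1, hk', lc_congr h5 (fun i hi => ⟨(heq i (h1 hi)).1.symm, (heq i (h1 hi)).2.symm⟩), h3⟩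
end
end GK

/-- For cardinality 2GGK with guillotine cuts, a best guillotine
separable `L&C` packing has cardinality at least `(3/4 - O(ε))` times the optimum. -/
theorem LC_packing_three_fourths_cardinality :
    ∃ C : ℝ, 0 < C ∧
    ∀ ε : ℝ, 0 < ε → ε < 1 →
    ∃ kb : ℕ,
    ∀ (ι : Type) [DecidableEq ι] (items : Finset ι) (wd ht : ι → ℕ) (N : ℕ),
      0 < N →
      (∀ i ∈ items, 0 < wd i ∧ 0 < ht i) →
      ∀ OPT : Finset ι, OPT ⊆ items →
        (∃ place, GuillotinePacking (fun i => (wd i : ℝ)) (fun i => (ht i : ℝ))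
            OPT place (knapsack (N : ℝ))) →
        (∀ T : Finset ι, T ⊆ items →
          (∃ place, GuillotinePacking (fun i => (wd i : ℝ)) (fun i => (ht i : ℝ))
              T place (knapsack (N : ℝ))) →
          T.card ≤ OPT.card) →
        ∃ (S : Finset ι) (place : ι → Rect) (k : ℕ),
          S ⊆ items ∧ k ≤ kb ∧
          IsLCPacking (fun i => (wd i : ℝ)) (fun i => (ht i : ℝ)) (N : ℝ) ε S place k ∧
          (3 / 4 - C * ε) * (OPT.card : ℝ) ≤ (S.card : ℝ) := by
  refine ⟨3, by norm_num, fun ε hε hε1 => ?_⟩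
  obtain ⟨kb, hkb⟩ := GK.main ε hε hε1
  refine ⟨kb, ?_⟩
  intro ι _ items wd ht N hN hpos OPT hOPT hp _
  obtain ⟨S, place, k, h1, h2, h3, h4⟩ := hkb ι wd ht N OPT hN (fun i hi => hpos i (hOPT hi)) hp
  exact ⟨S, place, k, h1.trans hOPT, h2, h3, h4⟩
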